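/- arXiv:1806.03587 — 2 statements merged into one kernel-verified Lean document; each statement's English description precedes it below -/
import Mathlib

section
/- Weak comparison principle for semicontinuous viscosity solutions: Let Ω be a bounded domain in ℝ^N with N ≥ 2 and let H : Ω → ℝ be locally Lipschitz continuous. Let u : cl(Ω) → ℝ be lower semicontinuous on cl(Ω) and a viscosity supersolution of M(u) = NH in Ω, and let v : cl(Ω) → ℝ be upper semicontinuous on cl(Ω) and a viscosity subsolution of M(v) = NH in Ω. If u ≥ v on ∂Ω, then u ≥ v in Ω. -/
open Metric Set Filter Topology MeasureTheory

/-- The mean curvature operator `M(w) = div (Dw / sqrt (1 + |Dw|²))`,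
computed as the sum of the partial derivatives of the components of the
normalized gradient field. -/
noncomputable def mcOp {N : ℕ} (w : EuclideanSpace ℝ (Fin N) → ℝ)
    (x : EuclideanSpace ℝ (Fin N)) : ℝ :=
  ∑ i : Fin N,
    fderiv ℝ (fun y => (Real.sqrt (1 + ‖gradient w y‖ ^ 2))⁻¹ * gradient w y i) x
      (EuclideanSpace.single i 1)

/-- `f` is locally Lipschitz continuous on the set `s`. -/
def LocLipschitzOn {N : ℕ} (s : Set (EuclideanSpace ℝ (Fin N)))
    (f : EuclideanSpace ℝ (Fin N) → ℝ) : Prop :=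
  ∀ x ∈ s, ∃ K : NNReal, ∃ t ∈ 𝓝[s] x, LipschitzOnWith K f t

/-- `u` is a viscosity supersolution of `M(u) = N H` on the open set `U`. -/
def IsViscositySupersol {N : ℕ} (U : Set (EuclideanSpace ℝ (Fin N)))
    (H u : EuclideanSpace ℝ (Fin N) → ℝ) : Prop :=
  ∀ φ : EuclideanSpace ℝ (Fin N) → ℝ, ContDiffOn ℝ 2 φ U →
    ∀ x ∈ U, IsLocalMinOn (fun y => u y - φ y) U x → mcOp φ x ≤ N * H x

/-- `v` is a viscosity subsolution of `M(v) = N H` on the open set `U`. -/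
def IsViscositySubsol {N : ℕ} (U : Set (EuclideanSpace ℝ (Fin N)))
    (H v : EuclideanSpace ℝ (Fin N) → ℝ) : Prop :=
  ∀ φ : EuclideanSpace ℝ (Fin N) → ℝ, ContDiffOn ℝ 2 φ U →
    ∀ x ∈ U, IsLocalMaxOn (fun y => v y - φ y) U x → mcOp φ x ≥ N * H x

/-!
Suppose `v` exceeds `u` somewhere, and let `m > 0` be the maximum of `v - u`. The boundary condition
confines all pairs `(x, y)` near the diagonal with `v x - u y ≥ m / 2` to a compact subset of `Ω`,
on which `H` is bounded and Lipschitz. Plain doubling of variables is not enough: the equation is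
not strictly monotone in the unknown, and its ellipticity degenerates for large gradients.

If `v x - u y` has a superjet with gradient `(p, -q)` and quadratic part `Q` at `(x, y)`, and the
linear map `B` is an isometry from the graph metric `1 + p ⊗ p` to `1 + q ⊗ q`, then
`W(p) N H(x) - W(q) N H(y) ≤ ∑ i, Q (aᵢ, B aᵢ)`, where `W(p) = √(1 + |p|²)` and `(aᵢ)` is an
orthonormal basis for `1 + p ⊗ p`. This follows from the theorem on sums, hence from sup-convolution
and Jensen's lemma. For the latter, let `A` be a selection of subgradients of a convex function. Its
resolvent `(id + A)⁻¹` is `1`-Lipschitz, so it is differentiable almost everywhere by Rademacher's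
theorem and maps null sets to null sets.

Step one tests with a logarithmic function of `|x - y|`. Here `p = q` is parallel to `x - y`, and
taking for `B` the reflection in the hyperplane orthogonal to `x - y` yields
`v x - u y ≤ m + A |x - y|`. By this bound one may test in step two with a penalty of bounded slope,
the lower half of a sphere of radius `δ exp(λ ⟨e, x⟩)` continued linearly. A suitable `B` makes the
sum at most `-c λ² s` for the local radius `s`, while the left side is at least `-C λ s`; this is
a contradiction for large `λ`.
-/

open scoped RealInnerProductSpace

/-! ### Second-order jets -/

section NormAsymptotics

variable {E : Type*} [NormedAddCommGroup E]

lemma isLittleO_norm_one : (fun h : E => ‖h‖) =o[𝓝 0] fun _ => (1 : ℝ) :=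
  (Asymptotics.isLittleO_one_iff ℝ).mpr tendsto_norm_zero

lemma isLittleO_norm_pow_three_norm_sq :
    (fun h : E => ‖h‖ ^ 2 * ‖h‖) =o[𝓝 0] fun h => ‖h‖ ^ 2 := by
  simpa using (Asymptotics.isBigO_refl (fun h : E => ‖h‖ ^ 2) (𝓝 0)).mul_isLittleO
    isLittleO_norm_one

lemma isBigO_norm_sq_norm : (fun h : E => ‖h‖ ^ 2) =O[𝓝 0] fun h => ‖h‖ := by
  simpa [sq] using isLittleO_norm_one.isBigO.mul (Asymptotics.isBigO_refl (fun h : E => ‖h‖) (𝓝 0))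

lemma tendsto_const_add_nhds_zero (x : E) : Tendsto (fun h => x + h) (𝓝 0) (𝓝 x) := by
  simpa using (continuous_const_add x).tendsto 0

end NormAsymptotics

section Jets

variable {E F : Type*} [NormedAddCommGroup E] [NormedSpace ℝ E]
  [NormedAddCommGroup F] [NormedSpace ℝ F]

/-- A continuous quadratic form, encoded as the diagonal of a continuous bilinear form. -/
def IsQuadraticForm (Q : E → ℝ) : Prop :=
  ∃ T : E →L[ℝ] E →L[ℝ] ℝ, ∀ h, Q h = T h h

namespace IsQuadraticForm

variable {Q Q' : E → ℝ}

lemma zero : IsQuadraticForm fun _ : E => (0 : ℝ) := ⟨0, fun _ => rfl⟩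

lemma add (hQ : IsQuadraticForm Q) (hQ' : IsQuadraticForm Q') :
    IsQuadraticForm fun h => Q h + Q' h := by
  obtain ⟨T, hT⟩ := hQ
  obtain ⟨T', hT'⟩ := hQ'
  exact ⟨T + T', fun h => by simp [hT, hT']⟩

lemma const_mul (hQ : IsQuadraticForm Q) (c : ℝ) : IsQuadraticForm fun h => c * Q h := by
  obtain ⟨T, hT⟩ := hQ
  exact ⟨c • T, fun h => by simp [hT]⟩

lemma sq_of_isBoundedLinearMap {ℓ : E → ℝ} (hℓ : IsBoundedLinearMap ℝ ℓ) :
    IsQuadraticForm fun h => ℓ h ^ 2 := by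
  let L := hℓ.toContinuousLinearMap
  exact ⟨L.smulRight L, fun h => sq (ℓ h)⟩

lemma comp_clm (hQ : IsQuadraticForm Q) (L : F →L[ℝ] E) : IsQuadraticForm fun h => Q (L h) := by
  obtain ⟨T, hT⟩ := hQ
  exact ⟨T.bilinearComp L L, fun h => hT (L h)⟩

lemma map_smul (hQ : IsQuadraticForm Q) (t : ℝ) (h : E) : Q (t • h) = t ^ 2 * Q h := by
  obtain ⟨T, hT⟩ := hQ
  simp only [hT, _root_.map_smul, smul_apply, smul_eq_mul]
  ring

lemma continuous (hQ : IsQuadraticForm Q) : Continuous Q := by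
  obtain ⟨T, hT⟩ := hQ
  rw [funext hT]
  fun_prop

lemma isBigO (hQ : IsQuadraticForm Q) : Q =O[𝓝 0] fun h => ‖h‖ ^ 2 := by
  obtain ⟨T, hT⟩ := hQ
  refine Asymptotics.IsBigO.of_bound ‖T‖ (Eventually.of_forall fun h => ?_)
  rw [hT, norm_pow, norm_norm, sq, ← mul_assoc]
  exact T.le_opNorm₂ h h

end IsQuadraticForm

lemma isQuadraticForm_norm_sq {V : Type*} [NormedAddCommGroup V] [InnerProductSpace ℝ V] :
    IsQuadraticForm fun h : V => ‖h‖ ^ 2 :=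
  ⟨innerSL ℝ, fun h => (real_inner_self_eq_norm_sq h).symm⟩

/-- `f` has the second-order Taylor expansion `f (x + h) = f x + ℓ h + Q h / 2 + o(‖h‖²)` with
`ℓ` linear and `Q` a quadratic form. -/
structure HasSecondJetAt (f ℓ Q : E → ℝ) (x : E) : Prop where
  linear : IsBoundedLinearMap ℝ ℓ
  quadratic : IsQuadraticForm Q
  isLittleO : (fun h => f (x + h) - f x - ℓ h - Q h / 2) =o[𝓝 0] fun h => ‖h‖ ^ 2

/-- `(ℓ, Q)` is a second-order superjet of `f` at `x`, that is,
`f (x + h) ≤ f x + ℓ h + Q h / 2 + o(‖h‖²)` with `ℓ` linear and `Q` a quadratic form. -/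
structure HasSuperjetAt (f ℓ Q : E → ℝ) (x : E) : Prop where
  linear : IsBoundedLinearMap ℝ ℓ
  quadratic : IsQuadraticForm Q
  eventually_le : ∀ η > 0, ∀ᶠ h in 𝓝 0, f (x + h) ≤ f x + ℓ h + Q h / 2 + η * ‖h‖ ^ 2

variable {f g ℓ ℓ' Q Q' : E → ℝ} {x : E}

namespace HasSecondJetAt

lemma add (hf : HasSecondJetAt f ℓ Q x) (hg : HasSecondJetAt g ℓ' Q' x) :
    HasSecondJetAt (fun y => f y + g y) (fun h => ℓ h + ℓ' h) (fun h => Q h + Q' h) x where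
  linear := hf.linear.add hg.linear
  quadratic := hf.quadratic.add hg.quadratic
  isLittleO := (hf.isLittleO.add hg.isLittleO).congr_left fun h => by ring

lemma const_mul (hf : HasSecondJetAt f ℓ Q x) (c : ℝ) :
    HasSecondJetAt (fun y => c * f y) (fun h => c * ℓ h) (fun h => c * Q h) x where
  linear := hf.linear.smul c
  quadratic := hf.quadratic.const_mul c
  isLittleO := (hf.isLittleO.const_mul_left c).congr_left fun h => by ring

lemma congr {f' : E → ℝ} (hf : HasSecondJetAt f ℓ Q x) (hff' : ∀ y, f' y = f y)
    (hℓ : ∀ h, ℓ' h = ℓ h) (hQ : ∀ h, Q' h = Q h) : HasSecondJetAt f' ℓ' Q' x := by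
  obtain rfl : f' = f := funext hff'
  obtain rfl : ℓ' = ℓ := funext hℓ
  obtain rfl : Q' = Q := funext hQ
  exact hf

lemma hasSuperjetAt (hf : HasSecondJetAt f ℓ Q x) : HasSuperjetAt f ℓ Q x where
  linear := hf.linear
  quadratic := hf.quadratic
  eventually_le η hη := by
    filter_upwards [Asymptotics.isLittleO_iff.mp hf.isLittleO hη] with h hh
    rw [Real.norm_eq_abs, norm_pow, norm_norm] at hh
    linarith [(abs_le.mp hh).2]

lemma of_restrict {g : F → ℝ} {y : F} (L : F →L[ℝ] E) (hf : HasSecondJetAt f ℓ Q x)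
    (hg : ∀ h, g (y + h) - g y = f (x + L h) - f x) :
    HasSecondJetAt g (fun h => ℓ (L h)) (fun h => Q (L h)) y where
  linear := hf.linear.comp L.isBoundedLinearMap
  quadratic := hf.quadratic.comp_clm L
  isLittleO := by
    have hL : Tendsto L (𝓝 0) (𝓝 0) := by simpa using L.continuous.tendsto 0
    refine ((hf.isLittleO.comp_tendsto hL).congr_left fun h => ?_).trans_isBigO
      ((L.isBigO_id (𝓝 0)).norm_norm.pow 2)
    simp only [Function.comp_apply, hg]

lemma comp_clm {y : F} (L : F →L[ℝ] E) (hf : HasSecondJetAt f ℓ Q (L y)) :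
    HasSecondJetAt (fun z => f (L z)) (fun h => ℓ (L h)) (fun h => Q (L h)) y :=
  hf.of_restrict L fun h => by rw [map_add]

lemma isBigO_sub (hf : HasSecondJetAt f ℓ Q x) :
    (fun h => f (x + h) - f x) =O[𝓝 0] fun h => ‖h‖ := by
  have hlinear : ℓ =O[𝓝 0] fun h => ‖h‖ := (hf.linear.isBigO_id _).norm_right
  refine (((hf.isLittleO.isBigO.add (hf.quadratic.isBigO.const_mul_left (1 / 2))).trans
    isBigO_norm_sq_norm).add hlinear).congr_left fun h => ?_
  ring

lemma tendsto_sub (hf : HasSecondJetAt f ℓ Q x) :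
    Tendsto (fun h => f (x + h) - f x) (𝓝 0) (𝓝 0) :=
  (Asymptotics.isLittleO_one_iff ℝ).mp (hf.isBigO_sub.trans_isLittleO isLittleO_norm_one)

lemma continuousAt (hf : HasSecondJetAt f ℓ Q x) : ContinuousAt f x := by
  have hshift : Tendsto (fun y => y - x) (𝓝 x) (𝓝 0) :=
    (continuous_sub_right x).tendsto' x 0 (sub_self x)
  simpa [ContinuousAt, Function.comp_def] using (hf.tendsto_sub.comp hshift).add_const (f x)

end HasSecondJetAt

lemma hasSecondJetAt_continuousLinearMap (L : E →L[ℝ] ℝ) :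
    HasSecondJetAt L L (fun _ => 0) x where
  linear := L.isBoundedLinearMap
  quadratic := .zero
  isLittleO := (Asymptotics.isLittleO_zero _ _).congr_left fun h => by simp

lemma hasSecondJetAt_norm_sq {V : Type*} [NormedAddCommGroup V] [InnerProductSpace ℝ V] (x : V) :
    HasSecondJetAt (fun y : V => ‖y‖ ^ 2) (fun h => 2 * ⟪x, h⟫) (fun h => 2 * ‖h‖ ^ 2) x where
  linear := (innerSL ℝ x).isBoundedLinearMap.smul (2 : ℝ)
  quadratic := isQuadraticForm_norm_sq.const_mul 2
  isLittleO := (Asymptotics.isLittleO_zero _ _).congr_left fun h => by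
    rw [norm_add_sq_real]; ring

lemma hasSecondJetAt_of_hasDerivAt {φ φ' : ℝ → ℝ} {t φ'' : ℝ}
    (hφ : ∀ᶠ s in 𝓝 t, HasDerivAt φ (φ' s) s) (hφ' : HasDerivAt φ' φ'' t) :
    HasSecondJetAt φ (fun δ => φ' t * δ) (fun δ => φ'' * δ ^ 2) t where
  linear := IsBoundedLinearMap.id.smul (φ' t)
  quadratic := (IsQuadraticForm.sq_of_isBoundedLinearMap .id).const_mul φ''
  isLittleO := by
    refine Asymptotics.isLittleO_iff.mpr fun c hc => ?_
    have hφ'_approx := Asymptotics.isLittleO_iff.mp (hasDerivAt_iff_isLittleO_nhds_zero.mp hφ') hc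
    obtain ⟨r, hr, hball⟩ := Metric.eventually_nhds_iff_ball.mp
      (hφ'_approx.and ((tendsto_const_add_nhds_zero t).eventually hφ))
    filter_upwards [Metric.ball_mem_nhds (0 : ℝ) hr] with δ hδ
    have hsub : closedBall (0 : ℝ) |δ| ⊆ ball 0 r :=
      closedBall_subset_ball (by simpa using hδ)
    let remainder : ℝ → ℝ := fun δ => φ (t + δ) - φ t - φ' t * δ - φ'' * δ ^ 2 / 2
    have hderiv : ∀ s ∈ closedBall (0 : ℝ) |δ|, HasDerivWithinAt remainder
        (φ' (t + s) - φ' t - s • φ'') (closedBall (0 : ℝ) |δ|) s := by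
      intro s hs
      have hφs : HasDerivAt (fun δ => φ (t + δ)) (φ' (t + s)) s :=
        (hball s (hsub hs)).2.comp_const_add t s
      refine ((((hφs.sub_const (φ t)).sub ((hasDerivAt_id s).const_mul (φ' t))).sub
        ((((hasDerivAt_id s).pow 2).const_mul φ'').div_const 2)).congr_deriv
          ?_).hasDerivWithinAt
      simp only [id_eq, smul_eq_mul]
      ring
    have hbound : ∀ s ∈ closedBall (0 : ℝ) |δ|, ‖φ' (t + s) - φ' t - s • φ''‖ ≤ c * |δ| :=
      fun s hs => (hball s (hsub hs)).1.trans (by gcongr; simpa using hs)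
    have hmvt := (convex_closedBall (0 : ℝ) |δ|).norm_image_sub_le_of_norm_hasDerivWithin_le
      hderiv hbound (x := 0) (y := δ) (by simp) (by simp)
    simpa [remainder, mul_assoc, ← sq] using hmvt

lemma HasSecondJetAt.scomp {φ φ' : ℝ → ℝ} {φ'' : ℝ} (hf : HasSecondJetAt f ℓ Q x)
    (hφ : ∀ᶠ t in 𝓝 (f x), HasDerivAt φ (φ' t) t) (hφ' : HasDerivAt φ' φ'' (f x)) :
    HasSecondJetAt (fun y => φ (f y)) (fun h => φ' (f x) * ℓ h)
      (fun h => φ' (f x) * Q h + φ'' * ℓ h ^ 2) x where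
  linear := hf.linear.smul (φ' (f x))
  quadratic := (hf.quadratic.const_mul _).add
    ((IsQuadraticForm.sq_of_isBoundedLinearMap hf.linear).const_mul _)
  isLittleO := by
    set d : E → ℝ := fun h => f (x + h) - f x with hd
    have hℓO : ℓ =O[𝓝 0] fun h => ‖h‖ := (hf.linear.isBigO_id _).norm_right
    have hdO : d =O[𝓝 0] fun h => ‖h‖ := hf.isBigO_sub
    have hdℓ : (fun h => d h - ℓ h) =O[𝓝 0] fun h => ‖h‖ ^ 2 :=
      (hf.isLittleO.isBigO.add (hf.quadratic.isBigO.const_mul_left (1 / 2))).congr_left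
        fun h => by simp only [hd]; ring
    have hφd := ((hasSecondJetAt_of_hasDerivAt hφ hφ').isLittleO.comp_tendsto
      hf.tendsto_sub).trans_isBigO (hdO.norm_left.pow 2)
    have hsq : (fun h => d h ^ 2 - ℓ h ^ 2) =o[𝓝 0] fun h => ‖h‖ ^ 2 :=
      ((hdℓ.mul (hdO.add hℓO)).trans_isLittleO isLittleO_norm_pow_three_norm_sq).congr_left
        fun h => by ring
    refine ((hφd.add (hf.isLittleO.const_mul_left (φ' (f x)))).add
      (hsq.const_mul_left (φ'' / 2))).congr_left fun h => ?_
    simp only [hd, Function.comp, add_sub_cancel]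
    ring

lemma HasSecondJetAt.sqrt {s : ℝ} (hf : HasSecondJetAt f ℓ Q x) (hs : 0 < s)
    (hfx : f x = s ^ 2) :
    HasSecondJetAt (fun y => √(f y)) (fun h => ℓ h / (2 * s))
      (fun h => Q h / (2 * s) - ℓ h ^ 2 / (4 * s ^ 3)) x := by
  have hpos : 0 < f x := hfx ▸ pow_pos hs 2
  have hsqrt : √(f x) = s := by rw [hfx, Real.sqrt_sq hs.le]
  have hderiv : ∀ᶠ t in 𝓝 (f x), HasDerivAt Real.sqrt ((2 * √t)⁻¹) t := by
    filter_upwards [lt_mem_nhds hpos] with t ht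
    simpa using Real.hasDerivAt_sqrt ht.ne'
  have hderiv₂ : HasDerivAt (fun t => (2 * √t)⁻¹) (-(1 / (4 * s ^ 3))) (f x) := by
    refine (((Real.hasDerivAt_sqrt hpos.ne').const_mul 2).fun_inv
      (by rw [hsqrt]; positivity)).congr_deriv ?_
    rw [hsqrt]; field_simp; norm_num
  refine (hf.scomp hderiv hderiv₂).congr (fun _ => rfl) (fun h => ?_) (fun h => ?_) <;>
    simp only [hsqrt] <;> ring

lemma hasSecondJetAt_norm {V : Type*} [NormedAddCommGroup V] [InnerProductSpace ℝ V] {x : V}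
    (hx : x ≠ 0) :
    HasSecondJetAt (fun y : V => ‖y‖) (fun h => ⟪x, h⟫ / ‖x‖)
      (fun h => (‖h‖ ^ 2 - (⟪x, h⟫ / ‖x‖) ^ 2) / ‖x‖) x := by
  have hpos : 0 < ‖x‖ := norm_pos_iff.mpr hx
  refine ((hasSecondJetAt_norm_sq x).sqrt hpos rfl).congr (fun y => ?_) (fun h => ?_)
    (fun h => ?_)
  · exact (Real.sqrt_sq (norm_nonneg y)).symm
  · field_simp
  · field_simp; ring

namespace HasSuperjetAt

lemma mono_quadratic (hf : HasSuperjetAt f ℓ Q x) (hQ' : IsQuadraticForm Q')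
    (hle : ∀ h, Q h ≤ Q' h) : HasSuperjetAt f ℓ Q' x where
  linear := hf.linear
  quadratic := hQ'
  eventually_le η hη := (hf.eventually_le η hη).mono fun h hh => by linarith [hle h]

lemma of_isLocalMax_sub {Φ : E → ℝ} (hΦ : HasSuperjetAt Φ ℓ Q x)
    (hmax : IsLocalMax (fun y => f y - Φ y) x) : HasSuperjetAt f ℓ Q x where
  linear := hΦ.linear
  quadratic := hΦ.quadratic
  eventually_le η hη := by
    filter_upwards [hΦ.eventually_le η hη, (tendsto_const_add_nhds_zero x).eventually hmax]
      with h hh hm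
    linarith

lemma of_eventually_le {Φ : E → ℝ} (hΦ : HasSuperjetAt Φ ℓ Q x)
    (hle : ∀ᶠ y in 𝓝 x, f y ≤ Φ y) (heq : f x = Φ x) : HasSuperjetAt f ℓ Q x :=
  hΦ.of_isLocalMax_sub (hle.mono fun y hy => by simpa only [heq, sub_self, sub_nonpos] using hy)

lemma comp_clm {y : F} (L : F →L[ℝ] E) (hf : HasSuperjetAt f ℓ Q (L y)) :
    HasSuperjetAt (fun z => f (L z)) (fun h => ℓ (L h)) (fun h => Q (L h)) y where
  linear := hf.linear.comp L.isBoundedLinearMap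
  quadratic := hf.quadratic.comp_clm L
  eventually_le η hη := by
    have hL : Tendsto L (𝓝 0) (𝓝 0) := by simpa using L.continuous.tendsto 0
    have hpos : 0 < ‖L‖ ^ 2 + 1 := by positivity
    filter_upwards [hL.eventually (hf.eventually_le (η / (‖L‖ ^ 2 + 1)) (by positivity))]
      with h hh
    have hnorm : η / (‖L‖ ^ 2 + 1) * ‖L h‖ ^ 2 ≤ η * ‖h‖ ^ 2 := by
      rw [div_mul_eq_mul_div, div_le_iff₀ hpos]
      have := pow_le_pow_left₀ (norm_nonneg _) (L.le_opNorm h) 2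
      nlinarith [mul_le_mul_of_nonneg_left this hη.le, mul_nonneg hη.le (sq_nonneg ‖h‖)]
    rw [map_add]
    linarith

lemma exists_le_norm_sq (hf : HasSuperjetAt f ℓ Q x) :
    ∃ K ≥ 0, ∀ᶠ h in 𝓝 0, f (x + h) ≤ f x + ℓ h + K * ‖h‖ ^ 2 := by
  obtain ⟨C, hC, hQ⟩ := hf.quadratic.isBigO.exists_nonneg
  refine ⟨C / 2 + 1, by positivity, ?_⟩
  filter_upwards [hf.eventually_le 1 one_pos, hQ.bound] with h hh hQh
  rw [Real.norm_eq_abs, norm_pow, norm_norm] at hQh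
  linarith [le_of_abs_le hQh]

end HasSuperjetAt

lemma HasSecondJetAt.quadratic_le (hf : HasSecondJetAt f ℓ Q x) (hf' : HasSuperjetAt f ℓ Q' x)
    (a : E) : Q a ≤ Q' a := by
  refine le_of_forall_pos_le_add fun ε hε => ?_
  set η : ℝ := ε / (4 * (‖a‖ ^ 2 + 1)) with hη
  have hηpos : 0 < η := by positivity
  have hline : Tendsto (fun t : ℝ => t • a) (𝓝[>] 0) (𝓝 0) :=
    tendsto_nhdsWithin_of_tendsto_nhds
      ((continuous_id.smul continuous_const).tendsto' 0 0 (zero_smul ℝ a))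
  obtain ⟨t, ⟨hupper, hlower⟩, htpos⟩ := ((hline.eventually ((hf'.eventually_le η hηpos).and
    (Asymptotics.isLittleO_iff.mp hf.isLittleO hηpos))).and self_mem_nhdsWithin).exists
  have ht : 0 < t := htpos
  rw [Real.norm_eq_abs, norm_pow, norm_norm, hf.quadratic.map_smul, norm_smul, mul_pow,
    Real.norm_eq_abs, sq_abs] at hlower
  rw [hf'.quadratic.map_smul, norm_smul, mul_pow, Real.norm_eq_abs, sq_abs] at hupper
  have hscaled : t ^ 2 * Q a ≤ t ^ 2 * (Q' a + 4 * η * ‖a‖ ^ 2) := by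
    linarith [(abs_le.mp hlower).1]
  have hsmall : 4 * η * ‖a‖ ^ 2 ≤ ε := by
    rw [hη]; field_simp; nlinarith
  linarith [le_of_mul_le_mul_left hscaled (by positivity)]

end Jets

/-! ### Second-order differentiability of convex functions at contact points -/

lemma sub_le_of_forall_sub_le_mul {φ : ℝ → ℝ} {c a : ℝ} (hφ : ContinuousOn φ (Icc 0 1))
    (hslope : ∀ s t, 0 ≤ s → s < t → t ≤ 1 → φ t - φ s ≤ (c + a * (t - s)) * (t - s)) :
    φ 1 - φ 0 ≤ c := by
  have hfreq : ∀ s ∈ Ico (0 : ℝ) 1, ∀ r, c < r → ∃ᶠ t in 𝓝[>] s, slope φ s t < r := by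
    intro s hs r hr
    have hlim : Tendsto (fun t => c + a * (t - s)) (𝓝[>] s) (𝓝 c) :=
      tendsto_nhdsWithin_of_tendsto_nhds (Continuous.tendsto' (by fun_prop) _ _ (by simp))
    refine Eventually.frequently ?_
    filter_upwards [hlim.eventually (gt_mem_nhds hr), Ioc_mem_nhdsGT hs.2] with t ht hst
    refine lt_of_le_of_lt ?_ ht
    rw [slope_def_field, div_le_iff₀ (sub_pos.mpr hst.1)]
    exact hslope s t hs.1 hst.1 hst.2
  have hbound := image_le_of_liminf_slope_right_le_deriv_boundary hφ (B := fun t => φ 0 + c * t)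
    (B' := fun _ => c) (by simp) (by fun_prop)
    (fun s _ => (((hasDerivAt_id s).const_mul c).const_add (φ 0)).hasDerivWithinAt.congr_deriv
      (mul_one c)) hfreq (right_mem_Icc.mpr zero_le_one)
  simp only [mul_one] at hbound
  linarith

lemma surjective_of_comp_approximates_id {V : Type*} [NormedAddCommGroup V] [NormedSpace ℝ V]
    [FiniteDimensional ℝ V] {D : V →L[ℝ] V} {k : V → V}
    (hk : (fun h => D (k h) - h) =o[𝓝 0] fun h => h) : Function.Surjective D := by
  intro a
  have hline : Tendsto (fun t : ℝ => t • a) (𝓝[≠] 0) (𝓝 0) :=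
    tendsto_nhdsWithin_of_tendsto_nhds
      ((continuous_id.smul continuous_const).tendsto' 0 0 (zero_smul ℝ a))
  have hlim : Tendsto (fun t : ℝ => D (t⁻¹ • k (t • a))) (𝓝[≠] 0) (𝓝 a) := by
    have hscaled : (fun t : ℝ => t⁻¹ • (D (k (t • a)) - t • a)) =o[𝓝[≠] 0] fun _ => a := by
      refine ((Asymptotics.isBigO_refl (fun t : ℝ => t⁻¹) _).smul_isLittleO
        (hk.comp_tendsto hline)).congr' .rfl ?_
      filter_upwards [self_mem_nhdsWithin] with t ht
      exact inv_smul_smul₀ ht a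
    rw [tendsto_iff_norm_sub_tendsto_zero, ← tendsto_zero_iff_norm_tendsto_zero]
    refine Tendsto.congr' ?_ ((Asymptotics.isLittleO_one_iff ℝ).mp
      (hscaled.trans_isBigO (Asymptotics.isBigO_const_const a one_ne_zero _)))
    filter_upwards [self_mem_nhdsWithin] with t ht
    rw [smul_sub, inv_smul_smul₀ ht, map_smul]
  exact (LinearMap.range (D : V →ₗ[ℝ] V)).closed_of_finiteDimensional.mem_of_tendsto hlim
    (Eventually.of_forall fun t => ⟨_, rfl⟩)

lemma differentiableAt_of_leftInverse {V : Type*} [NormedAddCommGroup V] [NormedSpace ℝ V]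
    [FiniteDimensional ℝ V] {f J : V → V} {x : V} (hJ : Function.LeftInverse J f)
    (hf : (fun h => f (x + h) - f x) =O[𝓝 0] fun h => h)
    (hJf : DifferentiableWithinAt ℝ J (range f) (f x)) : DifferentiableAt ℝ f x := by
  obtain ⟨D, hD⟩ := hJf
  have hcont : Tendsto (fun h => f (x + h)) (𝓝 0) (𝓝[range f] (f x)) := by
    refine tendsto_nhdsWithin_iff.mpr ⟨?_, Eventually.of_forall fun h => mem_range_self _⟩
    simpa using (hf.trans_tendsto tendsto_id).add_const (f x)
  have happrox : (fun h => D (f (x + h) - f x) - h) =o[𝓝 0] fun h => h := by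
    refine ((hD.isLittleO.comp_tendsto hcont).trans_isBigO hf).neg_left.congr_left fun h => ?_
    simp only [Function.comp_apply, hJ _]
    abel
  have hsurj := surjective_of_comp_approximates_id happrox
  let e : V ≃L[ℝ] V := (LinearEquiv.ofBijective (D : V →ₗ[ℝ] V)
    ⟨LinearMap.injective_iff_surjective.mpr hsurj, hsurj⟩).toContinuousLinearEquiv
  have hDe : HasFDerivWithinAt J (e : V →L[ℝ] V) (range f) (f x) := hD
  have hfx : Tendsto f (𝓝[univ] x) (𝓝[range f] (f x)) := by
    rw [nhdsWithin_univ]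
    simpa [Function.comp_def] using
      hcont.comp ((continuous_sub_right x).tendsto' x 0 (sub_self x))
  exact (hDe.of_local_left_inverse hfx (mem_univ x)
    (Eventually.of_forall hJ)).hasFDerivAt_of_univ.differentiableAt

section Subgradient

variable {V : Type*} [NormedAddCommGroup V] [InnerProductSpace ℝ V]
  {F : V → ℝ} {A : V → V} {Q : V → ℝ} {p x : V}

/-- `A` selects a subgradient of `F` at every point. -/
def IsSubgradientField (F : V → ℝ) (A : V → V) : Prop :=
  ∀ x y, F x + ⟪A x, y - x⟫ ≤ F y

/-- The Minty resolvent `(id + A)⁻¹`; its values off the range of `id + A` are irrelevant. -/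
noncomputable def mintyResolvent (A : V → V) : V → V :=
  Function.invFun fun x => x + A x

namespace IsSubgradientField

lemma convexOn (hA : IsSubgradientField F A) : ConvexOn ℝ univ F := by
  refine ⟨convex_univ, fun x _ y _ a b ha hb hab => ?_⟩
  set z := a • x + b • y
  have hbalance : a * ⟪A z, x - z⟫ + b * ⟪A z, y - z⟫ = 0 := by
    rw [← real_inner_smul_right, ← real_inner_smul_right, ← inner_add_right]
    have : a • (x - z) + b • (y - z) = 0 := by
      rw [smul_sub, smul_sub, sub_add_sub_comm, ← add_smul, hab, one_smul, sub_self]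
    rw [this, inner_zero_right]
  have hx := mul_le_mul_of_nonneg_left (hA z x) ha
  have hy := mul_le_mul_of_nonneg_left (hA z y) hb
  have hz : F z = a * F z + b * F z := by rw [← add_mul, hab, one_mul]
  simp only [smul_eq_mul]
  linarith

lemma continuous [FiniteDimensional ℝ V] (hA : IsSubgradientField F A) : Continuous F :=
  hA.convexOn.locallyLipschitz.continuous

lemma inner_sub_nonneg (hA : IsSubgradientField F A) (x y : V) : 0 ≤ ⟪A x - A y, x - y⟫ := by
  have hxy := hA x y
  rw [← neg_sub x y, inner_neg_right] at hxy
  rw [inner_sub_left]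
  linarith [hA y x]

lemma norm_sub_le (hA : IsSubgradientField F A) (x y : V) :
    ‖x - y‖ ≤ ‖(x + A x) - (y + A y)‖ := by
  have hsq : ‖x - y‖ * ‖x - y‖ ≤ ‖(x + A x) - (y + A y)‖ * ‖x - y‖ := by
    refine le_trans ?_ (real_inner_le_norm _ _)
    rw [add_sub_add_comm, inner_add_left, real_inner_self_eq_norm_mul_norm]
    linarith [hA.inner_sub_nonneg x y]
  rcases (norm_nonneg (x - y)).eq_or_lt with hzero | hpos
  · exact hzero ▸ norm_nonneg _
  · exact le_of_mul_le_mul_right hsq hpos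

lemma leftInverse_mintyResolvent (hA : IsSubgradientField F A) :
    Function.LeftInverse (mintyResolvent A) fun x => x + A x := by
  refine Function.leftInverse_invFun fun x y hxy => ?_
  have hle := hA.norm_sub_le x y
  rw [show x + A x = y + A y from hxy, sub_self, norm_zero] at hle
  exact sub_eq_zero.mp (norm_le_zero_iff.mp hle)

lemma lipschitzOnWith_mintyResolvent (hA : IsSubgradientField F A) :
    LipschitzOnWith 1 (mintyResolvent A) (range fun x => x + A x) := by
  refine LipschitzOnWith.of_dist_le_mul ?_
  rintro _ ⟨x, rfl⟩ _ ⟨y, rfl⟩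
  simpa only [hA.leftInverse_mintyResolvent _, dist_eq_norm, NNReal.coe_one, one_mul]
    using hA.norm_sub_le x y

lemma eq_of_hasSuperjetAt (hA : IsSubgradientField F A)
    (hF : HasSuperjetAt F (fun h => ⟪p, h⟫) Q x) : A x = p := by
  set w := A x - p with hw
  have hline : Tendsto (fun t : ℝ => t • w) (𝓝[>] 0) (𝓝 0) :=
    tendsto_nhdsWithin_of_tendsto_nhds
      ((continuous_id.smul continuous_const).tendsto' 0 0 (zero_smul ℝ w))
  have hbound : ∀ᶠ t : ℝ in 𝓝[>] 0, ‖w‖ ^ 2 ≤ t * (Q w / 2 + ‖w‖ ^ 2) := by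
    filter_upwards [hline.eventually (hF.eventually_le 1 one_pos), self_mem_nhdsWithin]
      with t hupper (ht : 0 < t)
    have hlower := hA x (x + t • w)
    rw [add_sub_cancel_left, inner_smul_right] at hlower
    rw [inner_smul_right, hF.quadratic.map_smul, norm_smul, mul_pow, Real.norm_eq_abs, sq_abs]
      at hupper
    have hsplit : ‖w‖ ^ 2 = ⟪A x, w⟫ - ⟪p, w⟫ := by
      rw [← inner_sub_left, ← hw, real_inner_self_eq_norm_sq]
    refine le_of_mul_le_mul_left (a := t) ?_ ht
    linarith [congrArg (t * ·) hsplit]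
  have hlim : Tendsto (fun t : ℝ => t * (Q w / 2 + ‖w‖ ^ 2)) (𝓝[>] 0) (𝓝 0) :=
    tendsto_nhdsWithin_of_tendsto_nhds (Continuous.tendsto' (by fun_prop) _ _ (zero_mul _))
  have hzero : ‖w‖ ^ 2 ≤ 0 := ge_of_tendsto hlim hbound
  exact sub_eq_zero.mp (norm_eq_zero.mp (pow_eq_zero_iff two_ne_zero |>.mp
    (le_antisymm hzero (sq_nonneg _))))

-- Testing the subgradient inequality at `x + k` against the point `x + k + w`, where `w` has
-- length `‖k‖` and points in the direction of `A (x + k) - A x`.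
lemma isBigO_sub (hA : IsSubgradientField F A) (hF : HasSuperjetAt F (fun h => ⟪A x, h⟫) Q x) :
    (fun h => A (x + h) - A x) =O[𝓝 0] fun h => h := by
  obtain ⟨K, hK, hFK⟩ := hF.exists_le_norm_sq
  obtain ⟨ρ, hρ, hball⟩ := Metric.eventually_nhds_iff.mp hFK
  refine Asymptotics.IsBigO.of_bound (4 * K)
    (Metric.eventually_nhds_iff.mpr ⟨ρ / 2, by positivity, fun k hk => ?_⟩)
  rw [dist_zero_right] at hk
  set d := A (x + k) - A x with hd
  rcases eq_or_ne d 0 with hd0 | hd0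
  · rw [hd0, norm_zero]; positivity
  have hk0 : k ≠ 0 := by rintro rfl; simp [hd] at hd0
  have hkpos : 0 < ‖k‖ := norm_pos_iff.mpr hk0
  set w := (‖k‖ / ‖d‖) • d with hw
  have hw_norm : ‖w‖ = ‖k‖ := by
    rw [hw, norm_smul, Real.norm_of_nonneg (by positivity)]; field_simp
  have hdw : ⟪d, w⟫ = ‖k‖ * ‖d‖ := by
    rw [hw, inner_smul_right, real_inner_self_eq_norm_sq]; field_simp
  have hkw : ‖k + w‖ ≤ 2 * ‖k‖ := (norm_add_le _ _).trans_eq (by rw [hw_norm]; ring)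
  have hupper := hball (y := k + w) (by rw [dist_zero_right]; linarith)
  have hlower := hA (x + k) (x + (k + w))
  have hlower₀ := hA x (x + k)
  rw [← add_assoc, add_sub_cancel_left] at hlower
  rw [add_sub_cancel_left] at hlower₀
  rw [← add_assoc, inner_add_right] at hupper
  have hsplit : ⟪A (x + k), w⟫ = ⟪d, w⟫ + ⟪A x, w⟫ := by
    rw [← inner_add_left, hd, sub_add_cancel]
  have hsq : K * ‖k + w‖ ^ 2 ≤ K * (2 * ‖k‖) ^ 2 := by gcongr
  refine le_of_mul_le_mul_left (a := ‖k‖) ?_ hkpos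
  linarith

lemma differentiableAt [FiniteDimensional ℝ V] (hA : IsSubgradientField F A)
    (hF : HasSuperjetAt F (fun h => ⟪A x, h⟫) Q x)
    (hJ : DifferentiableWithinAt ℝ (mintyResolvent A) (range fun x => x + A x) (x + A x)) :
    DifferentiableAt ℝ A x := by
  have hlip : (fun h => (x + h + A (x + h)) - (x + A x)) =O[𝓝 0] fun h => h :=
    ((Asymptotics.isBigO_refl _ _).add (hA.isBigO_sub hF)).congr_left fun h => by abel
  simpa using (differentiableAt_of_leftInverse (f := fun x => x + A x)
    hA.leftInverse_mintyResolvent hlip hJ).sub differentiableAt_id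

lemma abs_sub_le_of_abs_inner_sub_le [FiniteDimensional ℝ V] (hA : IsSubgradientField F A)
    {h : V} {a c : ℝ} (hsegment : ∀ t : ℝ, 0 ≤ t → t ≤ 1 →
      |⟪A (x + t • h), h⟫ - ⟪A x, h⟫ - t * a| ≤ c) :
    |F (x + h) - F x - ⟪A x, h⟫ - a / 2| ≤ c := by
  set φ : ℝ → ℝ := fun t => F (x + t • h) - t * ⟪A x, h⟫ - t ^ 2 * a / 2 with hφ
  have hφ_cont : Continuous φ := by
    have := hA.continuous
    fun_prop
  have hsecant : ∀ s t : ℝ,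
      F (x + s • h) + (t - s) * ⟪A (x + s • h), h⟫ ≤ F (x + t • h) := by
    intro s t
    have := hA (x + s • h) (x + t • h)
    rwa [add_sub_add_left_eq_sub, ← sub_smul, inner_smul_right] at this
  have hupper : φ 1 - φ 0 ≤ c := by
    refine sub_le_of_forall_sub_le_mul (a := a / 2) hφ_cont.continuousOn fun s t hs hst ht => ?_
    have := (abs_le.mp (hsegment t (by linarith) ht)).2
    simp only [hφ]
    nlinarith [hsecant t s]
  have hlower : -φ 1 - -φ 0 ≤ c := by
    refine sub_le_of_forall_sub_le_mul (φ := fun t => -φ t) (a := a / 2)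
      hφ_cont.neg.continuousOn fun s t hs hst ht => ?_
    have := (abs_le.mp (hsegment s hs (by linarith))).1
    simp only [hφ]
    nlinarith [hsecant s t]
  simp only [hφ, one_smul, zero_smul, add_zero] at hupper hlower
  rw [abs_le]
  constructor <;> linarith

lemma hasSecondJetAt_of_hasFDerivAt [FiniteDimensional ℝ V] (hA : IsSubgradientField F A)
    {X : V →L[ℝ] V} (hX : HasFDerivAt A X x) :
    HasSecondJetAt F (fun h => ⟪A x, h⟫) (fun h => ⟪X h, h⟫) x where
  linear := (innerSL ℝ (A x)).isBoundedLinearMap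
  quadratic := ⟨(innerSL ℝ).comp X, fun _ => rfl⟩
  isLittleO := by
    refine Asymptotics.isLittleO_iff.mpr fun η hη => ?_
    obtain ⟨ρ, hρ, hball⟩ := Metric.eventually_nhds_iff.mp
      (Asymptotics.isLittleO_iff.mp (hasFDerivAt_iff_isLittleO_nhds_zero.mp hX) hη)
    refine Metric.eventually_nhds_iff.mpr ⟨ρ, hρ, fun h hh => ?_⟩
    rw [dist_zero_right] at hh
    rw [Real.norm_eq_abs, norm_pow, norm_norm]
    refine hA.abs_sub_le_of_abs_inner_sub_le fun t ht₀ ht₁ => ?_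
    have hth : ‖t • h‖ ≤ ‖h‖ := by
      rw [norm_smul, Real.norm_of_nonneg ht₀]
      exact mul_le_of_le_one_left (norm_nonneg h) ht₁
    calc |⟪A (x + t • h), h⟫ - ⟪A x, h⟫ - t * ⟪X h, h⟫|
        = |⟪A (x + t • h) - A x - X (t • h), h⟫| := by
          simp only [inner_sub_left, map_smul, real_inner_smul_left]
      _ ≤ ‖A (x + t • h) - A x - X (t • h)‖ * ‖h‖ := abs_real_inner_le_norm _ _
      _ ≤ (η * ‖h‖) * ‖h‖ := by
          gcongr
          exact (hball (by rw [dist_zero_right]; linarith)).trans (by gcongr)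
      _ = η * ‖h‖ ^ 2 := by ring

end IsSubgradientField

end Subgradient

section Jensen

variable {V : Type*} [NormedAddCommGroup V] [InnerProductSpace ℝ V] [FiniteDimensional ℝ V]
  {F Φ : V → ℝ} {A G : V → V} {Q : V → V → ℝ} {x₀ : V} {r δ : ℝ} {K : NNReal}

-- By Rademacher's theorem `J` is differentiable almost everywhere, and Lipschitz maps preserve
-- null sets.
lemma exists_mem_differentiableWithinAt {J Θ : V → V} {L : NNReal} {s t U : Set V}
    (hJ : LipschitzOnWith L J s) (hΘ : LipschitzOnWith K Θ s) (hts : t ⊆ s) (hU : IsOpen U)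
    (hU_nonempty : U.Nonempty) (hcover : U ⊆ Θ '' t) :
    ∃ ω ∈ t, DifferentiableWithinAt ℝ J s ω := by
  by_contra! hno
  borelize V
  set μ : Measure V := Measure.hausdorffMeasure (Module.finrank ℝ V) with hμ
  have hdiff : ∀ᵐ ω ∂μ, ω ∈ s → DifferentiableWithinAt ℝ J s ω :=
    hJ.ae_differentiableWithinAt_of_mem
  have ht_null : μ t = 0 := by
    refine measure_mono_null (fun ω hω => ?_) (ae_iff.mp hdiff)
    exact fun himp => hno ω hω (himp (hts hω))
  have himage_null : μ (Θ '' t) = 0 := by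
    have hle := (hΘ.mono hts).hausdorffMeasure_image_le
      (d := (Module.finrank ℝ V : ℝ)) (by positivity)
    rw [← hμ, ht_null, mul_zero] at hle
    exact le_antisymm hle zero_le
  have hU_pos : 0 < μ U := hU.measure_pos μ hU_nonempty
  exact hU_pos.ne' (measure_mono_null hcover himage_null)

lemma exists_isLocalMax_sub_inner {f : V → ℝ} (hf : Continuous f) (hr : 0 < r)
    (hsphere : ∀ x ∈ sphere x₀ r, f x < f x₀) :
    ∃ δ > 0, ∀ τ : V, ‖τ‖ < δ → ∃ x ∈ ball x₀ r, IsLocalMax (fun y => f y - ⟪τ, y⟫) x := by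
  obtain ⟨c, hc, hgap⟩ : ∃ c < f x₀, ∀ x ∈ sphere x₀ r, f x ≤ c := by
    rcases (sphere x₀ r).eq_empty_or_nonempty with hempty | hnonempty
    · exact ⟨f x₀ - 1, sub_one_lt _, by simp [hempty]⟩
    · obtain ⟨x, hx, hmax⟩ := (isCompact_sphere x₀ r).exists_isMaxOn hnonempty hf.continuousOn
      exact ⟨f x, hsphere x hx, hmax⟩
  refine ⟨(f x₀ - c) / r, div_pos (sub_pos.mpr hc) hr, fun τ hτ => ?_⟩
  have htilt : ContinuousOn (fun y => f y - ⟪τ, y⟫) (closedBall x₀ r) := by fun_prop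
  refine (isCompact_closedBall x₀ r).exists_isLocalMax_mem_open ball_subset_closedBall htilt
    (mem_closedBall_self hr.le) ?_ isOpen_ball
  rintro z ⟨hz, hz'⟩
  have hzr : ‖x₀ - z‖ = r := by
    rw [norm_sub_rev, ← dist_eq_norm]
    exact le_antisymm hz (not_lt.mp hz')
  have hinner : ⟪τ, x₀⟫ - ⟪τ, z⟫ ≤ ‖τ‖ * r := by
    rw [← inner_sub_right, ← hzr]
    exact real_inner_le_norm _ _
  have := hgap z (by rwa [mem_sphere_iff_norm, norm_sub_rev])
  have := (lt_div_iff₀ hr).mp hτ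
  linarith

lemma IsSubgradientField.exists_hasSuperjetAt (hA : IsSubgradientField F A)
    (hΦ : ∀ x, HasSecondJetAt Φ (fun h => ⟪G x, h⟫) (Q x) x) (hr : 0 < r)
    (hsphere : ∀ x ∈ sphere x₀ r, F x - Φ x < F x₀ - Φ x₀) :
    ∃ δ > 0, ∀ τ : V, ‖τ‖ < δ →
      ∃ x ∈ ball x₀ r, A x = G x + τ ∧ HasSuperjetAt F (fun h => ⟪A x, h⟫) (Q x) x := by
  have hcont : Continuous fun x => F x - Φ x :=
    hA.continuous.sub (continuous_iff_continuousAt.mpr fun x => (hΦ x).continuousAt)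
  obtain ⟨δ, hδ, hcontact⟩ := exists_isLocalMax_sub_inner hcont hr hsphere
  refine ⟨δ, hδ, fun τ hτ => ?_⟩
  obtain ⟨x, hx, hmax⟩ := hcontact τ hτ
  have htilt : HasSecondJetAt (fun y => Φ y + ⟪τ, y⟫) (fun h => ⟪G x + τ, h⟫) (Q x) x :=
    ((hΦ x).add (hasSecondJetAt_continuousLinearMap (innerSL ℝ τ))).congr (fun _ => rfl)
      (fun h => inner_add_left _ _ _) (fun h => (add_zero _).symm)
  have hsuper : HasSuperjetAt F (fun h => ⟪G x + τ, h⟫) (Q x) x :=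
    htilt.hasSuperjetAt.of_isLocalMax_sub (by simpa only [sub_sub] using hmax)
  have hAx := hA.eq_of_hasSuperjetAt hsuper
  exact ⟨x, hx, hAx, hAx ▸ hsuper⟩

theorem IsSubgradientField.exists_hasSecondJetAt (hA : IsSubgradientField F A)
    (hG : LipschitzWith K G) (hΦ : ∀ x, HasSecondJetAt Φ (fun h => ⟪G x, h⟫) (Q x) x)
    (hr : 0 < r) (hsphere : ∀ x ∈ sphere x₀ r, F x - Φ x < F x₀ - Φ x₀) (hδ : 0 < δ) :
    ∃ x ∈ ball x₀ r, ∃ Q' : V → ℝ, ‖A x - G x‖ < δ ∧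
      HasSecondJetAt F (fun h => ⟪A x, h⟫) Q' x ∧ ∀ h, Q' h ≤ Q x h := by
  obtain ⟨δ₀, hδ₀, hcontact⟩ := hA.exists_hasSuperjetAt hΦ hr hsphere
  set J := mintyResolvent A
  set contacts : Set V := {x ∈ ball x₀ r | ‖A x - G x‖ < δ ∧
    HasSuperjetAt F (fun h => ⟪A x, h⟫) (Q x) x}
  have hJ := hA.lipschitzOnWith_mintyResolvent
  have hΘ : LipschitzOnWith (1 + 1 + K * 1) (fun ω => (ω - J ω) - G (J ω))
      (range fun x => x + A x) :=
    (LipschitzWith.id.lipschitzOnWith.sub hJ).sub (hG.comp_lipschitzOnWith hJ)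
  have hcover : ball 0 (min δ δ₀) ⊆
      (fun ω => (ω - J ω) - G (J ω)) '' ((fun x => x + A x) '' contacts) := by
    intro τ hτ
    rw [mem_ball_zero_iff, lt_min_iff] at hτ
    obtain ⟨x, hx, hAx, hsuper⟩ := hcontact τ hτ.2
    have hdiff : A x - G x = τ := by rw [hAx, add_sub_cancel_left]
    refine ⟨_, mem_image_of_mem _ ⟨hx, hdiff ▸ hτ.1, hsuper⟩, ?_⟩
    simp only [J, hA.leftInverse_mintyResolvent x, add_sub_cancel_left, hdiff]
  obtain ⟨_, ⟨x, ⟨hx, hAG, hsuper⟩, rfl⟩, hdiff⟩ := exists_mem_differentiableWithinAt hJ hΘ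
    (image_subset_range _ _) isOpen_ball (nonempty_ball.mpr (lt_min hδ hδ₀)) hcover
  have hjet := hA.hasSecondJetAt_of_hasFDerivAt (hA.differentiableAt hsuper hdiff).hasFDerivAt
  exact ⟨x, hx, _, hAG, hjet, hjet.quadratic_le hsuper⟩

end Jensen

/-! ### Sup-convolutions -/

section SupConvolution

variable {V : Type*} [NormedAddCommGroup V] {K S : Set V} {g φ : V → ℝ}
  {κ η r : ℝ} {Z : V → V} {z₀ : V} {M : NNReal}

/-- `Z y` maximizes `z ↦ g z - κ / 2 * ‖z - y‖ ^ 2` over `K`, for every `y`. -/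
structure IsProximalSelection (K : Set V) (g : V → ℝ) (κ : ℝ) (Z : V → V) : Prop where
  mem : ∀ y, Z y ∈ K
  isMaxOn : ∀ y, IsMaxOn (fun z => g z - κ / 2 * ‖z - y‖ ^ 2) K (Z y)

/-- The sup-convolution `y ↦ sup {g z - κ / 2 * ‖z - y‖ ^ 2 | z ∈ K}`, evaluated at the
maximizers chosen by a proximal selection `Z`. -/
noncomputable def supConvolution (g : V → ℝ) (κ : ℝ) (Z : V → V) (y : V) : ℝ :=
  g (Z y) - κ / 2 * ‖Z y - y‖ ^ 2

lemma exists_isProximalSelection (hK : IsCompact K) (hK_nonempty : K.Nonempty)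
    (hg : UpperSemicontinuousOn g K) (κ : ℝ) : ∃ Z, IsProximalSelection K g κ Z := by
  have hmax : ∀ y, ∃ z ∈ K, IsMaxOn (fun z => g z - κ / 2 * ‖z - y‖ ^ 2) K z := by
    intro y
    have hpenalty : Continuous fun z : V => -(κ / 2 * ‖z - y‖ ^ 2) := by fun_prop
    simpa only [← sub_eq_add_neg] using (hg.add
      (hpenalty.upperSemicontinuous.upperSemicontinuousOn K)).exists_isMaxOn hK_nonempty hK
  choose Z hZK hZ using hmax
  exact ⟨Z, hZK, hZ⟩

namespace IsProximalSelection

lemma le_supConvolution (hZ : IsProximalSelection K g κ Z) {z : V} (hz : z ∈ K) (y : V) :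
    g z - κ / 2 * ‖z - y‖ ^ 2 ≤ supConvolution g κ Z y :=
  hZ.isMaxOn y hz

lemma le_supConvolution_self (hZ : IsProximalSelection K g κ Z) {z : V} (hz : z ∈ K) :
    g z ≤ supConvolution g κ Z z := by
  simpa using hZ.le_supConvolution hz z

-- The value of the sup-convolution at `ξ + h` is at least that of the competitor `Z ξ + h`.
lemma hasSuperjetAt [NormedSpace ℝ V] {ξ : V} {ℓ Q : V → ℝ} (hZ : IsProximalSelection K g κ Z)
    (hK : K ∈ 𝓝 (Z ξ)) (hξ : HasSuperjetAt (supConvolution g κ Z) ℓ Q ξ) :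
    HasSuperjetAt g ℓ Q (Z ξ) where
  linear := hξ.linear
  quadratic := hξ.quadratic
  eventually_le η hη := by
    filter_upwards [hξ.eventually_le η hη, (tendsto_const_add_nhds_zero (Z ξ)).eventually hK]
      with h hh hmem
    have hle := hZ.le_supConvolution hmem (ξ + h)
    rw [add_sub_add_right_eq_sub] at hle
    simp only [supConvolution] at hh hle
    linarith

end IsProximalSelection

lemma eventually_mul_sub_quadratics_neg {M : ℝ} (hη : 0 < η) (hr : 0 < r) :
    ∀ᶠ κ : ℝ in atTop, ∀ d ρ : ℝ, 0 ≤ d → r ≤ ρ + d → M * d - η * ρ ^ 2 - κ / 2 * d ^ 2 < 0 := by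
  filter_upwards [eventually_gt_atTop 0, eventually_gt_atTop (2 * M ^ 2 / (η * r ^ 2)),
    eventually_gt_atTop (4 * M / r)] with κ hκ hκ_near hκ_far d ρ hd hρ
  rw [div_lt_iff₀ (by positivity)] at hκ_near hκ_far
  rcases le_or_gt d (r / 2) with hnear | hfar
  · have hρ_sq : η * (r / 2) ^ 2 ≤ η * ρ ^ 2 := by gcongr; linarith
    have hscaled : κ * (M * d - η * ρ ^ 2 - κ / 2 * d ^ 2) < 0 := by
      nlinarith [sq_nonneg (M - κ * d)]
    exact neg_of_mul_neg_right hscaled hκ.le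
  · have hMd : M * d < κ * d / 2 * d := by
      gcongr
      · linarith
      · nlinarith
    nlinarith [mul_nonneg hη.le (sq_nonneg ρ)]

lemma eventually_supConvolution_sub_lt (hφ : LipschitzOnWith M φ S) (hKS : K ⊆ S)
    (hsphere : sphere z₀ r ⊆ S) (hz₀ : z₀ ∈ K) (hη : 0 < η) (hr : 0 < r)
    (hg : ∀ z ∈ K, g z - φ z ≤ g z₀ - φ z₀ - η * ‖z - z₀‖ ^ 2) :
    ∀ᶠ κ : ℝ in atTop, ∀ Z, IsProximalSelection K g κ Z → ∀ x ∈ sphere z₀ r,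
      supConvolution g κ Z x - φ x < supConvolution g κ Z z₀ - φ z₀ := by
  filter_upwards [eventually_mul_sub_quadratics_neg (M := M) hη hr] with κ hκ Z hZ x hx
  have hφ_diff : φ (Z x) - φ x ≤ M * ‖Z x - x‖ := by
    rw [← dist_eq_norm]
    exact (le_abs_self _).trans (hφ.dist_le_mul _ (hKS (hZ.mem x)) _ (hsphere hx))
  have hr_le : r ≤ ‖Z x - z₀‖ + ‖Z x - x‖ := by
    rw [← mem_sphere.mp hx, ← dist_eq_norm, ← dist_eq_norm, add_comm, dist_comm (Z x) x]
    exact dist_triangle _ _ _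
  have hself := hZ.le_supConvolution_self hz₀
  have := hκ _ _ (norm_nonneg _) hr_le
  have := hg _ (hZ.mem x)
  have hx_eq : supConvolution g κ Z x = g (Z x) - κ / 2 * ‖Z x - x‖ ^ 2 := rfl
  linarith

end SupConvolution

section SupConvolutionJets

variable {V : Type*} [NormedAddCommGroup V] [InnerProductSpace ℝ V] {K : Set V}
  {g φ : V → ℝ} {κ η r ε : ℝ} {Z G : V → V} {Q : V → V → ℝ} {z₀ : V} {L : NNReal}

lemma IsProximalSelection.isSubgradientField (hZ : IsProximalSelection K g κ Z) :
    IsSubgradientField (fun y => supConvolution g κ Z y + κ / 2 * ‖y‖ ^ 2)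
      (fun y => κ • Z y) := by
  intro x y
  have hle := hZ.le_supConvolution (hZ.mem x) y
  simp only [supConvolution, norm_sub_sq_real, real_inner_smul_left, inner_sub_right] at hle ⊢
  linarith

lemma IsProximalSelection.exists_hasSecondJetAt [FiniteDimensional ℝ V]
    (hZ : IsProximalSelection K g κ Z) (hG : LipschitzWith L G)
    (hφ : ∀ x, HasSecondJetAt φ (fun h => ⟪G x, h⟫) (Q x) x) (hr : 0 < r)
    (hsphere : ∀ x ∈ sphere z₀ r,
      supConvolution g κ Z x - φ x < supConvolution g κ Z z₀ - φ z₀) {δ : ℝ} (hδ : 0 < δ) :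
    ∃ ξ ∈ ball z₀ r, ∃ Q' : V → ℝ, ‖κ • (Z ξ - ξ) - G ξ‖ < δ ∧
      HasSecondJetAt (supConvolution g κ Z) (fun h => ⟪κ • (Z ξ - ξ), h⟫) Q' ξ ∧
      ∀ h, Q' h ≤ Q ξ h := by
  have hΦ : ∀ x, HasSecondJetAt (fun y => φ y + κ / 2 * ‖y‖ ^ 2)
      (fun h => ⟪G x + κ • x, h⟫) (fun h => Q x h + κ * ‖h‖ ^ 2) x := fun x =>
    ((hφ x).add ((hasSecondJetAt_norm_sq x).const_mul (κ / 2))).congr (fun _ => rfl)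
      (fun h => by rw [inner_add_left, real_inner_smul_left]; ring) (fun h => by ring)
  obtain ⟨ξ, hξ, Q', hclose, hjet, hQ'⟩ := hZ.isSubgradientField.exists_hasSecondJetAt
    (hG.add (lipschitzWith_smul κ)) hΦ hr
    (fun x hx => by linarith [hsphere x hx]) hδ
  refine ⟨ξ, hξ, fun h => Q' h - κ * ‖h‖ ^ 2, ?_, ?_, fun h => by linarith [hQ' h]⟩
  · convert hclose using 2
    simp only [smul_sub]
    abel
  · refine (hjet.add ((hasSecondJetAt_norm_sq ξ).const_mul (-(κ / 2)))).congr (fun _ => by ring)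
      (fun h => ?_) (fun h => by ring)
    rw [smul_sub, inner_sub_left, real_inner_smul_left ξ]
    ring

theorem eventually_exists_hasSecondJetAt_supConvolution [FiniteDimensional ℝ V]
    (hK : IsCompact K) (hz₀ : z₀ ∈ K) (hφ_lip : LocallyLipschitz φ) (hG : LipschitzWith L G)
    (hφ : ∀ x, HasSecondJetAt φ (fun h => ⟪G x, h⟫) (Q x) x) (hη : 0 < η)
    (hg : ∀ z ∈ K, g z - φ z ≤ g z₀ - φ z₀ - η * ‖z - z₀‖ ^ 2) (hε : 0 < ε) :
    ∀ᶠ κ : ℝ in atTop, ∀ Z, IsProximalSelection K g κ Z → ∃ (ξ : V) (Q' : V → ℝ),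
      ‖Z ξ - z₀‖ < ε ∧ ‖κ • (Z ξ - ξ) - G z₀‖ < ε ∧
      HasSecondJetAt (supConvolution g κ Z) (fun h => ⟪κ • (Z ξ - ξ), h⟫) Q' ξ ∧
      ∀ h, Q' h ≤ Q ξ h := by
  obtain ⟨r, hr, hrε, hLr⟩ : ∃ r > 0, r ≤ ε / 2 ∧ L * r ≤ ε / 2 := by
    refine ⟨min (ε / 2) (ε / (2 * (L + 1))), by positivity, min_le_left _ _, ?_⟩
    calc (L : ℝ) * min (ε / 2) (ε / (2 * (L + 1))) ≤ (L + 1) * (ε / (2 * (L + 1))) := by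
          gcongr
          · linarith
          · exact min_le_right _ _
      _ = ε / 2 := by field_simp
  obtain ⟨M, hM⟩ := LocallyLipschitzOn.exists_lipschitzOnWith_of_compact
    (hK.union (isCompact_sphere z₀ r)) hφ_lip.locallyLipschitzOn
  filter_upwards [eventually_supConvolution_sub_lt hM subset_union_left subset_union_right hz₀ hη
    hr hg, eventually_gt_atTop 0, eventually_gt_atTop ((‖G z₀‖ + ε) / (ε / 2))]
    with κ hsphere hκ_pos hκ_large Z hZ
  obtain ⟨ξ, hξ, Q', hclose, hjet, hQ'⟩ :=
    hZ.exists_hasSecondJetAt hG hφ hr (hsphere Z hZ) (half_pos hε)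
  have hGξ : ‖G ξ - G z₀‖ ≤ ε / 2 := by
    rw [← dist_eq_norm]
    exact (hG.dist_le_mul ξ z₀).trans (le_trans (by gcongr; exact (mem_ball.mp hξ).le) hLr)
  have hP : ‖κ • (Z ξ - ξ) - G z₀‖ < ε := by
    linarith [norm_sub_le_norm_sub_add_norm_sub (κ • (Z ξ - ξ)) (G ξ) (G z₀)]
  refine ⟨ξ, Q', ?_, hP, hjet, hQ'⟩
  have hstep : ‖Z ξ - ξ‖ < ε / 2 := by
    rw [div_lt_iff₀ (by positivity)] at hκ_large
    have hnorm : κ * ‖Z ξ - ξ‖ = ‖κ • (Z ξ - ξ)‖ := by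
      rw [norm_smul, Real.norm_of_nonneg hκ_pos.le]
    have := norm_le_norm_sub_add (κ • (Z ξ - ξ)) (G z₀)
    exact lt_of_mul_lt_mul_left (by linarith) hκ_pos.le
  linarith [norm_sub_le_norm_sub_add_norm_sub (Z ξ) ξ z₀, mem_ball_iff_norm.mp hξ]

end SupConvolutionJets

/-! ### Paraboloids -/

section Paraboloid

variable {V : Type*} [NormedAddCommGroup V] [InnerProductSpace ℝ V] {g Q : V → ℝ} {l z₀ : V}
  {S : V →L[ℝ] V} {ε : ℝ}

/-- The quadratic polynomial with value `0`, gradient `l` and Hessian `S` at `z₀`. -/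
noncomputable def paraboloid (l : V) (S : V →L[ℝ] V) (z₀ y : V) : ℝ :=
  ⟪l, y - z₀⟫ + ⟪S (y - z₀), y - z₀⟫ / 2

@[simp]
lemma paraboloid_self (l : V) (S : V →L[ℝ] V) (z₀ : V) : paraboloid l S z₀ z₀ = 0 := by
  simp [paraboloid]

lemma contDiff_paraboloid {n : WithTop ℕ∞} (l : V) (S : V →L[ℝ] V) (z₀ : V) :
    ContDiff ℝ n (paraboloid l S z₀) := by
  have hS : ContDiff ℝ n fun y => S (y - z₀) := S.contDiff.comp (contDiff_id.sub contDiff_const)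
  have hid : ContDiff ℝ n fun y => y - z₀ := contDiff_id.sub contDiff_const
  exact (contDiff_const.inner ℝ hid).add ((hS.inner ℝ hid).div_const 2)

lemma isQuadraticForm_inner_self (S : V →L[ℝ] V) : IsQuadraticForm fun h => ⟪S h, h⟫ :=
  ⟨(innerSL ℝ).comp S, fun _ => rfl⟩

lemma hasSecondJetAt_paraboloid (hS : (S : V →ₗ[ℝ] V).IsSymmetric) (l z₀ x : V) :
    HasSecondJetAt (paraboloid l S z₀) (fun h => ⟪l + S (x - z₀), h⟫) (fun h => ⟪S h, h⟫) x where
  linear := (innerSL ℝ (l + S (x - z₀))).isBoundedLinearMap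
  quadratic := isQuadraticForm_inner_self S
  isLittleO := by
    refine (Asymptotics.isLittleO_zero _ _).congr_left fun h => ?_
    have hsymm : ⟪S h, x - z₀⟫ = ⟪S (x - z₀), h⟫ := (hS h (x - z₀)).trans (real_inner_comm _ _)
    rw [paraboloid, paraboloid, show x + h - z₀ = (x - z₀) + h by abel]
    simp only [map_add, inner_add_left, inner_add_right, hsymm]
    ring

lemma IsQuadraticForm.exists_isSymmetric [CompleteSpace V] (hQ : IsQuadraticForm Q) :
    ∃ S : V →L[ℝ] V, (S : V →ₗ[ℝ] V).IsSymmetric ∧ ∀ h, ⟪S h, h⟫ = Q h := by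
  obtain ⟨T, hT⟩ := hQ
  let A : V →L[ℝ] V := InnerProductSpace.continuousLinearMapOfBilin T
  have hA : ∀ x y, ⟪A x, y⟫ = T x y := InnerProductSpace.continuousLinearMapOfBilin_apply T
  refine ⟨(1 / 2 : ℝ) • (A + ContinuousLinearMap.adjoint A), fun x y => ?_, fun h => ?_⟩
  · simp [inner_add_left, inner_add_right, real_inner_smul_left, real_inner_smul_right,
      ContinuousLinearMap.adjoint_inner_left, ContinuousLinearMap.adjoint_inner_right, add_comm]
  · simp only [smul_apply, add_apply,
      real_inner_smul_left, inner_add_left, ContinuousLinearMap.adjoint_inner_left, hT,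
      real_inner_comm (A h) h, hA]
    ring

lemma HasSuperjetAt.exists_paraboloid [CompleteSpace V]
    (hg : HasSuperjetAt g (fun h => ⟪l, h⟫) Q z₀) (hε : 0 < ε) :
    ∃ S : V →L[ℝ] V, (S : V →ₗ[ℝ] V).IsSymmetric ∧ (∀ h, ⟪S h, h⟫ = Q h + ε * ‖h‖ ^ 2) ∧
      ∀ᶠ z in 𝓝 z₀, g z - paraboloid l S z₀ z ≤
        g z₀ - paraboloid l S z₀ z₀ - ε / 4 * ‖z - z₀‖ ^ 2 := by
  obtain ⟨S, hS, hSQ⟩ := (hg.quadratic.add (isQuadraticForm_norm_sq.const_mul ε)).exists_isSymmetric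
  have htendsto : Tendsto (fun z => z - z₀) (𝓝 z₀) (𝓝 0) :=
    (continuous_sub_right z₀).tendsto' _ _ (sub_self z₀)
  refine ⟨S, hS, hSQ, ?_⟩
  filter_upwards [htendsto.eventually (hg.eventually_le (ε / 4) (by positivity))] with z hz
  rw [add_sub_cancel] at hz
  rw [paraboloid_self, paraboloid, hSQ]
  linarith

end Paraboloid

/-! ### The theorem on sums -/

section Product

variable {E F : Type*} [NormedAddCommGroup E] [NormedAddCommGroup F] {K₁ : Set E} {K₂ : Set F}
  {v : E → ℝ} {w : F → ℝ} {κ : ℝ} {Z₁ : E → E} {Z₂ : F → F}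

lemma IsProximalSelection.prod (h₁ : IsProximalSelection K₁ v κ Z₁)
    (h₂ : IsProximalSelection K₂ w κ Z₂) :
    IsProximalSelection {z : WithLp 2 (E × F) | z.fst ∈ K₁ ∧ z.snd ∈ K₂}
      (fun z => v z.fst + w z.snd) κ (fun z => WithLp.toLp 2 (Z₁ z.fst, Z₂ z.snd)) where
  mem z := ⟨h₁.mem z.fst, h₂.mem z.snd⟩
  isMaxOn y := isMaxOn_iff.mpr fun z hz => by
    have := isMaxOn_iff.mp (h₁.isMaxOn y.fst) _ hz.1
    have := isMaxOn_iff.mp (h₂.isMaxOn y.snd) _ hz.2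
    simp only [WithLp.prod_norm_sq_eq_of_L2, WithLp.sub_fst, WithLp.sub_snd,
      WithLp.toLp_fst, WithLp.toLp_snd]
    linarith

lemma supConvolution_prod (v : E → ℝ) (w : F → ℝ) (κ : ℝ) (Z₁ : E → E) (Z₂ : F → F)
    (z : WithLp 2 (E × F)) :
    supConvolution (fun z : WithLp 2 (E × F) => v z.fst + w z.snd) κ
      (fun z => WithLp.toLp 2 (Z₁ z.fst, Z₂ z.snd)) z =
      supConvolution v κ Z₁ z.fst + supConvolution w κ Z₂ z.snd := by
  simp only [supConvolution, WithLp.prod_norm_sq_eq_of_L2, WithLp.sub_fst, WithLp.sub_snd,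
    WithLp.toLp_fst, WithLp.toLp_snd]
  ring

end Product

section TheoremOnSums

variable {E F : Type*} [NormedAddCommGroup E] [InnerProductSpace ℝ E]
  [NormedAddCommGroup F] [InnerProductSpace ℝ F] {v : E → ℝ} {w : F → ℝ} {ε : ℝ}

lemma HasSecondJetAt.exists_of_prod {Q : WithLp 2 (E × F) → ℝ} {P ξ : WithLp 2 (E × F)}
    (h : HasSecondJetAt (fun z : WithLp 2 (E × F) => v z.fst + w z.snd) (fun h => ⟪P, h⟫) Q ξ) :
    ∃ (Q₁ : E → ℝ) (Q₂ : F → ℝ), HasSecondJetAt v (fun h => ⟪P.fst, h⟫) Q₁ ξ.fst ∧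
      HasSecondJetAt w (fun h => ⟪P.snd, h⟫) Q₂ ξ.snd ∧
      ∀ a b, Q₁ a + Q₂ b ≤ Q (WithLp.toLp 2 (a, b)) := by
  let pair := (WithLp.prodContinuousLinearEquiv 2 ℝ E F).symm.toContinuousLinearMap
  have hv : HasSecondJetAt v (fun h => ⟪P.fst, h⟫) (fun a => Q (WithLp.toLp 2 (a, 0))) ξ.fst :=
    (h.of_restrict (pair.comp (ContinuousLinearMap.inl ℝ E F)) (g := v) (y := ξ.fst)
      fun a => by simp [pair]).congr (fun _ => rfl)
      (fun a => by simp [pair, WithLp.prod_inner_apply]) (fun _ => rfl)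
  have hw : HasSecondJetAt w (fun h => ⟪P.snd, h⟫) (fun b => Q (WithLp.toLp 2 (0, b))) ξ.snd :=
    (h.of_restrict (pair.comp (ContinuousLinearMap.inr ℝ E F)) (g := w) (y := ξ.snd)
      fun b => by simp [pair]).congr (fun _ => rfl)
      (fun b => by simp [pair, WithLp.prod_inner_apply]) (fun _ => rfl)
  refine ⟨_, _, hv, hw, fun a b => ?_⟩
  have hsum := (hv.comp_clm (WithLp.fstL 2 ℝ E F)).add (hw.comp_clm (WithLp.sndL 2 ℝ E F))
  refine (hsum.congr (fun _ => rfl) (fun _ => ?_) (fun _ => rfl)).quadratic_le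
    h.hasSuperjetAt (WithLp.toLp 2 (a, b))
  exact WithLp.prod_inner_apply _ _

lemma isCompact_setOf_fst_mem_and_snd_mem {K₁ : Set E} {K₂ : Set F} (hK₁ : IsCompact K₁)
    (hK₂ : IsCompact K₂) : IsCompact {z : WithLp 2 (E × F) | z.fst ∈ K₁ ∧ z.snd ∈ K₂} :=
  (WithLp.prodContinuousLinearEquiv 2 ℝ E F).toHomeomorph.isClosedEmbedding.isCompact_preimage
    (hK₁.prod hK₂)

lemma exists_closedBall_prod_of_eventually_withLp {z₀ : WithLp 2 (E × F)}
    {p : WithLp 2 (E × F) → Prop} (hp : ∀ᶠ z in 𝓝 z₀, p z) :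
    ∃ ρ > 0, ∀ z : WithLp 2 (E × F), z.fst ∈ closedBall z₀.fst ρ → z.snd ∈ closedBall z₀.snd ρ →
      p z := by
  have hpair : Tendsto (WithLp.toLp 2 : E × F → _) (𝓝 (z₀.fst, z₀.snd)) (𝓝 z₀) :=
    (WithLp.prodContinuousLinearEquiv 2 ℝ E F).symm.continuous.tendsto _
  obtain ⟨ρ, hρ, hball⟩ := nhds_basis_closedBall.eventually_iff.mp (hpair.eventually hp)
  refine ⟨ρ, hρ, fun z hfst hsnd => ?_⟩
  exact hball (by rw [← closedBall_prod_same]; exact ⟨hfst, hsnd⟩ : (z.fst, z.snd) ∈ _)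

lemma HasSuperjetAt.exists_of_prod_withLp [FiniteDimensional ℝ E] [FiniteDimensional ℝ F]
    {A : Set E} {B : Set F} {Q : WithLp 2 (E × F) → ℝ} {P z₀ : WithLp 2 (E × F)}
    (hA : A ∈ 𝓝 z₀.fst) (hv : UpperSemicontinuousOn v A)
    (hB : B ∈ 𝓝 z₀.snd) (hw : UpperSemicontinuousOn w B)
    (h : HasSuperjetAt (fun z : WithLp 2 (E × F) => v z.fst + w z.snd) (fun h => ⟪P, h⟫) Q z₀)
    (hε : 0 < ε) :
    ∃ (z P' : WithLp 2 (E × F)) (Q₁ : E → ℝ) (Q₂ : F → ℝ), ‖z - z₀‖ < ε ∧ ‖P' - P‖ < ε ∧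
      HasSuperjetAt v (fun h => ⟪P'.fst, h⟫) Q₁ z.fst ∧
      HasSuperjetAt w (fun h => ⟪P'.snd, h⟫) Q₂ z.snd ∧
      ∀ a b, Q₁ a + Q₂ b ≤ Q (WithLp.toLp 2 (a, b)) + ε * (‖a‖ ^ 2 + ‖b‖ ^ 2) := by
  obtain ⟨S, hS, hSQ, hmax⟩ := h.exists_paraboloid hε
  have hA' := (WithLp.fstL 2 ℝ E F).continuous.continuousAt.preimage_mem_nhds hA
  have hB' := (WithLp.sndL 2 ℝ E F).continuous.continuousAt.preimage_mem_nhds hB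
  obtain ⟨ρ, hρ, hball⟩ := exists_closedBall_prod_of_eventually_withLp
    (hmax.and (Filter.Eventually.and hA' hB'))
  have hv_ball : UpperSemicontinuousOn v (closedBall z₀.fst ρ) := hv.mono fun x hx =>
    (hball (WithLp.toLp 2 (x, z₀.snd)) hx (mem_closedBall_self hρ.le)).2.1
  have hw_ball : UpperSemicontinuousOn w (closedBall z₀.snd ρ) := hw.mono fun y hy =>
    (hball (WithLp.toLp 2 (z₀.fst, y)) (mem_closedBall_self hρ.le) hy).2.2
  have hcompact := isCompact_setOf_fst_mem_and_snd_mem (isCompact_closedBall z₀.fst ρ)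
    (isCompact_closedBall z₀.snd ρ)
  have hG : LipschitzWith ‖S‖₊ fun x => P + S (x - z₀) := by
    simpa using (LipschitzWith.const P).add (S.lipschitz.comp (LipschitzWith.id.sub (.const z₀)))
  obtain ⟨κ, hκ⟩ := (eventually_exists_hasSecondJetAt_supConvolution hcompact
    ⟨mem_closedBall_self hρ.le, mem_closedBall_self hρ.le⟩
    (contDiff_paraboloid (n := 1) P S z₀).locallyLipschitz hG (hasSecondJetAt_paraboloid hS P z₀)
    (div_pos hε four_pos) (fun z hz => (hball z hz.1 hz.2).1) (lt_min hε hρ)).exists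
  obtain ⟨Z₁, hZ₁⟩ := exists_isProximalSelection (isCompact_closedBall z₀.fst ρ)
    (nonempty_closedBall.mpr hρ.le) hv_ball κ
  obtain ⟨Z₂, hZ₂⟩ := exists_isProximalSelection (isCompact_closedBall z₀.snd ρ)
    (nonempty_closedBall.mpr hρ.le) hw_ball κ
  obtain ⟨ξ, Q', hz, hP, hjet, hQ'⟩ := hκ _ (hZ₁.prod hZ₂)
  simp only [sub_self, map_zero, add_zero, lt_inf_iff] at hz hP
  obtain ⟨Q₁, Q₂, hjet₁, hjet₂, hQ⟩ :=
    (hjet.congr (fun z => (supConvolution_prod v w κ Z₁ Z₂ z).symm) (fun _ => rfl)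
      fun _ => rfl).exists_of_prod
  refine ⟨_, _, Q₁, Q₂, hz.1, hP.1, hZ₁.hasSuperjetAt ?_ hjet₁.hasSuperjetAt,
    hZ₂.hasSuperjetAt ?_ hjet₂.hasSuperjetAt, fun a b => ?_⟩
  · exact closedBall_mem_nhds_of_mem
      (mem_ball_iff_norm.mpr ((WithLp.norm_fst_le _ _).trans_lt hz.2))
  · exact closedBall_mem_nhds_of_mem
      (mem_ball_iff_norm.mpr ((WithLp.norm_snd_le _ _).trans_lt hz.2))
  · refine (hQ a b).trans ((hQ' _).trans_eq ?_)
    rw [hSQ, WithLp.prod_norm_sq_eq_of_L2, WithLp.toLp_fst, WithLp.toLp_snd]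

theorem HasSuperjetAt.exists_of_prod [FiniteDimensional ℝ E] [FiniteDimensional ℝ F]
    {A : Set E} {B : Set F} {Q : E × F → ℝ} {x₀ p : E} {y₀ q : F}
    (hA : A ∈ 𝓝 x₀) (hv : UpperSemicontinuousOn v A)
    (hB : B ∈ 𝓝 y₀) (hw : UpperSemicontinuousOn w B)
    (h : HasSuperjetAt (fun z : E × F => v z.1 + w z.2) (fun h => ⟪p, h.1⟫ + ⟪q, h.2⟫) Q (x₀, y₀))
    (hε : 0 < ε) :
    ∃ (x p' : E) (y q' : F) (Q₁ : E → ℝ) (Q₂ : F → ℝ), ‖x - x₀‖ < ε ∧ ‖p' - p‖ < ε ∧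
      ‖y - y₀‖ < ε ∧ ‖q' - q‖ < ε ∧
      HasSuperjetAt v (fun h => ⟪p', h⟫) Q₁ x ∧ HasSuperjetAt w (fun h => ⟪q', h⟫) Q₂ y ∧
      ∀ a b, Q₁ a + Q₂ b ≤ Q (a, b) + ε * (‖a‖ ^ 2 + ‖b‖ ^ 2) := by
  have h' := HasSuperjetAt.comp_clm (y := WithLp.toLp 2 (x₀, y₀))
    (WithLp.prodContinuousLinearEquiv 2 ℝ E F).toContinuousLinearMap h
  obtain ⟨z, P', Q₁, Q₂, hz, hP', h₁, h₂, hQ⟩ := HasSuperjetAt.exists_of_prod_withLp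
    (P := WithLp.toLp 2 (p, q)) hA hv hB hw h' hε
  exact ⟨z.fst, P'.fst, z.snd, P'.snd, Q₁, Q₂, (WithLp.norm_fst_le _ _).trans_lt hz,
    (WithLp.norm_fst_le _ _).trans_lt hP', (WithLp.norm_snd_le _ _).trans_lt hz,
    (WithLp.norm_snd_le _ _).trans_lt hP', h₁, h₂, hQ⟩

end TheoremOnSums

/-! ### The metric of a graph -/

section GraphMetric

variable {V : Type*} [NormedAddCommGroup V]

/-- The area element `√(1 + |p|²)` of a graph with gradient `p`. -/
noncomputable def areaElement (p : V) : ℝ := √(1 + ‖p‖ ^ 2)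

lemma areaElement_sq (p : V) : areaElement p ^ 2 = 1 + ‖p‖ ^ 2 := Real.sq_sqrt (by positivity)

lemma one_le_areaElement (p : V) : 1 ≤ areaElement p :=
  Real.one_le_sqrt.mpr (le_add_of_nonneg_right (by positivity))

lemma areaElement_pos (p : V) : 0 < areaElement p := one_pos.trans_le (one_le_areaElement p)

@[simp]
lemma areaElement_neg (p : V) : areaElement (-p) = areaElement p := by
  rw [areaElement, areaElement, norm_neg]

lemma continuous_areaElement : Continuous (areaElement : V → ℝ) := by
  unfold areaElement
  fun_prop

variable [InnerProductSpace ℝ V] {ι : Type*} [Fintype ι]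

lemma inner_self_eq_areaElement_sq_sub_one (p : V) : ⟪p, p⟫ = areaElement p ^ 2 - 1 := by
  rw [real_inner_self_eq_norm_sq, areaElement_sq]
  ring

/-- The squared length of the tangent vector `(a, ⟪p, a⟫)` to a graph with gradient `p`, i.e. the
quadratic form of the graph metric `1 + p ⊗ p`. -/
noncomputable def graphNormSq (p a : V) : ℝ := ‖a‖ ^ 2 + ⟪p, a⟫ ^ 2

@[simp]
lemma graphNormSq_neg (p a : V) : graphNormSq (-p) a = graphNormSq p a := by
  simp [graphNormSq, inner_neg_left]

/-- The positive square root of the graph metric `1 + p ⊗ p`. -/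
noncomputable def sqrtMetric (p : V) : V →L[ℝ] V :=
  ContinuousLinearMap.id ℝ V + (areaElement p + 1)⁻¹ • (innerSL ℝ p).smulRight p

/-- The inverse of the positive square root of the graph metric `1 + p ⊗ p`. -/
noncomputable def invSqrtMetric (p : V) : V →L[ℝ] V :=
  ContinuousLinearMap.id ℝ V -
    (areaElement p * (areaElement p + 1))⁻¹ • (innerSL ℝ p).smulRight p

lemma sqrtMetric_apply (p a : V) :
    sqrtMetric p a = a + ((areaElement p + 1)⁻¹ * ⟪p, a⟫) • p := by
  simp [sqrtMetric, smul_smul]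

lemma invSqrtMetric_apply (p a : V) :
    invSqrtMetric p a = a - ((areaElement p * (areaElement p + 1))⁻¹ * ⟪p, a⟫) • p := by
  simp [invSqrtMetric, smul_smul]

lemma invSqrtMetric_sqrtMetric (p a : V) : invSqrtMetric p (sqrtMetric p a) = a := by
  have hW := areaElement_pos p
  rw [invSqrtMetric_apply, sqrtMetric_apply, inner_add_right, real_inner_smul_right,
    inner_self_eq_areaElement_sq_sub_one]
  match_scalars <;> field_simp
  ring

lemma sqrtMetric_invSqrtMetric (p a : V) : sqrtMetric p (invSqrtMetric p a) = a := by
  have hW := areaElement_pos p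
  rw [sqrtMetric_apply, invSqrtMetric_apply, inner_sub_right, real_inner_smul_right,
    inner_self_eq_areaElement_sq_sub_one]
  match_scalars <;> field_simp
  ring

lemma invSqrtMetric_invSqrtMetric (p a : V) :
    invSqrtMetric p (invSqrtMetric p a) = a - (⟪p, a⟫ / areaElement p ^ 2) • p := by
  have hW := areaElement_pos p
  rw [invSqrtMetric_apply p (invSqrtMetric p a), invSqrtMetric_apply, inner_sub_right,
    real_inner_smul_right, inner_self_eq_areaElement_sq_sub_one]
  match_scalars <;> field_simp
  ring

lemma isSymmetric_invSqrtMetric (p : V) : (invSqrtMetric p : V →ₗ[ℝ] V).IsSymmetric := by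
  intro a b
  simp only [ContinuousLinearMap.coe_coe, invSqrtMetric_apply, inner_sub_left, inner_sub_right,
    real_inner_smul_left, real_inner_smul_right, real_inner_comm p a]
  ring

lemma norm_sqrtMetric_sq (p a : V) : ‖sqrtMetric p a‖ ^ 2 = graphNormSq p a := by
  have hW := areaElement_pos p
  rw [graphNormSq, sqrtMetric_apply, norm_add_sq_real, norm_smul, mul_pow, Real.norm_eq_abs,
    sq_abs, real_inner_smul_right, real_inner_comm, ← real_inner_self_eq_norm_sq p,
    inner_self_eq_areaElement_sq_sub_one]
  field_simp
  ring

lemma graphNormSq_invSqrtMetric (p a : V) : graphNormSq p (invSqrtMetric p a) = ‖a‖ ^ 2 := by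
  rw [← norm_sqrtMetric_sq, sqrtMetric_invSqrtMetric]

lemma norm_invSqrtMetric_sq (p a : V) :
    ‖invSqrtMetric p a‖ ^ 2 = ‖a‖ ^ 2 - ⟪p, a⟫ ^ 2 / areaElement p ^ 2 := by
  have hsymm : ⟪invSqrtMetric p a, invSqrtMetric p a⟫ = ⟪a, invSqrtMetric p (invSqrtMetric p a)⟫ :=
    isSymmetric_invSqrtMetric p a (invSqrtMetric p a)
  rw [← real_inner_self_eq_norm_sq, hsymm, invSqrtMetric_invSqrtMetric, inner_sub_right,
    real_inner_smul_right, real_inner_self_eq_norm_sq, real_inner_comm]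
  ring

lemma continuous_invSqrtMetric_apply (a : V) : Continuous fun p : V => invSqrtMetric p a := by
  have hW := continuous_areaElement (V := V)
  have hinv : Continuous fun p : V => (areaElement p * (areaElement p + 1))⁻¹ :=
    (hW.mul (hW.add continuous_const)).inv₀ fun p => by
      have := areaElement_pos p
      exact (mul_pos this (add_pos this one_pos)).ne'
  simp only [invSqrtMetric_apply]
  fun_prop

lemma sum_inner_invSqrtMetric_sq (p e : V) (b : OrthonormalBasis ι ℝ V) :
    ∑ i, ⟪e, invSqrtMetric p (b i)⟫ ^ 2 = ‖invSqrtMetric p e‖ ^ 2 := by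
  rw [← b.sum_sq_inner_left]
  exact Finset.sum_congr rfl fun i _ => congrArg (· ^ 2) (isSymmetric_invSqrtMetric p e (b i)).symm

lemma sum_inner_map_invSqrtMetric (p : V) (S : V →L[ℝ] V) (b : OrthonormalBasis ι ℝ V) :
    ∑ i, ⟪S (invSqrtMetric p (b i)), invSqrtMetric p (b i)⟫ =
      LinearMap.trace ℝ V S - ⟪S p, p⟫ / areaElement p ^ 2 := by
  let t : V →ₗ[ℝ] V := (invSqrtMetric p).toLinearMap
  calc ∑ i, ⟪S (invSqrtMetric p (b i)), invSqrtMetric p (b i)⟫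
      = ∑ i, ⟪b i, (t * S * t) (b i)⟫ := Finset.sum_congr rfl fun i _ =>
        (real_inner_comm _ _).trans (isSymmetric_invSqrtMetric p (b i) _)
    _ = LinearMap.trace ℝ V (S * t * t) := by
        rw [← LinearMap.trace_eq_sum_inner, mul_assoc, LinearMap.trace_mul_comm]
    _ = ∑ i, (⟪b i, S (b i)⟫ - ⟪p, b i⟫ * ⟪b i, S p⟫ / areaElement p ^ 2) := by
        rw [LinearMap.trace_eq_sum_inner _ b]
        refine Finset.sum_congr rfl fun i _ => ?_
        change ⟪b i, S (invSqrtMetric p (invSqrtMetric p (b i)))⟫ = _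
        rw [invSqrtMetric_invSqrtMetric, map_sub, map_smul, inner_sub_right, real_inner_smul_right]
        ring
    _ = LinearMap.trace ℝ V S - ⟪S p, p⟫ / areaElement p ^ 2 := by
        rw [Finset.sum_sub_distrib, ← Finset.sum_div, b.sum_inner_mul_inner, real_inner_comm,
          LinearMap.trace_eq_sum_inner (S : V →ₗ[ℝ] V) b]
        rfl

lemma exists_orthonormalBasis_invSqrtMetric_eq {p q : V} {B : V →ₗ[ℝ] V}
    (hB : ∀ a, graphNormSq q (B a) = graphNormSq p a) (b : OrthonormalBasis ι ℝ V) :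
    ∃ c : OrthonormalBasis ι ℝ V, ∀ i, invSqrtMetric q (c i) = B (invSqrtMetric p (b i)) := by
  have := b.toBasis.finiteDimensional_of_finite
  let U : V →ₗᵢ[ℝ] V :=
    { toLinearMap := (sqrtMetric q : V →ₗ[ℝ] V) ∘ₗ B ∘ₗ (invSqrtMetric p : V →ₗ[ℝ] V)
      norm_map' a := by
        refine (sq_eq_sq₀ (norm_nonneg _) (norm_nonneg _)).mp ?_
        rw [← graphNormSq_invSqrtMetric p a, ← hB, ← norm_sqrtMetric_sq]
        rfl }
  refine ⟨b.map (U.toLinearIsometryEquiv rfl), fun i => ?_⟩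
  rw [OrthonormalBasis.map_apply]
  exact invSqrtMetric_sqrtMetric q _

end GraphMetric

/-! ### Viscosity solutions of the mean curvature equation -/

section Gradient

variable {V : Type*} [NormedAddCommGroup V] [InnerProductSpace ℝ V]

lemma HasSecondJetAt.hasGradientAt [CompleteSpace V] {f Q : V → ℝ} {l x : V}
    (hf : HasSecondJetAt f (fun h => ⟪l, h⟫) Q x) : HasGradientAt f l x := by
  rw [hasGradientAt_iff_hasFDerivAt, hasFDerivAt_iff_isLittleO_nhds_zero]
  have hlittle : (fun h : V => ‖h‖ ^ 2) =o[𝓝 0] fun h => h := by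
    simpa using Asymptotics.isLittleO_norm_pow_id one_lt_two
  have hQ : (fun h => Q h / 2) =o[𝓝 0] fun h => h := by
    simpa only [div_eq_inv_mul] using
      (hf.quadratic.isBigO.trans_isLittleO hlittle).const_mul_left 2⁻¹
  refine ((hf.isLittleO.trans hlittle).add hQ).congr_left fun h => ?_
  simp

lemma gradient_paraboloid [CompleteSpace V] {S : V →L[ℝ] V} (hS : (S : V →ₗ[ℝ] V).IsSymmetric)
    (p x y : V) : gradient (paraboloid p S x) y = p + S (y - x) :=
  (hasSecondJetAt_paraboloid hS p x y).hasGradientAt.gradient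

lemma hasFDerivAt_inv_areaElement {E : Type*} [NormedAddCommGroup E] [NormedSpace ℝ E]
    {G : E → V} {G' : E →L[ℝ] V} {x : E} (hG : HasFDerivAt G G' x) :
    HasFDerivAt (fun y => (areaElement (G y))⁻¹)
      (-(areaElement (G x) ^ 3)⁻¹ • (innerSL ℝ (G x)).comp G') x := by
  have hW := areaElement_pos (G x)
  have hinv : HasDerivAt (fun s : ℝ => (√s)⁻¹)
      (-(1 / (2 * areaElement (G x))) / areaElement (G x) ^ 2) (1 + ‖G x‖ ^ 2) :=
    (Real.hasDerivAt_sqrt (by positivity)).fun_inv hW.ne'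
  refine (hinv.comp_hasFDerivAt x (hG.norm_sq.const_add 1)).congr_fderiv ?_
  ext h
  simp only [smul_apply, ContinuousLinearMap.comp_apply, coe_innerSL_apply, nsmul_eq_mul,
    Nat.cast_ofNat, smul_eq_mul]
  field_simp

end Gradient

section MeanCurvature

variable {N : ℕ} {U U₁ U₂ : Set (EuclideanSpace ℝ (Fin N))}
  {H H₁ H₂ u v w : EuclideanSpace ℝ (Fin N) → ℝ} {p q x y : EuclideanSpace ℝ (Fin N)}

lemma mcOp_neg (f : EuclideanSpace ℝ (Fin N) → ℝ) (x : EuclideanSpace ℝ (Fin N)) :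
    mcOp (fun y => -f y) x = -mcOp f x := by
  have hgradient : ∀ y, gradient (fun y => -f y) y = -gradient f y := fun y => by
    simp [gradient, fderiv_fun_neg]
  simp [mcOp, hgradient, fderiv_fun_neg]

lemma mcOp_paraboloid {S : EuclideanSpace ℝ (Fin N) →L[ℝ] EuclideanSpace ℝ (Fin N)}
    (hS : (S : EuclideanSpace ℝ (Fin N) →ₗ[ℝ] EuclideanSpace ℝ (Fin N)).IsSymmetric)
    (p x : EuclideanSpace ℝ (Fin N)) :
    mcOp (paraboloid p S x) x =
      (areaElement p)⁻¹ *
        (LinearMap.trace ℝ (EuclideanSpace ℝ (Fin N)) S - ⟪S p, p⟫ / areaElement p ^ 2) := by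
  have hfield : HasFDerivAt (fun y => p + S (y - x)) S x := by
    simpa using (S.hasFDerivAt.comp x ((hasFDerivAt_id x).sub_const x)).const_add p
  have hpartial : ∀ i : Fin N, fderiv ℝ (fun y => (√(1 + ‖gradient (paraboloid p S x) y‖ ^ 2))⁻¹ *
      gradient (paraboloid p S x) y i) x (EuclideanSpace.single i 1) =
      (areaElement p)⁻¹ * (S (EuclideanSpace.single i 1) i -
        S p i * p i / areaElement p ^ 2) := by
    intro i
    have hcoord : HasFDerivAt (fun y => (p + S (y - x)) i) ((EuclideanSpace.proj i).comp S) x :=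
      (EuclideanSpace.proj (𝕜 := ℝ) i).hasFDerivAt.comp x hfield
    have hsymm : ⟪p, S (EuclideanSpace.single i 1)⟫ = S p i := by
      simpa [EuclideanSpace.inner_single_right] using (hS p (EuclideanSpace.single i 1)).symm
    simp only [gradient_paraboloid hS]
    have hprod : HasFDerivAt (fun y => (√(1 + ‖p + S (y - x)‖ ^ 2))⁻¹ * (p + S (y - x)) i) _ x :=
      (hasFDerivAt_inv_areaElement hfield).mul hcoord
    rw [hprod.fderiv]
    simp only [sub_self, map_zero, add_zero, add_apply, smul_apply,
      ContinuousLinearMap.comp_apply, PiLp.proj_apply, smul_eq_mul, coe_innerSL_apply, hsymm]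
    field_simp [(areaElement_pos p).ne']
    ring
  have htrace : LinearMap.trace ℝ _ (S : EuclideanSpace ℝ (Fin N) →ₗ[ℝ] _) =
      ∑ i, S (EuclideanSpace.single i 1) i := by
    simp [LinearMap.trace_eq_sum_inner _ (EuclideanSpace.basisFun (Fin N) ℝ),
      EuclideanSpace.inner_single_left]
  have hinner : ⟪S p, p⟫ = ∑ i, S p i * p i := by
    simp [PiLp.inner_apply, mul_comm]
  rw [mcOp, Finset.sum_congr rfl fun i _ => hpartial i, ← Finset.mul_sum,
    Finset.sum_sub_distrib, ← Finset.sum_div, htrace, hinner]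

lemma IsViscositySupersol.neg (hu : IsViscositySupersol U H u) :
    IsViscositySubsol U (fun x => -H x) (fun x => -u x) := by
  intro φ hφ x hx hmax
  have hmin : IsLocalMinOn (fun y => u y - -φ y) U x := by
    filter_upwards [hmax] with y hy
    linarith
  have := hu _ hφ.neg x hx hmin
  rw [mcOp_neg] at this
  linarith

lemma IsViscositySubsol.le_sum_of_hasSuperjetAt {Q : EuclideanSpace ℝ (Fin N) → ℝ}
    (hv : IsViscositySubsol U H v) (hx : x ∈ U) (hQ : HasSuperjetAt v (fun h => ⟪p, h⟫) Q x)
    {ι : Type*} [Fintype ι] (b : OrthonormalBasis ι ℝ (EuclideanSpace ℝ (Fin N))) :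
    areaElement p * (N * H x) ≤ ∑ i, Q (invSqrtMetric p (b i)) := by
  set C := ∑ i, ‖invSqrtMetric p (b i)‖ ^ 2
  have hε : ∀ ε > 0, areaElement p * (N * H x) ≤ ∑ i, Q (invSqrtMetric p (b i)) + ε * C := by
    intro ε hε
    obtain ⟨S, hS, hSQ, hle⟩ := hQ.exists_paraboloid hε
    have hmax : IsLocalMaxOn (fun y => v y - paraboloid p S x y) U x := by
      filter_upwards [nhdsWithin_le_nhds hle] with y hy
      linarith [show 0 ≤ ε / 4 * ‖y - x‖ ^ 2 by positivity]
    have htest := hv _ (contDiff_paraboloid p S x).contDiffOn x hx hmax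
    rw [mcOp_paraboloid hS, ← sum_inner_map_invSqrtMetric p S b, ge_iff_le,
      le_inv_mul_iff₀ (areaElement_pos p)] at htest
    simpa only [hSQ, Finset.sum_add_distrib, ← Finset.mul_sum] using htest
  have hlim : Tendsto (fun ε : ℝ => ∑ i, Q (invSqrtMetric p (b i)) + ε * C) (𝓝[>] 0)
      (𝓝 (∑ i, Q (invSqrtMetric p (b i)))) :=
    Tendsto.mono_left (Continuous.tendsto' (by fun_prop) _ _ (by simp)) nhdsWithin_le_nhds
  exact ge_of_tendsto hlim (eventually_mem_of_tendsto_nhdsWithin tendsto_id |>.mono hε)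

lemma IsViscositySubsol.add_le_sum_of_hasSuperjetAt_prod
    {Q : EuclideanSpace ℝ (Fin N) × EuclideanSpace ℝ (Fin N) → ℝ}
    (hU₁ : IsOpen U₁) (hU₂ : IsOpen U₂) (hH₁ : ContinuousOn H₁ U₁) (hH₂ : ContinuousOn H₂ U₂)
    (hv : IsViscositySubsol U₁ H₁ v) (hw : IsViscositySubsol U₂ H₂ w)
    (hv_usc : UpperSemicontinuousOn v U₁) (hw_usc : UpperSemicontinuousOn w U₂)
    (hx : x ∈ U₁) (hy : y ∈ U₂)
    (hQ : HasSuperjetAt (fun z : EuclideanSpace ℝ (Fin N) × EuclideanSpace ℝ (Fin N) =>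
      v z.1 + w z.2) (fun h => ⟪p, h.1⟫ + ⟪q, h.2⟫) Q (x, y))
    {ι : Type*} [Fintype ι] (b c : OrthonormalBasis ι ℝ (EuclideanSpace ℝ (Fin N))) :
    areaElement p * (N * H₁ x) + areaElement q * (N * H₂ y) ≤
      ∑ i, Q (invSqrtMetric p (b i), invSqrtMetric q (c i)) := by
  have hseq := fun n : ℕ => hQ.exists_of_prod (hU₁.mem_nhds hx) hv_usc (hU₂.mem_nhds hy) hw_usc
    (Nat.one_div_pos_of_nat (α := ℝ) (n := n))
  choose x' p' y' q' Q₁ Q₂ hx' hp' hy' hq' hQ₁ hQ₂ hle using hseq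
  have hlim : ∀ {z : ℕ → EuclideanSpace ℝ (Fin N)} {z₀}, (∀ n, ‖z n - z₀‖ < 1 / ((n : ℝ) + 1)) →
      Tendsto z atTop (𝓝 z₀) := fun hz => tendsto_iff_norm_sub_tendsto_zero.mpr
    (squeeze_zero (fun _ => norm_nonneg _) (fun n => (hz n).le)
      tendsto_one_div_add_atTop_nhds_zero_nat)
  have hcurvature : Tendsto
      (fun n => areaElement (p' n) * (N * H₁ (x' n)) + areaElement (q' n) * (N * H₂ (y' n))) atTop
      (𝓝 (areaElement p * (N * H₁ x) + areaElement q * (N * H₂ y))) :=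
    ((continuous_areaElement.continuousAt.tendsto.comp (hlim hp')).mul
      (((hH₁.continuousAt (hU₁.mem_nhds hx)).tendsto.comp (hlim hx')).const_mul _)).add
    ((continuous_areaElement.continuousAt.tendsto.comp (hlim hq')).mul
      (((hH₂.continuousAt (hU₂.mem_nhds hy)).tendsto.comp (hlim hy')).const_mul _))
  have hbound : Tendsto (fun n : ℕ => ∑ i, (Q (invSqrtMetric (p' n) (b i),
      invSqrtMetric (q' n) (c i)) + 1 / ((n : ℝ) + 1) *
        (‖invSqrtMetric (p' n) (b i)‖ ^ 2 + ‖invSqrtMetric (q' n) (c i)‖ ^ 2))) atTop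
      (𝓝 (∑ i, (Q (invSqrtMetric p (b i), invSqrtMetric q (c i)) + 0 *
        (‖invSqrtMetric p (b i)‖ ^ 2 + ‖invSqrtMetric q (c i)‖ ^ 2)))) := by
    refine tendsto_finsetSum _ fun i _ => ?_
    have hb := (continuous_invSqrtMetric_apply (b i)).continuousAt.tendsto.comp (hlim hp')
    have hc := (continuous_invSqrtMetric_apply (c i)).continuousAt.tendsto.comp (hlim hq')
    exact ((hQ.quadratic.continuous.tendsto _).comp (hb.prodMk_nhds hc)).add
      (tendsto_one_div_add_atTop_nhds_zero_nat.mul ((hb.norm.pow 2).add (hc.norm.pow 2)))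
  have hlimit := le_of_tendsto_of_tendsto hcurvature hbound ?_
  · simpa only [zero_mul, add_zero] using hlimit
  filter_upwards [(hlim hx').eventually_mem (hU₁.mem_nhds hx),
    (hlim hy').eventually_mem (hU₂.mem_nhds hy)] with n hxn hyn
  calc _ ≤ ∑ i, Q₁ n (invSqrtMetric (p' n) (b i)) + ∑ i, Q₂ n (invSqrtMetric (q' n) (c i)) :=
        add_le_add (hv.le_sum_of_hasSuperjetAt hxn (hQ₁ n) b)
          (hw.le_sum_of_hasSuperjetAt hyn (hQ₂ n) c)
    _ ≤ _ := by
        rw [← Finset.sum_add_distrib]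
        exact Finset.sum_le_sum fun i _ => hle n _ _

/-- A lower semicontinuous viscosity supersolution `u` and an upper semicontinuous viscosity
subsolution `v` of `M = N H` on the open set `U`, with `H` continuous. -/
structure IsComparisonPair (U : Set (EuclideanSpace ℝ (Fin N)))
    (H u v : EuclideanSpace ℝ (Fin N) → ℝ) : Prop where
  isOpen : IsOpen U
  continuousOn : ContinuousOn H U
  supersol : IsViscositySupersol U H u
  subsol : IsViscositySubsol U H v
  lowerSemicontinuousOn : LowerSemicontinuousOn u U
  upperSemicontinuousOn : UpperSemicontinuousOn v U

theorem IsComparisonPair.sub_le_sum_of_hasSuperjetAt (h : IsComparisonPair U H u v)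
    (hx : x ∈ U) (hy : y ∈ U) {Q : EuclideanSpace ℝ (Fin N) × EuclideanSpace ℝ (Fin N) → ℝ}
    (hQ : HasSuperjetAt (fun z : EuclideanSpace ℝ (Fin N) × EuclideanSpace ℝ (Fin N) =>
      v z.1 - u z.2) (fun h => ⟪p, h.1⟫ - ⟪q, h.2⟫) Q (x, y))
    {B : EuclideanSpace ℝ (Fin N) →ₗ[ℝ] EuclideanSpace ℝ (Fin N)}
    (hB : ∀ a, graphNormSq q (B a) = graphNormSq p a)
    {ι : Type*} [Fintype ι] (b : OrthonormalBasis ι ℝ (EuclideanSpace ℝ (Fin N))) :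
    areaElement p * (N * H x) - areaElement q * (N * H y) ≤
      ∑ i, Q (invSqrtMetric p (b i), B (invSqrtMetric p (b i))) := by
  have hu_neg : UpperSemicontinuousOn (fun y => -u y) U := fun y hy c hc => by
    filter_upwards [h.lowerSemicontinuousOn y hy (-c) (by linarith)] with z hz
    linarith
  obtain ⟨c, hc⟩ := exists_orthonormalBasis_invSqrtMetric_eq
    (q := -q) (fun a => (graphNormSq_neg q (B a)).trans (hB a)) b
  have := h.subsol.add_le_sum_of_hasSuperjetAt_prod (q := -q) h.isOpen h.isOpen h.continuousOn
    h.continuousOn.neg h.supersol.neg h.upperSemicontinuousOn hu_neg hx hy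
    (by simpa only [inner_neg_left, ← sub_eq_add_neg] using hQ) b c
  simp only [hc, areaElement_neg, Pi.neg_apply] at this
  linarith

end MeanCurvature

/-! ### Isometries between graph metrics -/

section GraphIsometries

variable {V : Type*} [NormedAddCommGroup V]

lemma abs_areaElement_sub_le (p q : V) : |areaElement p - areaElement q| ≤ ‖p - q‖ := by
  have hnorm : ∀ p : V, areaElement p = ‖WithLp.toLp 2 ((1 : ℝ), p)‖ := fun p => by
    simp [WithLp.prod_norm_eq_of_L2, areaElement]
  have hsub : ‖WithLp.toLp 2 ((1 : ℝ), p) - WithLp.toLp 2 ((1 : ℝ), q)‖ = ‖p - q‖ := by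
    simp [WithLp.prod_norm_eq_of_L2]
  rw [hnorm, hnorm, ← hsub]
  exact abs_norm_sub_norm_le _ _

variable [InnerProductSpace ℝ V]

lemma areaElement_smul_of_norm_eq_one {e : V} (he : ‖e‖ = 1) (c : ℝ) :
    areaElement (c • e) = areaElement c := by
  rw [areaElement, areaElement, norm_smul, he, mul_one]

lemma inner_sq_le_areaElement_sq_sub_one {e : V} (he : ‖e‖ = 1) (p : V) :
    ⟪p, e⟫ ^ 2 ≤ areaElement p ^ 2 - 1 := by
  have := real_inner_mul_inner_self_le p e
  rw [real_inner_self_eq_norm_sq e, he, inner_self_eq_areaElement_sq_sub_one] at this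
  linarith

lemma inv_areaElement_sq_le_norm_invSqrtMetric_sq {e : V} (he : ‖e‖ = 1) (p : V) :
    (areaElement p ^ 2)⁻¹ ≤ ‖invSqrtMetric p e‖ ^ 2 := by
  have hW := areaElement_pos p
  rw [norm_invSqrtMetric_sq, he, inv_eq_one_div, div_le_iff₀ (by positivity), sub_mul,
    div_mul_cancel₀ _ (by positivity)]
  linarith [inner_sq_le_areaElement_sq_sub_one he p]

lemma norm_invSqrtMetric_sq_smul_self {e : V} (he : ‖e‖ = 1) (c : ℝ) :
    ‖invSqrtMetric (c • e) e‖ ^ 2 = (areaElement c ^ 2)⁻¹ := by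
  have hW := areaElement_pos c
  have hc : c ^ 2 = areaElement c ^ 2 - 1 := by
    rw [areaElement_sq, Real.norm_eq_abs, sq_abs]
    ring
  rw [norm_invSqrtMetric_sq, areaElement_smul_of_norm_eq_one he, real_inner_smul_left,
    real_inner_self_eq_norm_sq, he, one_pow, mul_one, hc]
  field_simp
  ring

lemma sub_reflection_orthogonal_singleton {e : V} (he : ‖e‖ = 1) (a : V) :
    a - (ℝ ∙ e)ᗮ.reflection a = (2 * ⟪e, a⟫) • e := by
  rw [Submodule.reflection_orthogonal_apply, Submodule.reflection_singleton_apply, he]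
  simp [two_mul, add_smul, two_smul]

lemma graphNormSq_reflection_orthogonal_singleton (e a : V) (c : ℝ) :
    graphNormSq (c • e) ((ℝ ∙ e)ᗮ.reflection a) = graphNormSq (c • e) a := by
  have hinner : ⟪e, (ℝ ∙ e)ᗮ.reflection a⟫ = -⟪e, a⟫ := by
    rw [← (ℝ ∙ e)ᗮ.reflection.inner_map_map e a,
      Submodule.reflection_orthogonalComplement_singleton_eq_neg, inner_neg_left, neg_neg]
  rw [graphNormSq, graphNormSq, LinearIsometryEquiv.norm_map, real_inner_smul_left,
    real_inner_smul_left, hinner]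
  ring

lemma graphNormSq_smul (p a : V) (c : ℝ) : graphNormSq p (c • a) = c ^ 2 * graphNormSq p a := by
  rw [graphNormSq, graphNormSq, norm_smul, real_inner_smul_right, mul_pow, Real.norm_eq_abs,
    sq_abs]
  ring

lemma graphNormSq_sub_smul_self (q e a : V) (t : ℝ) :
    graphNormSq q (a - (t * ⟪e, a⟫ / areaElement q) • q) =
      graphNormSq (q - (areaElement q * t) • e) a - t ^ 2 * ⟪e, a⟫ ^ 2 := by
  have hW := areaElement_pos q
  rw [graphNormSq, graphNormSq, norm_sub_sq_real, inner_sub_right, inner_smul_right,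
    inner_smul_right, norm_smul, mul_pow, Real.norm_eq_abs, sq_abs, inner_sub_left,
    real_inner_smul_left, real_inner_comm q a, ← real_inner_self_eq_norm_sq q,
    inner_self_eq_areaElement_sq_sub_one]
  field_simp
  ring

lemma graphNormSq_add_smul_invSqrtMetric (p e a : V) (c : ℝ) :
    graphNormSq p (a + c • invSqrtMetric p (invSqrtMetric p e)) =
      graphNormSq p a + 2 * c * ⟪e, a⟫ + c ^ 2 * ‖invSqrtMetric p e‖ ^ 2 := by
  have hW := areaElement_pos p
  have hdual : ⟪a, invSqrtMetric p (invSqrtMetric p e)⟫ +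
      ⟪p, a⟫ * ⟪p, invSqrtMetric p (invSqrtMetric p e)⟫ = ⟪e, a⟫ := by
    rw [invSqrtMetric_invSqrtMetric, inner_sub_right, inner_sub_right, real_inner_smul_right,
      real_inner_smul_right, inner_self_eq_areaElement_sq_sub_one, real_inner_comm p a,
      real_inner_comm e a]
    field_simp
    ring
  rw [← graphNormSq_invSqrtMetric p (invSqrtMetric p e), ← hdual]
  simp only [graphNormSq, norm_add_sq_real, inner_add_right, real_inner_smul_right, norm_smul,
    mul_pow, Real.norm_eq_abs, sq_abs]
  ring

lemma inner_invSqrtMetric_invSqrtMetric (p e : V) :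
    ⟪e, invSqrtMetric p (invSqrtMetric p e)⟫ = ‖invSqrtMetric p e‖ ^ 2 := by
  rw [← real_inner_self_eq_norm_sq]
  exact (isSymmetric_invSqrtMetric p e _).symm

lemma exists_coupling_coefficient {h t : ℝ} (hh : 0 < h) (hh1 : h ≤ 1) (ht : t ^ 2 ≤ 1 / 2) :
    ∃ κ, 2 * κ + κ ^ 2 * h = t ^ 2 * (1 + κ * h) ^ 2 ∧
      κ ^ 2 * (h - t ^ 2 * h ^ 2) ≤ t ^ 2 / 2 := by
  have hht : h * t ^ 2 ≤ 1 / 2 := by nlinarith [sq_nonneg t]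
  set g := √(1 - h * t ^ 2)
  have hg_sq : g ^ 2 = 1 - h * t ^ 2 := Real.sq_sqrt (by linarith)
  have hg_pos : 0 < g := Real.sqrt_pos.mpr (by linarith)
  -- The quadratic equation for `κ` reads `(1 + κ h) g = 1`, so `κ = t² / (g (1 + g))`.
  set κ := t ^ 2 / (g * (1 + g)) with hκ
  have hκh : 1 + κ * h = g⁻¹ := by
    rw [hκ]
    field_simp
    linarith
  refine ⟨κ, ?_, ?_⟩
  · have hscaled : h * (2 * κ + κ ^ 2 * h) = h * (t ^ 2 * (1 + κ * h) ^ 2) := by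
      calc h * (2 * κ + κ ^ 2 * h) = (1 + κ * h) ^ 2 - 1 := by ring
        _ = h * (t ^ 2 * (1 + κ * h) ^ 2) := by
          rw [hκh]
          field_simp
          linarith
    exact mul_left_cancel₀ hh.ne' hscaled
  · calc κ ^ 2 * (h - t ^ 2 * h ^ 2) = t ^ 4 * h / (1 + g) ^ 2 := by
          rw [hκ, show h - t ^ 2 * h ^ 2 = h * g ^ 2 by rw [hg_sq]; ring]
          field_simp
      _ ≤ t ^ 4 * 1 / 1 ^ 2 := by
          gcongr
          linarith
      _ ≤ t ^ 2 / 2 := by nlinarith [sq_nonneg t]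

lemma exists_graphNormSq_eq_and_sub_le {q e : V} (he : ‖e‖ = 1) {t : ℝ} (ht : t ^ 2 ≤ 1 / 2) :
    ∃ B : V →ₗ[ℝ] V, ∀ a,
      graphNormSq q (B a) = graphNormSq (q - (areaElement q * t) • e) a ∧
      graphNormSq q (a - B a - (t * ⟪e, a⟫ / areaElement q) • q) ≤ t ^ 2 / 2 * ⟪e, a⟫ ^ 2 := by
  set p := q - (areaElement q * t) • e
  set g := invSqrtMetric p (invSqrtMetric p e)
  set h := ‖invSqrtMetric p e‖ ^ 2 with hh
  have heg : ⟪e, g⟫ = h := inner_invSqrtMetric_invSqrtMetric p e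
  have hg_sq : graphNormSq p g = h := graphNormSq_invSqrtMetric p _
  have hh_pos : 0 < h :=
    (inv_pos.mpr (pow_pos (areaElement_pos p) 2)).trans_le
      (inv_areaElement_sq_le_norm_invSqrtMetric_sq he p)
  have hh_le : h ≤ 1 := by
    rw [hh, norm_invSqrtMetric_sq, he, one_pow]
    exact sub_le_self _ (by positivity)
  obtain ⟨κ, hκ_eq, hκ_le⟩ := exists_coupling_coefficient hh_pos hh_le ht
  let shear : V →ₗ[ℝ] V :=
    LinearMap.id - (t / areaElement q) • (innerSL ℝ e : V →ₗ[ℝ] ℝ).smulRight q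
  let dilation : V →ₗ[ℝ] V := LinearMap.id + κ • (innerSL ℝ e : V →ₗ[ℝ] ℝ).smulRight g
  have hshear : ∀ a, shear a = a - (t * ⟪e, a⟫ / areaElement q) • q := fun a => by
    simp [shear, smul_smul, div_mul_eq_mul_div]
  have hdilation : ∀ a, dilation a = a + (κ * ⟪e, a⟫) • g := fun a => by
    simp [dilation, smul_smul]
  have hshear_sq : ∀ a, graphNormSq q (shear a) = graphNormSq p a - t ^ 2 * ⟪e, a⟫ ^ 2 := by
    intro a
    rw [hshear, graphNormSq_sub_smul_self]
  refine ⟨shear.comp dilation, fun a => ⟨?_, ?_⟩⟩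
  · rw [LinearMap.comp_apply, hshear_sq, hdilation, graphNormSq_add_smul_invSqrtMetric,
      inner_add_right, real_inner_smul_right, heg]
    linear_combination ⟪e, a⟫ ^ 2 * hκ_eq
  · have hdiff : a - shear (dilation a) - (t * ⟪e, a⟫ / areaElement q) • q =
        (-(κ * ⟪e, a⟫)) • shear g := by
      rw [hdilation, map_add, map_smul, hshear a, neg_smul]
      abel
    rw [LinearMap.comp_apply, hdiff, graphNormSq_smul, hshear_sq, hg_sq, heg]
    calc (-(κ * ⟪e, a⟫)) ^ 2 * (h - t ^ 2 * h ^ 2)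
        = κ ^ 2 * (h - t ^ 2 * h ^ 2) * ⟪e, a⟫ ^ 2 := by ring
      _ ≤ t ^ 2 / 2 * ⟪e, a⟫ ^ 2 := by gcongr

end GraphIsometries

/-! ### Doubling of variables -/

lemma upperSemicontinuousOn_sub_prod {X Y : Type*} [TopologicalSpace X] [TopologicalSpace Y]
    {v : X → ℝ} {u : Y → ℝ} {s : Set X} {t : Set Y} (hv : UpperSemicontinuousOn v s)
    (hu : LowerSemicontinuousOn u t) :
    UpperSemicontinuousOn (fun z : X × Y => v z.1 - u z.2) (s ×ˢ t) := by
  have hv' : UpperSemicontinuousOn (fun z : X × Y => v z.1) (s ×ˢ t) :=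
    UpperSemicontinuousOn.comp hv continuous_fst.continuousOn fun _ hz => hz.1
  have hu' : UpperSemicontinuousOn (fun z : X × Y => -u z.2) (s ×ˢ t) := by
    intro z hz c hc
    filter_upwards [LowerSemicontinuousOn.comp hu continuous_snd.continuousOn
      (fun _ hz => hz.2) z hz (-c) (by simp only [Function.comp_apply]; linarith)] with w hw
    simp only [Function.comp_apply] at hw
    linarith
  simpa only [sub_eq_add_neg] using hv'.add hu'

section NearDiagonal

variable {E : Type*} [NormedAddCommGroup E]

/-- The pairs of points of `K` at distance at most `ρ`: the set over which the penalized
difference of a sub- and a supersolution is maximized. -/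
def nearDiagonal (K : Set E) (ρ : ℝ) : Set (E × E) :=
  {z | z ∈ K ×ˢ K ∧ ‖z.1 - z.2‖ ≤ ρ}

variable {K : Set E} {ρ : ℝ}

lemma diag_mem_nearDiagonal {x : E} (hx : x ∈ K) (hρ : 0 ≤ ρ) : (x, x) ∈ nearDiagonal K ρ :=
  ⟨⟨hx, hx⟩, by simpa using hρ⟩

lemma nearDiagonal_mono {ρ' : ℝ} (h : ρ' ≤ ρ) : nearDiagonal K ρ' ⊆ nearDiagonal K ρ :=
  fun _ hz => ⟨hz.1, hz.2.trans h⟩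

lemma isClosed_norm_sub_le (ρ : ℝ) : IsClosed {z : E × E | ‖z.1 - z.2‖ ≤ ρ} :=
  isClosed_le (by fun_prop) continuous_const

lemma isCompact_nearDiagonal (hK : IsCompact K) (ρ : ℝ) : IsCompact (nearDiagonal K ρ) :=
  (hK.prod hK).inter_right (isClosed_norm_sub_le ρ)

lemma nearDiagonal_mem_nhds {z : E × E} (hK₁ : K ∈ 𝓝 z.1) (hK₂ : K ∈ 𝓝 z.2)
    (hz : ‖z.1 - z.2‖ < ρ) : nearDiagonal K ρ ∈ 𝓝 z := by
  have hcont : Continuous fun w : E × E => ‖w.1 - w.2‖ := by fun_prop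
  filter_upwards [prod_mem_nhds hK₁ hK₂, hcont.continuousAt.eventually_lt_const hz] with w hw hwρ
  exact ⟨hw, hwρ.le⟩

lemma exists_pos_forall_mem_prod_of_norm_sub_le {A : Set (E × E)} {U : Set E} (hA : IsCompact A)
    (hU : IsOpen U) (hdiag : ∀ x, (x, x) ∈ A → x ∈ U) :
    ∃ ρ > 0, ∀ z ∈ A, ‖z.1 - z.2‖ ≤ ρ → z ∈ U ×ˢ U := by
  have hcompact : IsCompact (A \ U ×ˢ U) := hA.diff (hU.prod hU)
  have hpos : ∀ z ∈ A \ U ×ˢ U, 0 < ‖z.1 - z.2‖ := by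
    rintro ⟨x, y⟩ ⟨hzA, hzU⟩
    refine norm_pos_iff.mpr (sub_ne_zero.mpr fun (hxy : x = y) => hzU ?_)
    subst hxy
    exact ⟨hdiag x hzA, hdiag x hzA⟩
  obtain ⟨ρ, hρ, hlt⟩ := hcompact.exists_forall_le' (f := fun z : E × E => ‖z.1 - z.2‖)
    (by fun_prop) hpos
  refine ⟨ρ / 2, by positivity, fun z hz hle => ?_⟩
  by_contra hzU
  linarith [hlt z ⟨hz, hzU⟩]

end NearDiagonal

section ComparisonViolation

variable {N : ℕ} {Ω C : Set (EuclideanSpace ℝ (Fin N))} {H u v : EuclideanSpace ℝ (Fin N) → ℝ}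
  {m ρ : ℝ}

/-- The situation to be refuted: the subsolution `v` exceeds the supersolution `u` on `closure Ω`
by the positive maximal amount `m`, and all pairs of points at distance at most `ρ` on which
`v x - u y` is at least `m / 2` lie in the subset `C` of `Ω`. -/
structure ComparisonViolation (Ω C : Set (EuclideanSpace ℝ (Fin N)))
    (H u v : EuclideanSpace ℝ (Fin N) → ℝ) (m ρ : ℝ) : Prop where
  isComparisonPair : IsComparisonPair Ω H u v
  isCompact_closure : IsCompact (closure Ω)
  lowerSemicontinuousOn : LowerSemicontinuousOn u (closure Ω)
  upperSemicontinuousOn : UpperSemicontinuousOn v (closure Ω)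
  gap_pos : 0 < m
  exists_eq : ∃ x ∈ closure Ω, v x - u x = m
  le : ∀ x ∈ closure Ω, v x - u x ≤ m
  radius_pos : 0 < ρ
  subset : C ⊆ Ω
  mem_of_le : ∀ z ∈ nearDiagonal (closure Ω) ρ, m / 2 ≤ v z.1 - u z.2 → z ∈ C ×ˢ C

namespace ComparisonViolation

lemma exists_of_lt (hpair : IsComparisonPair Ω H u v) (hΩ : Bornology.IsBounded Ω)
    (hu : LowerSemicontinuousOn u (closure Ω)) (hv : UpperSemicontinuousOn v (closure Ω))
    (hbdry : ∀ x ∈ frontier Ω, v x ≤ u x) {x₁ : EuclideanSpace ℝ (Fin N)} (hx₁ : x₁ ∈ Ω)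
    (hlt : u x₁ < v x₁) : ∃ C m ρ, IsCompact C ∧ ComparisonViolation Ω C H u v m ρ := by
  have hcompact : IsCompact (closure Ω) := hΩ.isCompact_closure
  have husc := upperSemicontinuousOn_sub_prod hv hu
  have hdiag : UpperSemicontinuousOn (fun x => v x - u x) (closure Ω) :=
    UpperSemicontinuousOn.comp (g := fun x => (x, x)) husc
      (by fun_prop) fun _ hx => ⟨hx, hx⟩
  obtain ⟨x₀, hx₀, hmax⟩ := hdiag.exists_isMaxOn ⟨x₁, subset_closure hx₁⟩ hcompact
  have hpos : 0 < v x₀ - u x₀ := (sub_pos.mpr hlt).trans_le (hmax (subset_closure hx₁))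
  set A := (closure Ω ×ˢ closure Ω) ∩ (fun z => v z.1 - u z.2) ⁻¹' Ici ((v x₀ - u x₀) / 2)
  have hA : IsCompact A := husc.isCompact_inter_preimage_Ici (hcompact.prod hcompact) _
  obtain ⟨ρ, hρ, hmem⟩ := exists_pos_forall_mem_prod_of_norm_sub_le hA hpair.isOpen
    fun x hx => by
      by_contra hxΩ
      have := hbdry x (hpair.isOpen.frontier_eq ▸ ⟨hx.1.1, hxΩ⟩)
      linarith [show (v x₀ - u x₀) / 2 ≤ v x - u x from hx.2]
  have hAρ : IsCompact (A ∩ {z | ‖z.1 - z.2‖ ≤ ρ}) := hA.inter_right (isClosed_norm_sub_le ρ)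
  refine ⟨Prod.fst '' (A ∩ {z | ‖z.1 - z.2‖ ≤ ρ}) ∪ Prod.snd '' (A ∩ {z | ‖z.1 - z.2‖ ≤ ρ}),
    _, ρ, (hAρ.image continuous_fst).union (hAρ.image continuous_snd), hpair, hcompact, hu, hv,
    hpos, ⟨x₀, hx₀, rfl⟩, fun x hx => hmax hx, hρ, ?_, ?_⟩
  · rintro _ (⟨z, hz, rfl⟩ | ⟨z, hz, rfl⟩)
    exacts [(hmem z hz.1 hz.2).1, (hmem z hz.1 hz.2).2]
  · intro z hz hle
    exact ⟨Or.inl ⟨z, ⟨⟨hz.1, hle⟩, hz.2⟩, rfl⟩, Or.inr ⟨z, ⟨⟨hz.1, hle⟩, hz.2⟩, rfl⟩⟩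

lemma of_radius_le {ρ' : ℝ} (h : ComparisonViolation Ω C H u v m ρ) (hρ' : 0 < ρ')
    (hle : ρ' ≤ ρ) : ComparisonViolation Ω C H u v m ρ' where
  __ := h
  radius_pos := hρ'
  mem_of_le z hz := h.mem_of_le z (nearDiagonal_mono hle hz)

lemma exists_forall_sub_le (h : ComparisonViolation Ω C H u v m ρ) :
    ∃ M, ∀ z ∈ nearDiagonal (closure Ω) ρ, v z.1 - u z.2 ≤ M := by
  obtain ⟨M, hM⟩ := ((upperSemicontinuousOn_sub_prod h.upperSemicontinuousOn
    h.lowerSemicontinuousOn).mono fun _ hz => hz.1).bddAbove_of_isCompact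
      (isCompact_nearDiagonal h.isCompact_closure ρ)
  exact ⟨M, fun z hz => hM (mem_image_of_mem _ hz)⟩

lemma exists_isMaxOn_sub (h : ComparisonViolation Ω C H u v m ρ)
    {Φ : EuclideanSpace ℝ (Fin N) × EuclideanSpace ℝ (Fin N) → ℝ} (hΦ : Continuous Φ)
    (hdiag : ∀ x, Φ (x, x) ≤ 0) :
    ∃ z ∈ nearDiagonal (closure Ω) ρ,
      IsMaxOn (fun z => v z.1 - u z.2 - Φ z) (nearDiagonal (closure Ω) ρ) z ∧
        m ≤ v z.1 - u z.2 - Φ z := by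
  obtain ⟨x₀, hx₀, hm⟩ := h.exists_eq
  have hmem := diag_mem_nearDiagonal hx₀ h.radius_pos.le
  have husc : UpperSemicontinuousOn (fun z => v z.1 - u z.2 - Φ z)
      (nearDiagonal (closure Ω) ρ) := by
    simpa only [sub_eq_add_neg] using
      ((upperSemicontinuousOn_sub_prod h.upperSemicontinuousOn h.lowerSemicontinuousOn).mono
        fun _ hz => hz.1).add (hΦ.fun_neg.upperSemicontinuous.upperSemicontinuousOn _)
  obtain ⟨z, hz, hmax⟩ :=
    husc.exists_isMaxOn ⟨_, hmem⟩ (isCompact_nearDiagonal h.isCompact_closure ρ)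
  have hx₀z : v x₀ - u x₀ - Φ (x₀, x₀) ≤ v z.1 - u z.2 - Φ z := hmax hmem
  exact ⟨z, hz, hmax, by linarith [hdiag x₀]⟩

lemma isLocalMax_of_isMaxOn (h : ComparisonViolation Ω C H u v m ρ)
    {f : EuclideanSpace ℝ (Fin N) × EuclideanSpace ℝ (Fin N) → ℝ}
    {z : EuclideanSpace ℝ (Fin N) × EuclideanSpace ℝ (Fin N)} (hzC : z ∈ C ×ˢ C)
    (hzρ : ‖z.1 - z.2‖ < ρ) (hmax : IsMaxOn f (nearDiagonal (closure Ω) ρ) z) :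
    IsLocalMax f z := by
  have hnhds : ∀ x ∈ C, closure Ω ∈ 𝓝 x := fun x hx =>
    mem_of_superset (h.isComparisonPair.isOpen.mem_nhds (h.subset hx)) subset_closure
  exact hmax.isLocalMax (nearDiagonal_mem_nhds (hnhds _ hzC.1) (hnhds _ hzC.2) hzρ)

end ComparisonViolation

end ComparisonViolation

/-! ### Step one: a linear bound near the diagonal -/

lemma hasSecondJetAt_comp_norm_sub {V : Type*} [NormedAddCommGroup V] [InnerProductSpace ℝ V]
    {φ φ' : ℝ → ℝ} {φ'' : ℝ} {x y : V} (hxy : x ≠ y)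
    (hφ : ∀ᶠ t in 𝓝 ‖x - y‖, HasDerivAt φ (φ' t) t) (hφ' : HasDerivAt φ' φ'' ‖x - y‖) :
    HasSecondJetAt (fun z : V × V => φ ‖z.1 - z.2‖)
      (fun h => φ' ‖x - y‖ * (⟪x - y, h.1 - h.2⟫ / ‖x - y‖))
      (fun h => φ' ‖x - y‖ *
        ((‖h.1 - h.2‖ ^ 2 - (⟪x - y, h.1 - h.2⟫ / ‖x - y‖) ^ 2) / ‖x - y‖) +
          φ'' * (⟪x - y, h.1 - h.2⟫ / ‖x - y‖) ^ 2) (x, y) :=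
  HasSecondJetAt.comp_clm
    (ContinuousLinearMap.fst ℝ V V - ContinuousLinearMap.snd ℝ V V) (y := (x, y))
    ((hasSecondJetAt_norm (sub_ne_zero.mpr hxy)).scomp hφ hφ')

/-- The concave penalty of step one; its second derivative is `-β` times the square of its first
derivative, which is what defeats the error term coming from the Lipschitz constant of `H`. -/
noncomputable def logPenalty (β τ r : ℝ) : ℝ :=
  β⁻¹ * Real.log (1 + r / τ)

section LogPenalty

variable {β τ r : ℝ}

lemma hasDerivAt_logPenalty (β : ℝ) (hτ : 0 < τ) (hr : -τ < r) :
    HasDerivAt (logPenalty β τ) (β * (τ + r))⁻¹ r := by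
  have hsum : 0 < τ + r := by linarith
  have hpos : 1 + r / τ ≠ 0 := by
    rw [← div_self hτ.ne', ← add_div]
    positivity
  refine (((((hasDerivAt_id r).div_const τ).const_add 1).log hpos).const_mul β⁻¹).congr_deriv ?_
  rw [mul_inv]
  simp only [id]
  field_simp

lemma hasDerivAt_inv_mul_add (hβ : β ≠ 0) (hr : τ + r ≠ 0) :
    HasDerivAt (fun t => (β * (τ + t))⁻¹) (-β * (β * (τ + r))⁻¹ ^ 2) r := by
  refine ((((hasDerivAt_id r).const_add τ).const_mul β).fun_inv
    (mul_ne_zero hβ hr)).congr_deriv ?_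
  simp only [id]
  field_simp

lemma logPenalty_nonneg (hβ : 0 ≤ β) (hτ : 0 ≤ τ) (hr : 0 ≤ r) : 0 ≤ logPenalty β τ r :=
  mul_nonneg (inv_nonneg.mpr hβ) (Real.log_nonneg (by linarith [div_nonneg hr hτ]))

lemma logPenalty_zero (β τ : ℝ) : logPenalty β τ 0 = 0 := by
  simp [logPenalty]

lemma logPenalty_le (hβ : 0 ≤ β) (hτ : 0 ≤ τ) (hr : 0 ≤ r) :
    logPenalty β τ r ≤ (β * τ)⁻¹ * r := by
  have hlog := Real.log_le_sub_one_of_pos (show 0 < 1 + r / τ by positivity)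
  calc logPenalty β τ r ≤ β⁻¹ * (r / τ) := by
        unfold logPenalty
        gcongr
        linarith
    _ = (β * τ)⁻¹ * r := by rw [mul_inv]; ring

lemma continuous_logPenalty_norm_sub {E : Type*} [NormedAddCommGroup E] (β : ℝ) (hτ : 0 ≤ τ) :
    Continuous fun z : E × E => logPenalty β τ ‖z.1 - z.2‖ :=
  continuous_const.mul (Continuous.log (by fun_prop) fun z => by positivity)

lemma exists_lt_logPenalty (hβ : 0 < β) (hr : 0 < r) (M : ℝ) {ε : ℝ} (hε : 0 < ε) :
    ∃ τ > 0, τ ≤ ε ∧ M < logPenalty β τ r := by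
  refine ⟨min ε (r / Real.exp (β * M)), by positivity, min_le_left _ _, ?_⟩
  have hτ : 0 < min ε (r / Real.exp (β * M)) := by positivity
  have hexp : Real.exp (β * M) ≤ r / min ε (r / Real.exp (β * M)) := by
    rw [le_div_comm₀ (Real.exp_pos _) hτ]
    exact min_le_right _ _
  rw [logPenalty, lt_inv_mul_iff₀ hβ, Real.lt_log_iff_exp_lt (by positivity)]
  linarith

end LogPenalty

lemma four_mul_neg_mul_sq_div_areaElement_sq_lt {K c r : ℝ} (hK : 0 ≤ K) (hr : 0 ≤ r) (hc : 1 ≤ c)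
    (hrc : (1 + K) * (r * c) ≤ 1) :
    4 * (-(1 + K) * c ^ 2) / areaElement c ^ 2 < -(areaElement c * (K * r)) := by
  have hWpos := areaElement_pos c
  have hW : areaElement c ≤ 3 / 2 * c := by
    refine abs_le_of_sq_le_sq' ?_ (by positivity) |>.2
    rw [areaElement_sq, Real.norm_eq_abs, sq_abs]
    nlinarith
  have hcube : areaElement c ^ 3 * (K * r) < 4 * (1 + K) * c ^ 2 := by
    calc areaElement c ^ 3 * (K * r) ≤ (3 / 2 * c) ^ 3 * (K * r) := by gcongr
      _ = 27 / 8 * c ^ 2 * (K * (r * c)) := by ring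
      _ ≤ 27 / 8 * c ^ 2 * ((1 + K) * (r * c)) := by gcongr; linarith
      _ ≤ 27 / 8 * c ^ 2 * 1 := by gcongr
      _ < 4 * (1 + K) * c ^ 2 := by nlinarith [mul_nonneg hK (sq_nonneg c)]
  rw [div_lt_iff₀ (by positivity)]
  linarith

section LinearBound

variable {N : ℕ}

lemma IsComparisonPair.sub_le_of_isLocalMax_radial {U : Set (EuclideanSpace ℝ (Fin N))}
    {H u v : EuclideanSpace ℝ (Fin N) → ℝ} (h : IsComparisonPair U H u v)
    {x y : EuclideanSpace ℝ (Fin N)} (hx : x ∈ U) (hy : y ∈ U) (hxy : x ≠ y)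
    {φ φ' : ℝ → ℝ} {φ'' : ℝ} (hφ : ∀ᶠ t in 𝓝 ‖x - y‖, HasDerivAt φ (φ' t) t)
    (hφ' : HasDerivAt φ' φ'' ‖x - y‖)
    (hmax : IsLocalMax (fun z : EuclideanSpace ℝ (Fin N) × EuclideanSpace ℝ (Fin N) =>
      v z.1 - u z.2 - φ ‖z.1 - z.2‖) (x, y)) :
    areaElement (φ' ‖x - y‖) * (N * (H x - H y)) ≤
      4 * φ'' / areaElement (φ' ‖x - y‖) ^ 2 := by
  obtain ⟨c, hc⟩ : ∃ c, φ' ‖x - y‖ = c := ⟨_, rfl⟩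
  obtain ⟨e, he, hinner⟩ : ∃ e, ‖e‖ = 1 ∧ ∀ a, ⟪x - y, a⟫ / ‖x - y‖ = ⟪e, a⟫ :=
    ⟨‖x - y‖⁻¹ • (x - y), norm_smul_inv_norm (sub_ne_zero.mpr hxy), fun a => by
      rw [real_inner_smul_left, div_eq_inv_mul]⟩
  have hjet := HasSuperjetAt.of_isLocalMax_sub
    (hasSecondJetAt_comp_norm_sub hxy hφ hφ').hasSuperjetAt hmax
  obtain ⟨B, hB⟩ : ∃ B : EuclideanSpace ℝ (Fin N) →ₗ[ℝ] EuclideanSpace ℝ (Fin N),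
      ∀ a, B a = (ℝ ∙ e)ᗮ.reflection a := ⟨(ℝ ∙ e)ᗮ.reflection.toLinearMap, fun _ => rfl⟩
  have hsub : ∀ a, a - B a = (2 * ⟪e, a⟫) • e := fun a => by
    rw [hB, sub_reflection_orthogonal_singleton he]
  have hlinear : ∀ w : EuclideanSpace ℝ (Fin N) × EuclideanSpace ℝ (Fin N),
      c * ⟪e, w.1 - w.2⟫ = ⟪c • e, w.1⟫ - ⟪c • e, w.2⟫ := fun w => by
    rw [real_inner_smul_left, real_inner_smul_left, inner_sub_right, mul_sub]
  simp only [hc, hinner, hlinear] at hjet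
  have hquadratic : ∀ a, c * ((‖a - B a‖ ^ 2 - ⟪e, a - B a⟫ ^ 2) / ‖x - y‖) +
      φ'' * ⟪e, a - B a⟫ ^ 2 = 4 * φ'' * ⟪e, a⟫ ^ 2 := fun a => by
    rw [hsub, norm_smul, real_inner_smul_right, real_inner_self_eq_norm_sq, he, Real.norm_eq_abs,
      mul_one, sq_abs]
    ring
  have hsum := h.sub_le_sum_of_hasSuperjetAt hx hy hjet
    (fun a => hB a ▸ graphNormSq_reflection_orthogonal_singleton e a c)
    (stdOrthonormalBasis ℝ (EuclideanSpace ℝ (Fin N)))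
  simp only [hquadratic] at hsum
  rw [← Finset.mul_sum, sum_inner_invSqrtMetric_sq, norm_invSqrtMetric_sq_smul_self he,
    areaElement_smul_of_norm_eq_one he, ← div_eq_mul_inv] at hsum
  rw [hc]
  linarith

namespace ComparisonViolation

variable {Ω C : Set (EuclideanSpace ℝ (Fin N))} {H u v : EuclideanSpace ℝ (Fin N) → ℝ}
  {m ρ τ : ℝ} {L : NNReal}

lemma fst_eq_snd_of_isMaxOn_logPenalty (h : ComparisonViolation Ω C H u v m ρ)
    (hL : LipschitzOnWith L H C) (hτ : 0 < τ) (hρτ : (1 + N * L) * (τ + ρ) ≤ 1)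
    {z : EuclideanSpace ℝ (Fin N) × EuclideanSpace ℝ (Fin N)} (hzC : z ∈ C ×ˢ C)
    (hzρ : ‖z.1 - z.2‖ < ρ)
    (hmax : IsMaxOn (fun z => v z.1 - u z.2 - logPenalty (1 + N * L) τ ‖z.1 - z.2‖)
      (nearDiagonal (closure Ω) ρ) z) : z.1 = z.2 := by
  by_contra hne
  set r := ‖z.1 - z.2‖
  have hr : 0 < r := norm_pos_iff.mpr (sub_ne_zero.mpr hne)
  set β : ℝ := 1 + N * L
  have hβ : 0 < β := by positivity
  set c := (β * (τ + r))⁻¹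
  have hmain := h.isComparisonPair.sub_le_of_isLocalMax_radial (h.subset hzC.1) (h.subset hzC.2)
    hne (φ := logPenalty β τ) (φ' := fun t => (β * (τ + t))⁻¹)
    ((lt_mem_nhds (by linarith)).mono fun _ => hasDerivAt_logPenalty β hτ)
    (hasDerivAt_inv_mul_add hβ.ne' (by positivity)) (h.isLocalMax_of_isMaxOn hzC hzρ hmax)
  have hc : 1 ≤ c := (one_le_inv₀ (by positivity)).mpr (le_trans (by gcongr) hρτ)
  have hrc : β * (r * c) ≤ 1 := by
    rw [← mul_assoc, ← div_eq_mul_inv, div_le_one (by positivity)]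
    gcongr
    linarith
  have hcontra := four_mul_neg_mul_sq_div_areaElement_sq_lt
    (by positivity : (0 : ℝ) ≤ N * L) hr.le hc hrc
  have hH : -(L * r) ≤ H z.1 - H z.2 := (abs_le.mp (hL.norm_sub_le hzC.1 hzC.2)).1
  have hlower : -(areaElement c * (N * L * r)) ≤ areaElement c * (N * (H z.1 - H z.2)) := by
    have := areaElement_pos c
    calc -(areaElement c * (N * L * r)) = areaElement c * (N * -(L * r)) := by ring
      _ ≤ _ := by gcongr
  linarith

theorem exists_forall_sub_le_add_mul_norm (h : ComparisonViolation Ω C H u v m ρ)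
    (hL : LipschitzOnWith L H C) :
    ∃ A ≥ 0, ∃ ρ', ComparisonViolation Ω C H u v m ρ' ∧
      ∀ z ∈ nearDiagonal (closure Ω) ρ', v z.1 - u z.2 ≤ m + A * ‖z.1 - z.2‖ := by
  set β : ℝ := 1 + N * L
  have hβ : 0 < β := by positivity
  replace h := h.of_radius_le (lt_min h.radius_pos (by positivity : 0 < (2 * β)⁻¹))
    (min_le_left _ _)
  set ρ' := min ρ (2 * β)⁻¹
  obtain ⟨M, hM⟩ := h.exists_forall_sub_le
  obtain ⟨τ, hτ, hτβ, hMτ⟩ :=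
    exists_lt_logPenalty hβ h.radius_pos (M - m) (by positivity : 0 < (2 * β)⁻¹)
  have hρτ : β * (τ + ρ') ≤ 1 :=
    calc β * (τ + ρ') ≤ β * ((2 * β)⁻¹ + (2 * β)⁻¹) := by gcongr; exact min_le_right _ _
      _ = 1 := by field_simp; norm_num
  have hnonneg : ∀ z : EuclideanSpace ℝ (Fin N) × EuclideanSpace ℝ (Fin N),
      0 ≤ logPenalty β τ ‖z.1 - z.2‖ := fun _ => logPenalty_nonneg hβ.le hτ.le (norm_nonneg _)
  obtain ⟨z, hz, hmax, hm⟩ := h.exists_isMaxOn_sub (continuous_logPenalty_norm_sub β hτ.le)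
    fun x => by simp [logPenalty_zero]
  have hzρ : ‖z.1 - z.2‖ < ρ' := by
    refine lt_of_le_of_ne hz.2 fun heq => ?_
    rw [heq] at hm
    linarith [hM z hz]
  have hzC := h.mem_of_le z hz (by linarith [hnonneg z, h.gap_pos])
  have heq := h.fst_eq_snd_of_isMaxOn_logPenalty hL hτ hρτ hzC hzρ hmax
  have hvalue : v z.1 - u z.2 ≤ m := heq ▸ h.le z.1 hz.1.1
  refine ⟨(β * τ)⁻¹, by positivity, ρ', h, fun w hw => ?_⟩
  have hwz : v w.1 - u w.2 - logPenalty β τ ‖w.1 - w.2‖ ≤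
    v z.1 - u z.2 - logPenalty β τ ‖z.1 - z.2‖ := hmax hw
  linarith [hnonneg z, logPenalty_le hβ.le hτ.le (norm_nonneg (w.1 - w.2))]

end ComparisonViolation

end LinearBound

/-! ### Step two: the spherical cap penalty -/

section CapProfile

variable {P r s : ℝ}

/-- The lower half of a circle of radius `s`, continued linearly with slope `P` from the point
where its slope is `P`, as a function of the distance `r` to the axis. -/
noncomputable def capProfile (P r s : ℝ) : ℝ :=
  -√(s ^ 2 - min r (P / areaElement P * s) ^ 2) + P * (r - min r (P / areaElement P * s))

lemma areaElement_real_sq (P : ℝ) : areaElement P ^ 2 = 1 + P ^ 2 := by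
  rw [areaElement_sq, Real.norm_eq_abs, sq_abs]

lemma div_areaElement_lt_one (P : ℝ) : P / areaElement P < 1 := by
  rw [div_lt_one (areaElement_pos P)]
  exact lt_of_pow_lt_pow_left₀ 2 (areaElement_pos P).le (by linarith [areaElement_real_sq P])

lemma capProfile_of_le (h : r ≤ P / areaElement P * s) :
    capProfile P r s = -√(s ^ 2 - r ^ 2) := by
  rw [capProfile, min_eq_left h, sub_self, mul_zero, add_zero]

lemma capProfile_of_ge (hs : 0 ≤ s) (h : P / areaElement P * s ≤ r) :
    capProfile P r s = P * r - areaElement P * s := by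
  have hW := areaElement_pos P
  have hsq : s ^ 2 - (P / areaElement P * s) ^ 2 = (s / areaElement P) ^ 2 := by
    field_simp
    rw [areaElement_real_sq]
    ring
  rw [capProfile, min_eq_right h, hsq, Real.sqrt_sq (by positivity)]
  field_simp
  linear_combination s * areaElement_real_sq P

lemma mul_sub_areaElement_mul_le_neg_sqrt (hr : 0 ≤ r) (hrs : r ≤ s) :
    P * r - areaElement P * s ≤ -√(s ^ 2 - r ^ 2) := by
  have hW := areaElement_pos P
  set g := √(s ^ 2 - r ^ 2)
  have hg : g ^ 2 = s ^ 2 - r ^ 2 := Real.sq_sqrt (by nlinarith)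
  have hcauchy : (areaElement P * s) ^ 2 - (P * r + g) ^ 2 = (r - P * g) ^ 2 := by
    rw [mul_pow, areaElement_real_sq, show s ^ 2 = g ^ 2 + r ^ 2 by linarith]
    ring
  have := abs_le_of_sq_le_sq' (sub_nonneg.mp (hcauchy ▸ sq_nonneg (r - P * g)))
    (mul_nonneg hW.le (hr.trans hrs))
  linarith [this.2]

lemma mul_sub_areaElement_mul_le_capProfile (hs : 0 ≤ s) (hr : 0 ≤ r) :
    P * r - areaElement P * s ≤ capProfile P r s := by
  rcases le_total r (P / areaElement P * s) with h | h
  · rw [capProfile_of_le h]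
    exact mul_sub_areaElement_mul_le_neg_sqrt hr
      (h.trans (mul_le_of_le_one_left hs (div_areaElement_lt_one P).le))
  · rw [capProfile_of_ge hs h]

lemma capProfile_le_neg_sqrt (hr : 0 ≤ r) (hrs : r ≤ s) :
    capProfile P r s ≤ -√(s ^ 2 - r ^ 2) := by
  rcases le_total r (P / areaElement P * s) with h | h
  · rw [capProfile_of_le h]
  · rw [capProfile_of_ge (hr.trans hrs) h]
    exact mul_sub_areaElement_mul_le_neg_sqrt hr hrs

lemma capProfile_zero (hP : 0 ≤ P) (hs : 0 ≤ s) : capProfile P 0 s = -s := by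
  have hW := areaElement_pos P
  rw [capProfile_of_le (by positivity), zero_pow two_ne_zero, sub_zero, Real.sqrt_sq hs]

end CapProfile

section CapPenalty

variable {V : Type*} [NormedAddCommGroup V] [InnerProductSpace ℝ V]
  {P δ lam s ω : ℝ} {e x y : V}

/-- The radius of the spherical cap based at `x`, varying exponentially in the direction `e`. -/
noncomputable def expRadius (δ lam : ℝ) (e x : V) : ℝ := δ * Real.exp (lam * ⟪e, x⟫)

lemma expRadius_pos (hδ : 0 < δ) : 0 < expRadius δ lam e x :=
  mul_pos hδ (Real.exp_pos _)

lemma continuous_expRadius (δ lam : ℝ) (e : V) : Continuous (expRadius δ lam e) := by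
  unfold expRadius
  fun_prop

lemma exists_forall_expRadius_le {K : Set V} (hK : IsCompact K) (lam : ℝ) (e : V) {ε : ℝ}
    (hε : 0 < ε) : ∃ δ > 0, ∀ x ∈ K, expRadius δ lam e x ≤ ε := by
  obtain ⟨M, hM⟩ := hK.exists_bound_of_continuousOn (continuous_expRadius 1 lam e).continuousOn
  refine ⟨ε / (|M| + 1), by positivity, fun x hx => ?_⟩
  have hexp : Real.exp (lam * ⟪e, x⟫) ≤ |M| + 1 := by
    have := (le_abs_self _).trans ((hM x hx).trans (le_abs_self M))
    rw [expRadius, one_mul] at this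
    linarith
  calc expRadius (ε / (|M| + 1)) lam e x ≤ ε / (|M| + 1) * (|M| + 1) := by
        unfold expRadius
        gcongr
    _ = ε := div_mul_cancel₀ _ (by positivity)

lemma hasSecondJetAt_expRadius (δ lam : ℝ) (e x : V) :
    HasSecondJetAt (expRadius δ lam e) (fun h => lam * expRadius δ lam e x * ⟪e, h⟫)
      (fun h => lam ^ 2 * expRadius δ lam e x * ⟪e, h⟫ ^ 2) x := by
  have hderiv : ∀ c t, HasDerivAt (fun t => c * Real.exp (lam * t))
      (lam * c * Real.exp (lam * t)) t := fun c t =>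
    ((((hasDerivAt_id t).const_mul lam).exp).const_mul c).congr_deriv (by simp only [id]; ring)
  refine ((hasSecondJetAt_continuousLinearMap (innerSL ℝ e)).scomp
    (Eventually.of_forall (hderiv δ)) (hderiv (lam * δ) _)).congr (fun _ => rfl)
      (fun h => ?_) (fun h => ?_) <;>
    simp only [expRadius, innerSL_apply_apply] <;> ring

/-- The penalty of step two: a spherical cap in `x - y` whose radius depends on `x`. -/
noncomputable def capPenalty (P δ lam : ℝ) (e : V) (z : V × V) : ℝ :=
  capProfile P ‖z.1 - z.2‖ (expRadius δ lam e z.1)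

lemma continuous_capPenalty (P δ lam : ℝ) (e : V) : Continuous (capPenalty P δ lam e) := by
  have hradius : Continuous fun z : V × V => expRadius δ lam e z.1 :=
    (continuous_expRadius δ lam e).comp continuous_fst
  unfold capPenalty capProfile
  fun_prop

/-- The quadratic part of a superjet of `capPenalty`, where `q` is the gradient of the cap and `s`
its radius. -/
noncomputable def capQuadratic (q e : V) (lam s : ℝ) (h : V × V) : ℝ :=
  areaElement q / s *
      graphNormSq q (h.1 - h.2 - (lam * s * ⟪e, h.1⟫ / areaElement q) • q) -
    areaElement q * s * lam ^ 2 * ⟪e, h.1⟫ ^ 2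

lemma isQuadraticForm_graphNormSq (q : V) : IsQuadraticForm (graphNormSq q) :=
  isQuadraticForm_norm_sq.add (.sq_of_isBoundedLinearMap (innerSL ℝ q).isBoundedLinearMap)

lemma isQuadraticForm_capQuadratic (q e : V) (lam s : ℝ) :
    IsQuadraticForm (capQuadratic q e lam s) := by
  let fst := ContinuousLinearMap.fst ℝ V V
  let inner_fst := (innerSL ℝ e).comp fst
  let L := fst - ContinuousLinearMap.snd ℝ V V -
    ((lam * s / areaElement q) • inner_fst).smulRight q
  convert (((isQuadraticForm_graphNormSq q).comp_clm L).const_mul (areaElement q / s)).add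
    ((IsQuadraticForm.sq_of_isBoundedLinearMap inner_fst.isBoundedLinearMap).const_mul
      (-(areaElement q * s * lam ^ 2))) using 2 with h
  rw [capQuadratic, neg_mul, ← sub_eq_add_neg, mul_div_right_comm]
  rfl

lemma areaElement_inv_smul {z : V} (hω : 0 < ω) (hs : 0 ≤ s) (hsum : ω ^ 2 + ‖z‖ ^ 2 = s ^ 2) :
    areaElement (ω⁻¹ • z) = s / ω := by
  rw [areaElement, norm_smul, mul_pow, norm_inv, inv_pow, Real.norm_eq_abs, sq_abs,
    ← Real.sqrt_sq (div_nonneg hs hω.le), div_pow, ← hsum]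
  congr 1
  field_simp

lemma capQuadratic_inv_smul (z e : V) (hω : 0 < ω) (hs : 0 < s)
    (hsum : ω ^ 2 + ‖z‖ ^ 2 = s ^ 2) (lam : ℝ) (h : V × V) :
    capQuadratic (ω⁻¹ • z) e lam s h =
      (lam * s ^ 2 * ⟪e, h.1⟫ - ⟪z, h.1 - h.2⟫) ^ 2 / ω ^ 3 -
        (2 * lam ^ 2 * s ^ 2 * ⟪e, h.1⟫ ^ 2 - ‖h.1 - h.2‖ ^ 2) / ω := by
  have hshift : (lam * s * ⟪e, h.1⟫ / (s / ω)) • ω⁻¹ • z = (lam * ⟪e, h.1⟫) • z := by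
    rw [smul_smul]
    congr 1
    field_simp
  rw [capQuadratic, areaElement_inv_smul hω hs.le hsum, hshift, graphNormSq, real_inner_smul_left,
    norm_sub_sq_real, inner_sub_right, inner_smul_right, inner_smul_right, norm_smul,
    real_inner_self_eq_norm_sq, mul_pow, Real.norm_eq_abs, sq_abs, real_inner_comm z,
    show ‖z‖ ^ 2 = s ^ 2 - ω ^ 2 by linarith]
  field_simp
  ring

lemma hasSecondJetAt_neg_sqrt_expRadius (hs : expRadius δ lam e x = s) (hspos : 0 < s)
    (hω : 0 < ω) (hsum : ω ^ 2 + ‖x - y‖ ^ 2 = s ^ 2) {q : V} (hq : q = ω⁻¹ • (x - y)) :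
    HasSecondJetAt (fun z : V × V => -√(expRadius δ lam e z.1 ^ 2 - ‖z.1 - z.2‖ ^ 2))
      (fun h => ⟪q - (areaElement q * (lam * s)) • e, h.1⟫ - ⟪q, h.2⟫)
      (capQuadratic q e lam s) (x, y) := by
  have hradius := ((hasSecondJetAt_expRadius δ lam e x).comp_clm (ContinuousLinearMap.fst ℝ V V)
    (y := (x, y))).scomp (φ := fun t => t ^ 2) (φ' := fun t => 2 * t) (φ'' := 2)
    (Eventually.of_forall fun t => by simpa using hasDerivAt_pow 2 t)
    (by simpa using (hasDerivAt_id (expRadius δ lam e x)).const_mul 2)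
  have hnorm := (hasSecondJetAt_norm_sq (x - y)).comp_clm
    (ContinuousLinearMap.fst ℝ V V - ContinuousLinearMap.snd ℝ V V) (y := (x, y))
  have hsqrt := ((hradius.add (hnorm.const_mul (-1))).sqrt hω (by
    simp only [ContinuousLinearMap.coe_fst', sub_apply, ContinuousLinearMap.coe_snd', hs]
    linarith)).const_mul (-1)
  refine hsqrt.congr (fun z => ?_) (fun h => ?_) (fun h => ?_)
  · simp only [ContinuousLinearMap.coe_fst', sub_apply, ContinuousLinearMap.coe_snd']
    ring_nf
  · rw [hq, areaElement_inv_smul hω hspos.le hsum, inner_sub_left, real_inner_smul_left,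
      real_inner_smul_left, real_inner_smul_left]
    simp only [ContinuousLinearMap.coe_fst', sub_apply, ContinuousLinearMap.coe_snd', hs,
      inner_sub_right]
    field_simp
    ring
  · rw [hq, capQuadratic_inv_smul _ _ hω hspos hsum]
    simp only [ContinuousLinearMap.coe_fst', sub_apply, ContinuousLinearMap.coe_snd', hs]
    field_simp
    ring

lemma areaElement_div_norm_smul {z : V} (hz : z ≠ 0) (P : ℝ) :
    areaElement ((P / ‖z‖) • z) = areaElement P := by
  rw [areaElement, norm_smul, norm_div, norm_norm, div_mul_cancel₀ _ (norm_ne_zero_iff.mpr hz)]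
  rfl

lemma norm_sq_sub_inner_div_sq_sub_smul {z : V} (hz : z ≠ 0) (a : V) (k : ℝ) :
    ‖a - k • z‖ ^ 2 - (⟪z, a - k • z⟫ / ‖z‖) ^ 2 = ‖a‖ ^ 2 - (⟪z, a⟫ / ‖z‖) ^ 2 := by
  have hpos : ‖z‖ ≠ 0 := norm_ne_zero_iff.mpr hz
  rw [norm_sub_sq_real, inner_sub_right, inner_smul_right, inner_smul_right, norm_smul,
    real_inner_self_eq_norm_sq, mul_pow, Real.norm_eq_abs, sq_abs, real_inner_comm z]
  field_simp
  ring

lemma le_capQuadratic_div_norm_smul {z : V} (hz : z ≠ 0) (e : V) (hP : 0 ≤ P) (hs : 0 < s)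
    (hle : P / areaElement P * s ≤ ‖z‖) (lam : ℝ) (h : V × V) :
    P * ((‖h.1 - h.2‖ ^ 2 - (⟪z, h.1 - h.2⟫ / ‖z‖) ^ 2) / ‖z‖) -
        areaElement P * (lam ^ 2 * s * ⟪e, h.1⟫ ^ 2) ≤
      capQuadratic ((P / ‖z‖) • z) e lam s h := by
  have hr : 0 < ‖z‖ := norm_pos_iff.mpr hz
  have hW := areaElement_pos P
  rw [capQuadratic, areaElement_div_norm_smul hz, smul_smul, graphNormSq]
  set k := lam * s * ⟪e, h.1⟫ / areaElement P * (P / ‖z‖)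
  rw [← norm_sq_sub_inner_div_sq_sub_smul hz (h.1 - h.2) k]
  set d := h.1 - h.2 - k • z
  have hslope : P / ‖z‖ ≤ areaElement P / s := by
    rw [div_le_div_iff₀ hr hs]
    rw [div_mul_eq_mul_div, div_le_iff₀ hW] at hle
    linarith
  have hmain : P * ((‖d‖ ^ 2 - (⟪z, d⟫ / ‖z‖) ^ 2) / ‖z‖) ≤
      areaElement P / s * (‖d‖ ^ 2 + ⟪(P / ‖z‖) • z, d⟫ ^ 2) :=
    calc P * ((‖d‖ ^ 2 - (⟪z, d⟫ / ‖z‖) ^ 2) / ‖z‖)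
        = P / ‖z‖ * (‖d‖ ^ 2 - (⟪z, d⟫ / ‖z‖) ^ 2) := by ring
      _ ≤ P / ‖z‖ * (‖d‖ ^ 2 + ⟪(P / ‖z‖) • z, d⟫ ^ 2) := by
        gcongr
        linarith [sq_nonneg (⟪z, d⟫ / ‖z‖), sq_nonneg ⟪(P / ‖z‖) • z, d⟫]
      _ ≤ _ := by gcongr
  linarith

lemma hasSuperjetAt_mul_norm_sub_expRadius (hs : expRadius δ lam e x = s) (hspos : 0 < s)
    (hxy : x ≠ y) (hP : 0 ≤ P) (hle : P / areaElement P * s ≤ ‖x - y‖)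
    {q : V} (hq : q = (P / ‖x - y‖) • (x - y)) :
    HasSuperjetAt (fun z : V × V => P * ‖z.1 - z.2‖ - areaElement P * expRadius δ lam e z.1)
      (fun h => ⟪q - (areaElement q * (lam * s)) • e, h.1⟫ - ⟪q, h.2⟫)
      (capQuadratic q e lam s) (x, y) := by
  have hz : x - y ≠ 0 := sub_ne_zero.mpr hxy
  have hnorm := ((hasSecondJetAt_norm hz).comp_clm
    (ContinuousLinearMap.fst ℝ V V - ContinuousLinearMap.snd ℝ V V) (y := (x, y))).const_mul P
  have hradius := ((hasSecondJetAt_expRadius δ lam e x).comp_clm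
    (ContinuousLinearMap.fst ℝ V V) (y := (x, y))).const_mul (-areaElement P)
  refine ((hnorm.add hradius).congr (fun z => ?_) (fun h => ?_)
    (fun h => rfl)).hasSuperjetAt.mono_quadratic (isQuadraticForm_capQuadratic q e lam s)
      fun h => ?_
  · simp only [ContinuousLinearMap.coe_fst', sub_apply, ContinuousLinearMap.coe_snd']
    ring
  · rw [hq, areaElement_div_norm_smul hz, inner_sub_left, real_inner_smul_left,
      real_inner_smul_left, real_inner_smul_left]
    simp only [ContinuousLinearMap.coe_fst', sub_apply, ContinuousLinearMap.coe_snd', hs,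
      inner_sub_right]
    ring
  · have := le_capQuadratic_div_norm_smul hz e hP hspos hle lam h
    rw [hq]
    simp only [ContinuousLinearMap.coe_fst', sub_apply, ContinuousLinearMap.coe_snd', hs]
    linarith

lemma exists_hasSuperjetAt_capPenalty_of_le (hs : expRadius δ lam e x = s) (hspos : 0 < s)
    (hle : ‖x - y‖ ≤ P / areaElement P * s) :
    ∃ q, areaElement q ≤ areaElement P ∧ HasSuperjetAt (capPenalty P δ lam e)
      (fun h => ⟪q - (areaElement q * (lam * s)) • e, h.1⟫ - ⟪q, h.2⟫)
      (capQuadratic q e lam s) (x, y) := by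
  have hW := areaElement_pos P
  have hlt : ‖x - y‖ < s :=
    hle.trans_lt (mul_lt_of_lt_one_left hspos (div_areaElement_lt_one P))
  have hpos : 0 < s ^ 2 - ‖x - y‖ ^ 2 := by nlinarith [norm_nonneg (x - y)]
  set ω := √(s ^ 2 - ‖x - y‖ ^ 2)
  have hω : 0 < ω := Real.sqrt_pos.mpr hpos
  have hsum : ω ^ 2 + ‖x - y‖ ^ 2 = s ^ 2 := by rw [Real.sq_sqrt hpos.le, sub_add_cancel]
  refine ⟨ω⁻¹ • (x - y), ?_,
    (hasSecondJetAt_neg_sqrt_expRadius hs hspos hω hsum rfl).hasSuperjetAt.of_eventually_le ?_ ?_⟩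
  · rw [areaElement_inv_smul hω hspos.le hsum, div_le_iff₀ hω]
    refine (abs_le_of_sq_le_sq' ?_ (by positivity)).2
    rw [div_mul_eq_mul_div, le_div_iff₀ hW] at hle
    have hsq := pow_le_pow_left₀ (by positivity) hle 2
    rw [mul_pow, mul_pow, areaElement_real_sq] at hsq
    rw [mul_pow, areaElement_real_sq]
    linear_combination hsq - (1 + P ^ 2) * hsum
  · have hcont : Continuous fun z : V × V => expRadius δ lam e z.1 :=
      (continuous_expRadius δ lam e).comp continuous_fst
    filter_upwards [((continuous_fst.sub continuous_snd).norm.tendsto (x, y)).eventually_lt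
      (hcont.tendsto (x, y)) (by simpa [hs] using hlt)] with z hz
    exact capProfile_le_neg_sqrt (norm_nonneg _) hz.le
  · rw [capPenalty, hs, capProfile_of_le hle]

lemma exists_hasSuperjetAt_capPenalty_of_lt (hδ : 0 < δ) (hs : expRadius δ lam e x = s)
    (hP : 0 ≤ P) (hlt : P / areaElement P * s < ‖x - y‖) :
    ∃ q, areaElement q ≤ areaElement P ∧ HasSuperjetAt (capPenalty P δ lam e)
      (fun h => ⟪q - (areaElement q * (lam * s)) • e, h.1⟫ - ⟪q, h.2⟫)
      (capQuadratic q e lam s) (x, y) := by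
  have hW := areaElement_pos P
  have hspos : 0 < s := hs ▸ expRadius_pos hδ
  have hz : x - y ≠ 0 := norm_pos_iff.mp (lt_of_le_of_lt (by positivity) hlt)
  refine ⟨(P / ‖x - y‖) • (x - y), (areaElement_div_norm_smul hz P).le,
    (hasSuperjetAt_mul_norm_sub_expRadius hs hspos (sub_ne_zero.mp hz) hP
      hlt.le rfl).of_eventually_le ?_ ?_⟩
  · have hcont : Continuous fun z : V × V => P / areaElement P * expRadius δ lam e z.1 :=
      continuous_const.mul ((continuous_expRadius δ lam e).comp continuous_fst)
    filter_upwards [(hcont.tendsto (x, y)).eventually_lt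
      ((continuous_fst.sub continuous_snd).norm.tendsto (x, y)) (by simpa [hs] using hlt)] with z hz
    exact (capProfile_of_ge (expRadius_pos hδ).le hz.le).le
  · rw [capPenalty, hs, capProfile_of_ge hspos.le hlt.le]

lemma exists_hasSuperjetAt_capPenalty (hδ : 0 < δ) (hP : 0 ≤ P) (lam : ℝ) (e x y : V) :
    ∃ q, areaElement q ≤ areaElement P ∧ HasSuperjetAt (capPenalty P δ lam e)
      (fun h => ⟪q - (areaElement q * (lam * expRadius δ lam e x)) • e, h.1⟫ - ⟪q, h.2⟫)
      (capQuadratic q e lam (expRadius δ lam e x)) (x, y) := by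
  rcases le_or_gt ‖x - y‖ (P / areaElement P * expRadius δ lam e x) with hle | hlt
  · exact exists_hasSuperjetAt_capPenalty_of_le rfl (expRadius_pos hδ) hle
  · exact exists_hasSuperjetAt_capPenalty_of_lt hδ rfl hP hlt

lemma capQuadratic_le_of_graphNormSq_le {q e a b : V} (hs : 0 < s)
    (hb : graphNormSq q (a - b - (lam * s * ⟪e, a⟫ / areaElement q) • q) ≤
      (lam * s) ^ 2 / 2 * ⟪e, a⟫ ^ 2) :
    capQuadratic q e lam s (a, b) ≤ -(areaElement q * s * lam ^ 2 / 2) * ⟪e, a⟫ ^ 2 := by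
  have hW := areaElement_pos q
  calc capQuadratic q e lam s (a, b)
      ≤ areaElement q / s * ((lam * s) ^ 2 / 2 * ⟪e, a⟫ ^ 2) -
          areaElement q * s * lam ^ 2 * ⟪e, a⟫ ^ 2 := by
        unfold capQuadratic
        gcongr
    _ = _ := by field_simp; ring

end CapPenalty

section Conclusion

variable {N : ℕ}

lemma IsComparisonPair.sub_le_of_hasSuperjetAt_capQuadratic {U : Set (EuclideanSpace ℝ (Fin N))}
    {H u v : EuclideanSpace ℝ (Fin N) → ℝ} (h : IsComparisonPair U H u v)
    {x y p q e : EuclideanSpace ℝ (Fin N)} (hx : x ∈ U) (hy : y ∈ U) (he : ‖e‖ = 1) {lam s : ℝ}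
    (hs : 0 < s) (hlam : (lam * s) ^ 2 ≤ 1 / 2) (hp : p = q - (areaElement q * (lam * s)) • e)
    (hjet : HasSuperjetAt (fun z : EuclideanSpace ℝ (Fin N) × EuclideanSpace ℝ (Fin N) =>
      v z.1 - u z.2) (fun h => ⟪p, h.1⟫ - ⟪q, h.2⟫) (capQuadratic q e lam s) (x, y)) :
    areaElement p * (N * H x) - areaElement q * (N * H y) ≤
      -(areaElement q * s * lam ^ 2 / 2 / areaElement p ^ 2) := by
  obtain ⟨B, hB⟩ := exists_graphNormSq_eq_and_sub_le (q := q) he hlam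
  have hW := areaElement_pos q
  set b := stdOrthonormalBasis ℝ (EuclideanSpace ℝ (Fin N))
  calc areaElement p * (N * H x) - areaElement q * (N * H y)
      ≤ ∑ i, capQuadratic q e lam s (invSqrtMetric p (b i), B (invSqrtMetric p (b i))) :=
        h.sub_le_sum_of_hasSuperjetAt hx hy hjet (fun a => hp ▸ (hB a).1) b
    _ ≤ ∑ i, -(areaElement q * s * lam ^ 2 / 2) * ⟪e, invSqrtMetric p (b i)⟫ ^ 2 :=
        Finset.sum_le_sum fun i _ => capQuadratic_le_of_graphNormSq_le hs (hB _).2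
    _ = -(areaElement q * s * lam ^ 2 / 2 * ‖invSqrtMetric p e‖ ^ 2) := by
        rw [← Finset.mul_sum, sum_inner_invSqrtMetric_sq, neg_mul]
    _ ≤ -(areaElement q * s * lam ^ 2 / 2 * (areaElement p ^ 2)⁻¹) := by
        gcongr
        exact inv_areaElement_sq_le_norm_invSqrtMetric_sq he p

lemma neg_mul_le_mul_sub_mul {n K L r t W W' a b : ℝ} (hn : 0 ≤ n) (hW : 0 ≤ W)
    (hWW' : |W' - W| ≤ W * t) (ha : |a| ≤ K) (hab : |a - b| ≤ L * r) :
    -(W * (t * (n * K) + n * L * r)) ≤ W' * (n * a) - W * (n * b) := by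
  have hfactor : -(W * t * (n * K)) ≤ (W' - W) * (n * a) := by
    refine (abs_le.mp ?_).1
    rw [abs_mul, abs_mul, abs_of_nonneg hn]
    have := (abs_nonneg _).trans hWW'
    gcongr
  have hdiff : -(W * (n * (L * r))) ≤ W * (n * (a - b)) := by
    rw [← mul_neg, ← mul_neg]
    gcongr
    exact (abs_le.mp hab).1
  linarith

lemma mul_add_lt_sq_div_of_le {α β W W' lam : ℝ} (hα : 0 ≤ α) (hβ : 0 ≤ β) (hW : 1 ≤ W)
    (hW' : 0 < W') (hle : W' ≤ 2 * W) (hlam : 8 * W ^ 2 * (α + β + 1) ≤ lam) :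
    lam * α + β < lam ^ 2 / 2 / W' ^ 2 := by
  have hlam1 : 1 ≤ lam := by nlinarith
  calc lam * α + β < lam * (α + β + 1) := by nlinarith
    _ ≤ lam * (lam / (8 * W ^ 2)) := by
        gcongr
        rwa [le_div_iff₀' (by positivity)]
    _ = lam ^ 2 / 2 / (2 * W) ^ 2 := by field_simp; norm_num
    _ ≤ lam ^ 2 / 2 / W' ^ 2 := by gcongr

namespace ComparisonViolation

variable {Ω C : Set (EuclideanSpace ℝ (Fin N))} {H u v : EuclideanSpace ℝ (Fin N) → ℝ}
  {m ρ A : ℝ} {L : NNReal} {e : EuclideanSpace ℝ (Fin N)}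

lemma exists_isMaxOn_sub_capPenalty (h : ComparisonViolation Ω C H u v m ρ) (hA : 0 ≤ A)
    (hlinear : ∀ z ∈ nearDiagonal (closure Ω) ρ, v z.1 - u z.2 ≤ m + A * ‖z.1 - z.2‖)
    {δ ε : ℝ} (hδ : 0 < δ) (lam : ℝ) (e : EuclideanSpace ℝ (Fin N))
    (hε : ∀ x ∈ closure Ω, expRadius δ lam e x ≤ ε) (hερ : areaElement (A + 1) * ε < ρ)
    (hεm : areaElement (A + 1) * ε ≤ m / 2) :
    ∃ z ∈ C ×ˢ C, ‖z.1 - z.2‖ ≤ areaElement (A + 1) * expRadius δ lam e z.1 ∧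
      expRadius δ lam e z.1 ≤ ε ∧
      IsLocalMax (fun z => v z.1 - u z.2 - capPenalty (A + 1) δ lam e z) z := by
  obtain ⟨z, hz, hmax, hm⟩ := h.exists_isMaxOn_sub (continuous_capPenalty (A + 1) δ lam e)
    fun x => by
      rw [capPenalty, sub_self, norm_zero, capProfile_zero (by positivity) (expRadius_pos hδ).le]
      exact neg_nonpos.mpr (expRadius_pos hδ).le
  have hs : 0 < expRadius δ lam e z.1 := expRadius_pos hδ
  have hlower : (A + 1) * ‖z.1 - z.2‖ - areaElement (A + 1) * expRadius δ lam e z.1 ≤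
    capPenalty (A + 1) δ lam e z := mul_sub_areaElement_mul_le_capProfile hs.le (norm_nonneg _)
  have hsε : areaElement (A + 1) * expRadius δ lam e z.1 ≤ areaElement (A + 1) * ε :=
    mul_le_mul_of_nonneg_left (hε z.1 hz.1.1) (areaElement_pos _).le
  have hr : ‖z.1 - z.2‖ ≤ areaElement (A + 1) * expRadius δ lam e z.1 := by
    linarith [hlinear z hz]
  have hzC : z ∈ C ×ˢ C := h.mem_of_le z hz (by
    linarith [mul_nonneg (by positivity : 0 ≤ A + 1) (norm_nonneg (z.1 - z.2))])
  exact ⟨z, hzC, hr, hε z.1 hz.1.1,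
    h.isLocalMax_of_isMaxOn hzC (hr.trans_lt (hsε.trans_lt hερ)) hmax⟩

lemma not_isLocalMax_sub_capPenalty (h : ComparisonViolation Ω C H u v m ρ)
    (hL : LipschitzOnWith L H C) {K : ℝ} (hK : ∀ x ∈ C, |H x| ≤ K) (he : ‖e‖ = 1)
    {P δ lam : ℝ} (hP : 0 ≤ P) (hδ : 0 < δ)
    (hlam : 8 * areaElement P ^ 2 * (N * K + N * L * areaElement P + 1) ≤ lam)
    {z : EuclideanSpace ℝ (Fin N) × EuclideanSpace ℝ (Fin N)} (hzC : z ∈ C ×ˢ C)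
    (hr : ‖z.1 - z.2‖ ≤ areaElement P * expRadius δ lam e z.1)
    (hsmall : lam * expRadius δ lam e z.1 ≤ 1 / 2) :
    ¬ IsLocalMax (fun z => v z.1 - u z.2 - capPenalty P δ lam e z) z := by
  intro hmax
  obtain ⟨q, hqP, hjet⟩ := exists_hasSuperjetAt_capPenalty hδ hP lam e z.1 z.2
  have hs : 0 < expRadius δ lam e z.1 := expRadius_pos hδ
  set s := expRadius δ lam e z.1
  obtain ⟨p, hp⟩ : ∃ p, q - (areaElement q * (lam * s)) • e = p := ⟨_, rfl⟩
  have hWq := areaElement_pos q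
  have hW := one_le_areaElement P
  have hK0 : 0 ≤ K := (abs_nonneg _).trans (hK z.1 hzC.1)
  have hlam0 : 0 ≤ lam := le_trans (by positivity) hlam
  have hWpq : |areaElement p - areaElement q| ≤ areaElement q * (lam * s) := by
    refine (abs_areaElement_sub_le p q).trans_eq ?_
    rw [← hp, sub_sub_cancel_left, norm_neg, norm_smul, he, mul_one, Real.norm_eq_abs,
      abs_of_nonneg (by positivity)]
  have hle : areaElement p ≤ 2 * areaElement P := by
    nlinarith [(abs_le.mp hWpq).2]
  have hupper := h.isComparisonPair.sub_le_of_hasSuperjetAt_capQuadratic (h.subset hzC.1)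
    (h.subset hzC.2) he hs (by nlinarith [mul_nonneg hlam0 hs.le]) hp.symm
    (by simp only [hp] at hjet; exact hjet.of_isLocalMax_sub hmax)
  have hHxy : |H z.1 - H z.2| ≤ L * (areaElement P * s) :=
    (hL.norm_sub_le hzC.1 hzC.2).trans (by gcongr)
  have hlower := neg_mul_le_mul_sub_mul N.cast_nonneg hWq.le hWpq (hK z.1 hzC.1) hHxy
  have hgap := mul_lt_mul_of_pos_left (mul_add_lt_sq_div_of_le (by positivity : 0 ≤ N * K)
    (by positivity : 0 ≤ N * L * areaElement P) hW (areaElement_pos p) hle hlam) (mul_pos hWq hs)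
  refine hgap.not_ge ?_
  calc _ = areaElement q * s * lam ^ 2 / 2 / areaElement p ^ 2 := by ring
    _ ≤ areaElement q * (lam * s * (N * K) + N * L * (areaElement P * s)) := by linarith
    _ = _ := by ring

theorem not_forall_sub_le_add_mul_norm (h : ComparisonViolation Ω C H u v m ρ)
    (hL : LipschitzOnWith L H C) {K : ℝ} (hK : ∀ x ∈ C, |H x| ≤ K) (he : ‖e‖ = 1) (hA : 0 ≤ A) :
    ¬ ∀ z ∈ nearDiagonal (closure Ω) ρ, v z.1 - u z.2 ≤ m + A * ‖z.1 - z.2‖ := by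
  intro hlinear
  obtain ⟨lam, hlam, hlam0⟩ : ∃ lam, 8 * areaElement (A + 1) ^ 2 *
      (N * K + N * L * areaElement (A + 1) + 1) ≤ lam ∧ 0 < lam :=
    ⟨_, le_max_left _ 1, by positivity⟩
  have hm := h.gap_pos
  have hρ := h.radius_pos
  obtain ⟨ε, hε, hlε, hερ, hεm⟩ : ∃ ε > 0, lam * ε < 1 / 2 ∧ areaElement (A + 1) * ε < ρ ∧
      areaElement (A + 1) * ε < m / 2 := by
    have hsmall : ∀ c d : ℝ, 0 < d → ∀ᶠ ε in 𝓝[>] (0 : ℝ), c * ε < d := fun c d hd =>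
      nhdsWithin_le_nhds (((continuous_const_mul c).tendsto' 0 0 (mul_zero c)).eventually
        (gt_mem_nhds hd))
    exact (eventually_mem_nhdsWithin.and ((hsmall lam _ one_half_pos).and
      ((hsmall _ ρ hρ).and (hsmall _ _ (half_pos hm))))).exists
  obtain ⟨δ, hδ, hδε⟩ := exists_forall_expRadius_le h.isCompact_closure lam e hε
  obtain ⟨z, hzC, hr, hsε, hmax⟩ :=
    h.exists_isMaxOn_sub_capPenalty hA hlinear hδ lam e hδε hερ hεm.le
  exact h.not_isLocalMax_sub_capPenalty hL hK he (by positivity) hδ hlam hzC hr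
    ((mul_le_mul_of_nonneg_left hsε hlam0.le).trans hlε.le) hmax

end ComparisonViolation

end Conclusion

theorem weak_comparison_principle_general {N : ℕ} (hN : 0 < N)
    {Ω : Set (EuclideanSpace ℝ (Fin N))} (hΩo : IsOpen Ω) (hΩb : Bornology.IsBounded Ω)
    {H : EuclideanSpace ℝ (Fin N) → ℝ} (hH : LocLipschitzOn Ω H)
    {u v : EuclideanSpace ℝ (Fin N) → ℝ}
    (hu_lsc : LowerSemicontinuousOn u (closure Ω)) (hu : IsViscositySupersol Ω H u)
    (hv_usc : UpperSemicontinuousOn v (closure Ω)) (hv : IsViscositySubsol Ω H v)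
    (hbdry : ∀ x ∈ frontier Ω, v x ≤ u x) :
    ∀ x ∈ Ω, v x ≤ u x := by
  intro x₁ hx₁
  by_contra! hlt
  have hHloc : LocallyLipschitzOn Ω H := hH
  have hpair : IsComparisonPair Ω H u v := ⟨hΩo, hHloc.continuousOn, hu, hv,
    hu_lsc.mono subset_closure, hv_usc.mono subset_closure⟩
  obtain ⟨C, m, ρ, hC, hviol⟩ :=
    ComparisonViolation.exists_of_lt hpair hΩb hu_lsc hv_usc hbdry hx₁ hlt
  obtain ⟨L, hL⟩ := (hHloc.mono hviol.subset).exists_lipschitzOnWith_of_compact hC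
  obtain ⟨K, hK⟩ := hC.exists_bound_of_continuousOn hL.continuousOn
  obtain ⟨A, hA, ρ', hviol', hlinear⟩ := hviol.exists_forall_sub_le_add_mul_norm hL
  exact hviol'.not_forall_sub_le_add_mul_norm hL hK
    ((EuclideanSpace.basisFun (Fin N) ℝ).norm_eq_one ⟨0, hN⟩) hA hlinear

/-- **Weak comparison principle** for semicontinuous viscosity super- and
subsolutions of `M = N H` on a bounded domain. -/
theorem weak_comparison_principle {N : ℕ} (hN : 2 ≤ N)
    (Ω : Set (EuclideanSpace ℝ (Fin N))) (hΩo : IsOpen Ω) (hΩc : IsConnected Ω)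
    (hΩb : Bornology.IsBounded Ω)
    (H : EuclideanSpace ℝ (Fin N) → ℝ) (hH : LocLipschitzOn Ω H)
    (u v : EuclideanSpace ℝ (Fin N) → ℝ)
    (hu_lsc : LowerSemicontinuousOn u (closure Ω)) (hu : IsViscositySupersol Ω H u)
    (hv_usc : UpperSemicontinuousOn v (closure Ω)) (hv : IsViscositySubsol Ω H v)
    (hbdry : ∀ x ∈ frontier Ω, v x ≤ u x) :
    ∀ x ∈ Ω, v x ≤ u x :=
  weak_comparison_principle_general (by omega) hΩo hΩb hH hu_lsc hu hv_usc hv hbdry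
end

section
/- Truncation preserves viscosity supersolutions: Let Ω be a domain in ℝ^N with N ≥ 2, let H : Ω → ℝ be locally Lipschitz continuous, let u be a lower semicontinuous viscosity supersolution of M(u) = NH in Ω, let x₀ ∈ Ω and R > 0 with cl(B(x₀,R)) ⊂ Ω and H ≥ −1/R on cl(B(x₀,R)), and let K ∈ ℝ. Then the function u_R(x) := min{ u(x), K + √(R² − |x−x₀|²) } is lower semicontinuous on cl(B(x₀,R)) and is a viscosity supersolution of M(u_R) = NH in B(x₀,R). -/
open Metric Set Filter Topology MeasureTheory

/-!
A minimum of two supersolutions is a supersolution, because a test function touching the minimum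
from below at `x` touches from below whichever of the two attains the minimum at `x`. It therefore
suffices that the hemisphere is a supersolution in the ball. There it is smooth and its normalized
gradient is `-(x - x₀) / R`, so its mean curvature operator is `-N / R ≤ N H`, and ellipticity
transfers this inequality to any `C²` test function touching it from below.
-/

section SecondOrder

theorem nonneg_of_isLocalMin_of_hasDerivAt {f g : ℝ → ℝ} {a t₀ : ℝ}
    (hf : ∀ᶠ t in 𝓝 t₀, HasDerivAt f (g t) t) (hg : HasDerivAt g a t₀)
    (hmin : IsLocalMin f t₀) : 0 ≤ a := by
  by_contra! ha
  have hderiv : deriv f =ᶠ[𝓝 t₀] g := hf.mono fun t ht => ht.deriv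
  have hderiv₂ : deriv (deriv f) t₀ = a := hderiv.deriv_eq.trans hg.deriv
  have hmax : IsLocalMax f t₀ :=
    isLocalMax_of_deriv_deriv_neg (hderiv₂ ▸ ha) hmin.deriv_eq_zero
      hf.self_of_nhds.continuousAt
  have hconst : f =ᶠ[𝓝 t₀] fun _ => f t₀ := by
    filter_upwards [hmin, hmax] with t hle hge using le_antisymm hge hle
  have hzero : deriv (deriv f) t₀ = 0 := by simpa using hconst.deriv.deriv_eq
  exact ha.ne (hderiv₂.symm.trans hzero)

variable {E : Type*} [NormedAddCommGroup E] [InnerProductSpace ℝ E] [CompleteSpace E]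

theorem differentiableAt_gradient {f : E → ℝ} {x : E}
    (hf : ContDiffAt ℝ 2 f x) : DifferentiableAt ℝ (gradient f) x :=
  (InnerProductSpace.toDual ℝ E).symm.toContinuousLinearEquiv.differentiableAt.comp x
    ((hf.fderiv_right (m := 1) (by norm_num)).differentiableAt one_ne_zero)

theorem gradient_sub {f g : E → ℝ} {x : E} (hf : DifferentiableAt ℝ f x)
    (hg : DifferentiableAt ℝ g x) :
    gradient (fun y => f y - g y) x = gradient f x - gradient g x := by
  simp only [gradient, fderiv_fun_sub hf hg, map_sub]

theorem fderiv_gradient_sub {f g : E → ℝ} {x : E} (hf : ContDiffAt ℝ 2 f x)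
    (hg : ContDiffAt ℝ 2 g x) :
    fderiv ℝ (gradient fun y => f y - g y) x =
      fderiv ℝ (gradient f) x - fderiv ℝ (gradient g) x := by
  have hsub : (gradient fun y => f y - g y) =ᶠ[𝓝 x] fun y => gradient f y - gradient g y := by
    filter_upwards [hf.eventually (by simp), hg.eventually (by simp)] with y hfy hgy using
      gradient_sub (hfy.differentiableAt two_ne_zero) (hgy.differentiableAt two_ne_zero)
  rw [hsub.fderiv_eq,
    fderiv_fun_sub (differentiableAt_gradient hf) (differentiableAt_gradient hg)]

theorem inner_fderiv_gradient_nonneg_of_isLocalMin {f : E → ℝ} {x : E}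
    (hf : ContDiffAt ℝ 2 f x) (hmin : IsLocalMin f x) (v : E) :
    0 ≤ inner ℝ v (fderiv ℝ (gradient f) x v) := by
  have hline (t : ℝ) : HasDerivAt (fun t : ℝ => x + t • v) v t := by
    simpa using ((hasDerivAt_id t).smul_const v).const_add x
  have htendsto : Tendsto (fun t : ℝ => x + t • v) (𝓝 0) (𝓝 x) := by
    simpa using (hline 0).continuousAt.tendsto
  refine nonneg_of_isLocalMin_of_hasDerivAt (f := fun t => f (x + t • v))
    (g := fun t => inner ℝ v (gradient f (x + t • v))) (t₀ := 0) ?_ ?_ ?_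
  · filter_upwards [htendsto.eventually (hf.eventually (by simp))] with t ht
    rw [inner_gradient_right, conj_trivial]
    exact (ht.differentiableAt two_ne_zero).hasFDerivAt.comp_hasDerivAt t (hline t)
  · exact (innerSL ℝ v).hasFDerivAt.comp_hasDerivAt 0
      ((differentiableAt_gradient hf).hasFDerivAt.comp_hasDerivAt_of_eq 0 (hline 0) (by simp))
  · simpa [IsLocalMin, IsMinFilter] using htendsto.eventually hmin

end SecondOrder

section Trace

variable {E : Type*} [NormedAddCommGroup E] [InnerProductSpace ℝ E] [FiniteDimensional ℝ E]

theorem trace_nonneg_of_inner_nonneg {T : E →ₗ[ℝ] E} (hT : ∀ v, 0 ≤ inner ℝ v (T v)) :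
    0 ≤ LinearMap.trace ℝ E T := by
  rw [T.trace_eq_sum_inner (stdOrthonormalBasis ℝ E)]
  exact Finset.sum_nonneg fun i _ => hT _

theorem inner_le_trace_of_norm_eq_one {T : E →ₗ[ℝ] E} (hT : ∀ v, 0 ≤ inner ℝ v (T v)) {e : E}
    (he : ‖e‖ = 1) : inner ℝ e (T e) ≤ LinearMap.trace ℝ E T := by
  have horth : Orthonormal ℝ ((↑) : ({e} : Set E) → E) := by simp [orthonormal_subsingleton_iff, he]
  obtain ⟨s, b, hes, hb⟩ := horth.exists_orthonormalBasis_extension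
  have hbe : b ⟨e, by simpa using hes⟩ = e := by simp [hb]
  calc inner ℝ e (T e)
      = inner ℝ (b ⟨e, by simpa using hes⟩) (T (b ⟨e, by simpa using hes⟩)) := by rw [hbe]
    _ ≤ ∑ i, inner ℝ (b i) (T (b i)) :=
      Finset.single_le_sum (f := fun i => inner ℝ (b i) (T (b i))) (fun i _ => hT _)
        (Finset.mem_univ _)
    _ = LinearMap.trace ℝ E T := (T.trace_eq_sum_inner b).symm

theorem inner_le_norm_sq_mul_trace {T : E →ₗ[ℝ] E} (hT : ∀ v, 0 ≤ inner ℝ v (T v)) (p : E) :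
    inner ℝ p (T p) ≤ ‖p‖ ^ 2 * LinearMap.trace ℝ E T := by
  rcases eq_or_ne p 0 with rfl | hp
  · simp
  have hunit := inner_le_trace_of_norm_eq_one hT (e := ‖p‖⁻¹ • p) (norm_smul_inv_norm hp)
  have hp' : 0 < ‖p‖ := norm_pos_iff.2 hp
  rw [map_smul, real_inner_smul_left, real_inner_smul_right] at hunit
  calc inner ℝ p (T p)
      = ‖p‖ ^ 2 * (‖p‖⁻¹ * (‖p‖⁻¹ * inner ℝ p (T p))) := by field_simp
    _ ≤ ‖p‖ ^ 2 * LinearMap.trace ℝ E T := by gcongr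

theorem inner_div_one_add_norm_sq_le_trace {T : E →ₗ[ℝ] E} (hT : ∀ v, 0 ≤ inner ℝ v (T v))
    (p : E) : inner ℝ p (T p) / (1 + ‖p‖ ^ 2) ≤ LinearMap.trace ℝ E T := by
  rw [div_le_iff₀ (by positivity)]
  linarith [inner_le_norm_sq_mul_trace hT p, trace_nonneg_of_inner_nonneg hT]

end Trace

section NormalizedSlope

variable {E : Type*} [NormedAddCommGroup E] [InnerProductSpace ℝ E]

/-- The map `p ↦ p / √(1 + |p|²)`, which sends the slope of a graph to the horizontal part of its
downward unit normal. The mean curvature operator `mcOp w` is the divergence of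
`normalizedSlope ∘ gradient w`. -/
noncomputable def normalizedSlope (p : E) : E := (Real.sqrt (1 + ‖p‖ ^ 2))⁻¹ • p

theorem hasFDerivAt_normalizedSlope (p : E) :
    HasFDerivAt normalizedSlope
      ((Real.sqrt (1 + ‖p‖ ^ 2))⁻¹ •
        (ContinuousLinearMap.id ℝ E - (1 + ‖p‖ ^ 2)⁻¹ • (innerSL ℝ p).smulRight p)) p := by
  have hpos : 0 < 1 + ‖p‖ ^ 2 := by positivity
  have hsqrt_pos : 0 < Real.sqrt (1 + ‖p‖ ^ 2) := Real.sqrt_pos.2 hpos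
  have hsqrt : HasFDerivAt (fun q : E => Real.sqrt (1 + ‖q‖ ^ 2)) _ p :=
    ((hasFDerivAt_id p).norm_sq.const_add 1).sqrt hpos.ne'
  have hinv := (hasDerivAt_inv hsqrt_pos.ne').comp_hasFDerivAt p hsqrt
  refine (hinv.smul (hasFDerivAt_id p)).congr_fderiv ?_
  ext v
  simp only [Function.comp_apply, id_eq, ContinuousLinearMap.comp_id, add_apply, sub_apply,
    smul_apply, ContinuousLinearMap.id_apply, ContinuousLinearMap.smulRight_apply,
    coe_innerSL_apply, nsmul_eq_mul, smul_eq_mul, Real.sq_sqrt hpos.le, Nat.cast_ofNat]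
  match_scalars <;> field_simp

end NormalizedSlope

section MeanCurvature

variable {N : ℕ} {x : EuclideanSpace ℝ (Fin N)}

theorem mcOp_congr {v w : EuclideanSpace ℝ (Fin N) → ℝ} (h : v =ᶠ[𝓝 x] w) :
    mcOp v x = mcOp w x := by
  refine Finset.sum_congr rfl fun i _ => ?_
  have hfield := h.gradient.fun_comp fun p => (Real.sqrt (1 + ‖p‖ ^ 2))⁻¹ * p i
  exact DFunLike.congr_fun hfield.fderiv_eq _

theorem mcOp_eq_trace {w : EuclideanSpace ℝ (Fin N) → ℝ}
    {A : EuclideanSpace ℝ (Fin N) →L[ℝ] EuclideanSpace ℝ (Fin N)}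
    (hA : HasFDerivAt (normalizedSlope ∘ gradient w) A x) :
    mcOp w x = LinearMap.trace ℝ _ A.toLinearMap := by
  rw [LinearMap.trace_eq_sum_inner _ (EuclideanSpace.basisFun (Fin N) ℝ)]
  refine Finset.sum_congr rfl fun i _ => ?_
  have hcoord : HasFDerivAt
      (fun y => (Real.sqrt (1 + ‖gradient w y‖ ^ 2))⁻¹ * gradient w y i)
      ((EuclideanSpace.proj (𝕜 := ℝ) i).comp A) x :=
    (EuclideanSpace.proj (𝕜 := ℝ) i).hasFDerivAt.comp x hA
  simp [hcoord.fderiv, EuclideanSpace.inner_single_left]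

theorem mcOp_eq_of_hasFDerivAt_gradient {w : EuclideanSpace ℝ (Fin N) → ℝ}
    {G : EuclideanSpace ℝ (Fin N) →L[ℝ] EuclideanSpace ℝ (Fin N)}
    (hG : HasFDerivAt (gradient w) G x) :
    mcOp w x = (Real.sqrt (1 + ‖gradient w x‖ ^ 2))⁻¹ *
      (LinearMap.trace ℝ _ G.toLinearMap -
        inner ℝ (gradient w x) (G (gradient w x)) / (1 + ‖gradient w x‖ ^ 2)) := by
  set p := gradient w x
  have hcomp : (((Real.sqrt (1 + ‖p‖ ^ 2))⁻¹ • (ContinuousLinearMap.id ℝ _ -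
        (1 + ‖p‖ ^ 2)⁻¹ • (innerSL ℝ p).smulRight p)) ∘L G).toLinearMap =
      (Real.sqrt (1 + ‖p‖ ^ 2))⁻¹ • (G.toLinearMap -
        (1 + ‖p‖ ^ 2)⁻¹ • (innerSL ℝ p ∘L G).toLinearMap.smulRight p) := rfl
  rw [mcOp_eq_trace ((hasFDerivAt_normalizedSlope p).comp x hG), hcomp, map_smul, map_sub,
    map_smul, LinearMap.trace_smulRight, div_eq_inv_mul]
  rfl

theorem mcOp_le_mcOp_of_isLocalMin_sub {v φ : EuclideanSpace ℝ (Fin N) → ℝ}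
    (hv : ContDiffAt ℝ 2 v x) (hφ : ContDiffAt ℝ 2 φ x)
    (hmin : IsLocalMin (fun y => v y - φ y) x) : mcOp φ x ≤ mcOp v x := by
  have hgrad : gradient v x = gradient φ x := by
    rw [← sub_eq_zero, ← gradient_sub (hv.differentiableAt two_ne_zero)
      (hφ.differentiableAt two_ne_zero), gradient, hmin.fderiv_eq_zero, map_zero]
  have hhess : ∀ ξ, 0 ≤ inner ℝ ξ ((fderiv ℝ (gradient v) x - fderiv ℝ (gradient φ) x) ξ) := by
    rw [← fderiv_gradient_sub hv hφ]
    exact inner_fderiv_gradient_nonneg_of_isLocalMin (hv.sub hφ) hmin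
  have htrace := inner_div_one_add_norm_sq_le_trace hhess (gradient φ x)
  rw [mcOp_eq_of_hasFDerivAt_gradient (differentiableAt_gradient hv).hasFDerivAt,
    mcOp_eq_of_hasFDerivAt_gradient (differentiableAt_gradient hφ).hasFDerivAt, hgrad]
  gcongr _ * ?_
  simp only [ContinuousLinearMap.toLinearMap_sub, map_sub, LinearMap.sub_apply,
    ContinuousLinearMap.coe_coe, inner_sub_right, sub_div] at htrace
  linarith

end MeanCurvature

section Hemisphere

/-- The upper hemisphere of radius `R` over the ball `B(x₀, R)`, raised by `K`. Since
`Real.sqrt` vanishes on negative numbers, it is extended by the constant `K` outside the ball. -/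
noncomputable def upperHemisphere {E : Type*} [SeminormedAddCommGroup E] (x₀ : E) (R K : ℝ)
    (x : E) : ℝ :=
  K + Real.sqrt (R ^ 2 - ‖x - x₀‖ ^ 2)

theorem continuous_upperHemisphere {E : Type*} [SeminormedAddCommGroup E] (x₀ : E) (R K : ℝ) :
    Continuous (upperHemisphere x₀ R K) := by
  unfold upperHemisphere
  fun_prop

theorem sq_sub_norm_sq_pos_of_mem_ball {E : Type*} [SeminormedAddCommGroup E] {x₀ x : E} {R : ℝ}
    (hx : x ∈ ball x₀ R) : 0 < R ^ 2 - ‖x - x₀‖ ^ 2 :=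
  sub_pos.2 (pow_lt_pow_left₀ (mem_ball_iff_norm.1 hx) (norm_nonneg _) two_ne_zero)

variable {E : Type*} [NormedAddCommGroup E] [InnerProductSpace ℝ E] {x₀ x : E} {R : ℝ}

theorem contDiffOn_upperHemisphere {n : WithTop ℕ∞} (K : ℝ) :
    ContDiffOn ℝ n (upperHemisphere x₀ R K) (ball x₀ R) :=
  contDiffOn_const.add <|
    (contDiffOn_const.sub ((contDiffOn_id.sub contDiffOn_const).norm_sq ℝ)).sqrt fun _ hx =>
      (sq_sub_norm_sq_pos_of_mem_ball hx).ne'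

theorem gradient_upperHemisphere [CompleteSpace E] (K : ℝ) (hx : x ∈ ball x₀ R) :
    gradient (upperHemisphere x₀ R K) x =
      -(Real.sqrt (R ^ 2 - ‖x - x₀‖ ^ 2))⁻¹ • (x - x₀) := by
  have hpos := sq_sub_norm_sq_pos_of_mem_ball hx
  have hderiv : HasFDerivAt (upperHemisphere x₀ R K) _ x :=
    ((((hasFDerivAt_id x).sub_const x₀).norm_sq.const_sub (R ^ 2)).sqrt hpos.ne').const_add K
  refine (hasGradientAt_iff_hasFDerivAt.2 (hderiv.congr_fderiv ?_)).gradient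
  ext v
  simp only [id_eq, ContinuousLinearMap.comp_id, neg_apply, smul_apply, coe_innerSL_apply,
    nsmul_eq_mul, smul_eq_mul, smul_neg, neg_smul, map_neg, map_smul,
    InnerProductSpace.toDual_apply_apply, Nat.cast_ofNat]
  field_simp

theorem normalizedSlope_gradient_upperHemisphere [CompleteSpace E] (K : ℝ)
    (hx : x ∈ ball x₀ R) :
    normalizedSlope (gradient (upperHemisphere x₀ R K) x) = -(1 / R) • (x - x₀) := by
  have hR : 0 < R := pos_of_mem_ball hx
  have hpos := sq_sub_norm_sq_pos_of_mem_ball hx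
  rw [gradient_upperHemisphere K hx, normalizedSlope]
  set s := Real.sqrt (R ^ 2 - ‖x - x₀‖ ^ 2)
  have hs_pos : 0 < s := Real.sqrt_pos.2 hpos
  have hs_sq : s ^ 2 = R ^ 2 - ‖x - x₀‖ ^ 2 := Real.sq_sqrt hpos.le
  have hslope : 1 + ‖-s⁻¹ • (x - x₀)‖ ^ 2 = (R / s) ^ 2 := by
    rw [norm_smul, mul_pow, norm_neg, norm_inv, Real.norm_of_nonneg hs_pos.le]
    field_simp
    linarith
  rw [hslope, Real.sqrt_sq (by positivity), smul_smul]
  congr 1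
  field_simp

theorem mcOp_upperHemisphere {N : ℕ} {x₀ x : EuclideanSpace ℝ (Fin N)} (K : ℝ)
    (hx : x ∈ ball x₀ R) : mcOp (upperHemisphere x₀ R K) x = N * -(1 / R) := by
  have hslope : normalizedSlope ∘ gradient (upperHemisphere x₀ R K) =ᶠ[𝓝 x]
      fun y => -(1 / R) • (y - x₀) := by
    filter_upwards [isOpen_ball.mem_nhds hx] with y hy using
      normalizedSlope_gradient_upperHemisphere K hy
  have hderiv := ((hasFDerivAt_id (𝕜 := ℝ) x).sub_const x₀).const_smul (-(1 / R))
  rw [mcOp_eq_trace (hderiv.congr_of_eventuallyEq hslope)]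
  simp [mul_comm]

end Hemisphere

section ViscositySupersolution

theorem exists_contDiff_eventuallyEq {E F : Type*} [NormedAddCommGroup E] [NormedSpace ℝ E]
    [HasContDiffBump E] [NormedAddCommGroup F] [NormedSpace ℝ F] {n : ℕ∞} {U : Set E} {x : E}
    {f : E → F} (hf : ContDiffOn ℝ n f U) (hU : IsOpen U) (hx : x ∈ U) :
    ∃ g : E → F, ContDiff ℝ n g ∧ g =ᶠ[𝓝 x] f := by
  obtain ⟨r, hr, hrU⟩ := Metric.nhds_basis_closedBall.mem_iff.1 (hU.mem_nhds hx)
  let χ : ContDiffBump x := ⟨r / 2, r, half_pos hr, half_lt_self hr⟩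
  refine ⟨fun y => χ y • f y, contDiff_iff_contDiffAt.2 fun y => ?_, ?_⟩
  · by_cases hy : y ∈ U
    · exact χ.contDiffAt.smul (hf.contDiffAt (hU.mem_nhds hy))
    · have hy_far : y ∈ (closedBall x r)ᶜ := fun h => hy (hrU h)
      have hzero : (fun z => χ z • f z) =ᶠ[𝓝 y] fun _ => 0 := by
        filter_upwards [isClosed_closedBall.isOpen_compl.mem_nhds hy_far] with z hz
        have hrz : r < dist z x := by simpa using hz
        rw [χ.zero_of_le_dist hrz.le, zero_smul]
      exact contDiffAt_const.congr_of_eventuallyEq hzero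
  · filter_upwards [χ.eventuallyEq_one] with y hy
    simp [hy]

namespace IsViscositySupersol

variable {N : ℕ} {U V : Set (EuclideanSpace ℝ (Fin N))} {H u v : EuclideanSpace ℝ (Fin N) → ℝ}

theorem mono (hu : IsViscositySupersol V H u) (hU : IsOpen U) (hUV : U ⊆ V) :
    IsViscositySupersol U H u := by
  intro φ hφ x hx hmin
  -- `φ` need not be `C²` on `V`, so it is replaced by a global function with the same germ at `x`.
  obtain ⟨ψ, hψ, hψφ⟩ := exists_contDiff_eventuallyEq (n := 2) hφ hU hx
  rw [← mcOp_congr hψφ]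
  refine hu ψ hψ.contDiffOn x (hUV hx) (IsLocalMin.on ?_ V)
  filter_upwards [hmin.isLocalMin (hU.mem_nhds hx), hψφ] with y hy hψy
  rwa [hψφ.self_of_nhds, hψy]

protected theorem min (hu : IsViscositySupersol U H u) (hv : IsViscositySupersol U H v) :
    IsViscositySupersol U H fun x => min (u x) (v x) := by
  intro φ hφ x hx hmin
  rcases le_total (u x) (v x) with hle | hle
  · refine hu φ hφ x hx (hmin.mono fun y hy => ?_)
    simp only [min_eq_left hle] at hy
    exact hy.trans (sub_le_sub_right (min_le_left _ _) _)
  · refine hv φ hφ x hx (hmin.mono fun y hy => ?_)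
    simp only [min_eq_right hle] at hy
    exact hy.trans (sub_le_sub_right (min_le_right _ _) _)

theorem of_mcOp_le (hU : IsOpen U) (hv : ContDiffOn ℝ 2 v U)
    (hle : ∀ x ∈ U, mcOp v x ≤ N * H x) : IsViscositySupersol U H v := fun _ hφ x hx hmin =>
  have hUx := hU.mem_nhds hx
  (mcOp_le_mcOp_of_isLocalMin_sub (hv.contDiffAt hUx) (hφ.contDiffAt hUx)
    (hmin.isLocalMin hUx)).trans (hle x hx)

end IsViscositySupersol

theorem isViscositySupersol_upperHemisphere {N : ℕ} {H : EuclideanSpace ℝ (Fin N) → ℝ}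
    {x₀ : EuclideanSpace ℝ (Fin N)} {R : ℝ} (K : ℝ) (hH : ∀ x ∈ ball x₀ R, -(1 / R) ≤ H x) :
    IsViscositySupersol (ball x₀ R) H (upperHemisphere x₀ R K) :=
  .of_mcOp_le isOpen_ball (contDiffOn_upperHemisphere K) fun x hx => by
    rw [mcOp_upperHemisphere K hx]
    exact mul_le_mul_of_nonneg_left (hH x hx) N.cast_nonneg

end ViscositySupersolution

theorem truncation_supersolution_general {N : ℕ} {Ω : Set (EuclideanSpace ℝ (Fin N))}
    {H u : EuclideanSpace ℝ (Fin N) → ℝ} (hu_lsc : LowerSemicontinuousOn u Ω)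
    (hu : IsViscositySupersol Ω H u) {x₀ : EuclideanSpace ℝ (Fin N)} {R : ℝ}
    (hball : closedBall x₀ R ⊆ Ω) (hHR : ∀ x ∈ ball x₀ R, -(1 / R) ≤ H x) (K : ℝ) :
    LowerSemicontinuousOn (fun x => min (u x) (upperHemisphere x₀ R K x)) (closedBall x₀ R) ∧
    IsViscositySupersol (ball x₀ R) H (fun x => min (u x) (upperHemisphere x₀ R K x)) :=
  ⟨(hu_lsc.mono hball).inf (continuous_upperHemisphere x₀ R K).continuousOn.lowerSemicontinuousOn,
    (hu.mono isOpen_ball (ball_subset_closedBall.trans hball)).min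
      (isViscositySupersol_upperHemisphere K hHR)⟩

/-- **Truncation preserves viscosity supersolutions**: truncating a viscosity
supersolution from above by the upper hemisphere `K + √(R² − |x−x₀|²)` yields a
lower semicontinuous viscosity supersolution on the ball, provided `H ≥ −1/R`. -/
theorem truncation_supersolution {N : ℕ} (hN : 2 ≤ N)
    (Ω : Set (EuclideanSpace ℝ (Fin N))) (hΩo : IsOpen Ω) (hΩc : IsConnected Ω)
    (H : EuclideanSpace ℝ (Fin N) → ℝ) (hH : LocLipschitzOn Ω H)
    (u : EuclideanSpace ℝ (Fin N) → ℝ)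
    (hu_lsc : LowerSemicontinuousOn u Ω) (hu : IsViscositySupersol Ω H u)
    (x₀ : EuclideanSpace ℝ (Fin N)) (hx₀ : x₀ ∈ Ω)
    (R : ℝ) (hR : 0 < R) (hball : closedBall x₀ R ⊆ Ω)
    (hHR : ∀ x ∈ closedBall x₀ R, -(1 / R) ≤ H x) (K : ℝ) :
    LowerSemicontinuousOn
      (fun x => min (u x) (K + Real.sqrt (R ^ 2 - ‖x - x₀‖ ^ 2))) (closedBall x₀ R) ∧
    IsViscositySupersol (ball x₀ R) H
      (fun x => min (u x) (K + Real.sqrt (R ^ 2 - ‖x - x₀‖ ^ 2))) := by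
  exact truncation_supersolution_general hu_lsc hu hball
    (fun x hx => hHR x (ball_subset_closedBall hx)) K
end
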